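/- Let X = L ∪ J ∪ R be a continuum in the class 𝒞 such that L and R are nondegenerate, L ∩ R ≠ ∅, and L and R are local dendrites. Then M ⊆ X belongs to 𝓜(X) if and only if exactly one of the following conditions holds: (1) M ⊆ L ∪ R and M is either a nonempty finite set or a cantoroid or a union of finitely many pairwise disjoint circles; (2) M ⊆ J and M is either a nonempty finite set or a Cantor set. -/

import Mathlib

/-!
Write `P = L ∪ R`, which is the complement of `J`. As `L` and `R` are nondegenerate, neither end of
`J` converges, so no path in `X` joins a point of `J` to a point of `P`
(`ClassC.no_path`). Since `P` is path-connected, a continuous `F : X → X` maps each of the path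
components `J` and `P` into one of them, and a minimal set therefore lies in `J` or in `P`
(`ClassC.minimal_dichotomy`).

*Necessity.* Let `M` be infinite and minimal; then it has no isolated points. If it contains a free
interval, then it is a finite union of disjoint circles (`IsMinimalMap.circle_components`):
irreducibility forces a minimal map to be injective along free intervals, so every point has a
neighbourhood which is a free interval, and `M` is a compact `1`-manifold. For `M ⊆ J` this is
impossible, because the line contains no circle, so `M` is a Cantor set (`isCantorSet_of_minimal`).
For `M ⊆ P`, suppose that `M` is not a cantoroid. Then some open subset of `M` contains no degenerate
component, and it can be chosen inside a circle-free piece of one of the local dendrites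
(`IsLocalDendrite.exists_chart`). Points of a local dendrite have small neighbourhoods with finite
boundary, and by boundary bumping every component of the closure of such a neighbourhood in `M`
meets this finite boundary. Hence the component of a given point is a tree-like continuum `D ⊆ M`
that is open in `M` up to finitely many boundary points. If a point of `D` cut off a branch not
meeting the boundary, then some iterate of the map would send that point into the branch, and
composing with the retraction onto the branch would give a fixed point of the tree-like branch,
contradicting minimality (`IsMinimalMap.no_branch`). So `D` is the union of the arcs between boundary
points, and by the Baire category theorem one of these arcs contains a free interval of `M`
(`IsMinimalMap.exists_chart_of_piece`).

*Sufficiency.* A cantoroid carries a minimal map `f`, built as a limit of finite directed graphs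
(`Stage`) each of whose infinite walks visits all vertices of the previous one. The value
`f y` depends only on the codes of `y`, so `f` factors through a compact subset of the line
(`exists_minimalMap_of_clopenInOpen`). As `P` is path-connected and uniformly locally
path-connected, the second factor extends to the whole line by filling in the gaps with paths in
`P`, and the first one extends to `X` by the Tietze theorem (`exists_extension_of_factor`). Finite
sets are handled in the same way, and compact subsets of `J` by the Tietze theorem alone. Disjoint
circles are permuted cyclically and rotated by an irrational angle; the rotation extends to `X`
because circle-valued maps extend from closed subsets of `X` (`ClassC.exists_circle_extension`). The
latter holds because `L`, `R` and `J` have bases of open sets with finite boundary.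
-/

open Set Topology

/-- A topological space has no isolated points if no singleton is open. -/
def NoIsolatedPoints (Y : Type*) [TopologicalSpace Y] : Prop :=
  ∀ y : Y, ¬ IsOpen ({y} : Set Y)

/-- `(M, f|_M)` is a minimal dynamical system with `f(M) = M`:
`M` is nonempty, `f(M) = M`, and `M` has no nonempty proper closed subset
invariant under `f|_M`. -/
def MinimalSystemOn {Y : Type*} [TopologicalSpace Y] (f : Y → Y) (M : Set Y) : Prop :=
  M.Nonempty ∧ f '' M = M ∧
    ∀ N, N ⊆ M → N.Nonempty → IsClosed N → f '' N ⊆ N → N = M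

/-- The system `𝓜(Y)` of all compact sets `M ⊆ Y` such that there is a continuous
`f : Y → Y` with `f(M) = M` and `(M, f|_M)` a minimal dynamical system. -/
def MSpace (Y : Type*) [TopologicalSpace Y] : Set (Set Y) :=
  {M | IsCompact M ∧ ∃ f : Y → Y, Continuous f ∧ MinimalSystemOn f M}

/-- `𝓜(Z)` for a subspace `Z ⊆ X` (carrying the subspace topology),
viewed as a system of subsets of `X`. -/
def MSetIn {X : Type*} [TopologicalSpace X] (Z : Set X) : Set (Set X) :=
  {M | ∃ M' ∈ MSpace (↥Z), M = Subtype.val '' M'}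

/-- `𝓜*(L; R)`: members of `𝓜(L ∪ R)` (`= 𝓜(L ⊔ R)` for disjoint `L, R`) such that
`M ∩ L` and `M ∩ R` have the same cardinality. -/
def MStarIn {X : Type*} [TopologicalSpace X] (L R : Set X) : Set (Set X) :=
  {M | M ∈ MSetIn (L ∪ R) ∧ Cardinal.mk ↥(M ∩ L) = Cardinal.mk ↥(M ∩ R)}

/-- An arc: a set homeomorphic to `[0,1]`. -/
def IsArc {X : Type*} [TopologicalSpace X] (A : Set X) : Prop :=
  Nonempty (↥A ≃ₜ ↥(Set.Icc (0:ℝ) 1))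

/-- A ray: a set homeomorphic to `[0,∞)`. -/
def IsRaySet {X : Type*} [TopologicalSpace X] (A : Set X) : Prop :=
  Nonempty (↥A ≃ₜ ↥(Set.Ici (0:ℝ)))

/-- A Cantor set: nonempty, compact, totally disconnected, without isolated points
(metrizability is inherited from the ambient space). -/
def IsCantorSet {X : Type*} [TopologicalSpace X] (M : Set X) : Prop :=
  M.Nonempty ∧ IsCompact M ∧ IsTotallyDisconnected M ∧ NoIsolatedPoints ↥M

/-- A circle: a set homeomorphic to the unit circle `S¹ ⊆ ℂ`. -/
def IsCircleSet {X : Type*} [TopologicalSpace X] (C : Set X) : Prop :=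
  Nonempty (↥C ≃ₜ ↥(Metric.sphere (0:ℂ) 1))

/-- A cantoroid: a nonempty compact (metrizable) set without isolated points in which
the union of the degenerate (singleton) connected components is dense. -/
def IsCantoroid {X : Type*} [TopologicalSpace X] (M : Set X) : Prop :=
  M.Nonempty ∧ IsCompact M ∧ NoIsolatedPoints ↥M ∧
    Dense {x : ↥M | connectedComponent x = {x}}

/-- A union of finitely many (at least one) pairwise disjoint circles. -/
def FinUnionDisjCircles {X : Type*} [TopologicalSpace X] (M : Set X) : Prop :=
  ∃ (n : ℕ) (C : Fin n → Set X), 0 < n ∧ (∀ i, IsCircleSet (C i)) ∧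
    Pairwise (Function.onFun Disjoint C) ∧ M = ⋃ i, C i

/-- A local dendrite: a locally connected continuum containing only finitely many circles. -/
def IsLocalDendrite {X : Type*} [TopologicalSpace X] (L : Set X) : Prop :=
  IsCompact L ∧ IsConnected L ∧ LocallyConnectedSpace ↥L ∧
    {C : Set X | C ⊆ L ∧ IsCircleSet C}.Finite

/-- The decomposition `X = L ∪ J ∪ R` witnessing that the continuum `X` belongs to the
class `𝒞`: `J` is a free interval dense in `X`; `L` and `R` are locally connected
subcontinua of `X` disjoint from `J`; and there are rays `J_L, J_R` with
`J = J_L ∪ J_R` such that `L ∪ J_L` is a compactification of `J_L` and `R ∪ J_R` is a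
compactification of `J_R`. -/
structure ClassC {X : Type*} [TopologicalSpace X] (L J R : Set X) : Prop where
  union_eq : L ∪ J ∪ R = Set.univ
  openJ : IsOpen J
  freeJ : Nonempty (↥J ≃ₜ ↥(Set.Ioo (0:ℝ) 1))
  denseJ : Dense J
  compactL : IsCompact L
  connL : IsConnected L
  locConnL : LocallyConnectedSpace ↥L
  compactR : IsCompact R
  connR : IsConnected R
  locConnR : LocallyConnectedSpace ↥R
  disjLJ : Disjoint L J
  disjRJ : Disjoint R J
  rays : ∃ JL JR : Set X, JL ∪ JR = J ∧ IsRaySet JL ∧ IsRaySet JR ∧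
    IsCompact (L ∪ JL) ∧ L ∪ JL ⊆ closure JL ∧
    IsCompact (R ∪ JR) ∧ R ∪ JR ⊆ closure JR

/-! ### Extracting arcs from paths -/

/-- The first-return system of a path: a closed `F ⊆ [0,1]` containing the endpoints, such that
`γ` takes equal values at the two ends of every complementary gap. -/
structure LoopCut {X : Type*} (γ : ℝ → X) (F : Set ℝ) : Prop where
  closed : IsClosed F
  sub : F ⊆ Icc 0 1
  zero : (0:ℝ) ∈ F
  one : (1:ℝ) ∈ F
  gap : ∀ s ∈ F, ∀ t ∈ F, s < t → (∀ u ∈ F, ¬ (s < u ∧ u < t)) → γ s = γ t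

/-- Brouwer's reduction: by compactness there is a minimal loop cut, so that no further loop of
the path can be removed. -/
lemma exists_minimal_loopCut {X : Type*} [MetricSpace X] {γ : ℝ → X} (hγ : Continuous γ) :
    ∃ F, LoopCut γ F ∧ ∀ F', LoopCut γ F' → F' ⊆ F → F' = F := by
  have h := zorn_superset_nonempty {F : Set ℝ | LoopCut γ F} ?_ (Icc 0 1) ?_
  · obtain ⟨F, -, hF⟩ := h
    exact ⟨F, hF.prop, fun F' h1 h2 => h2.antisymm (hF.2 h1 h2)⟩
  · intro c hc hchain hne
    refine ⟨⋂₀ c, ?_, fun s hs => sInter_subset_of_mem hs⟩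
    obtain ⟨F0, hF0⟩ := hne
    refine ⟨isClosed_sInter fun s hs => (hc hs).closed, (sInter_subset_of_mem hF0).trans (hc hF0).sub,
      fun s hs => (hc hs).zero, fun s hs => (hc hs).one, ?_⟩
    intro s hs t ht hst hgap
    by_contra hne
    have hd : 0 < dist (γ s) (γ t) := dist_pos.2 hne
    obtain ⟨ε1, hε1, h1⟩ := Metric.continuous_iff.1 hγ s (dist (γ s) (γ t) / 2) (by linarith)
    obtain ⟨ε2, hε2, h2⟩ := Metric.continuous_iff.1 hγ t (dist (γ s) (γ t) / 2) (by linarith)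
    obtain ⟨ε, hε, hεa, hεb, hεc⟩ : ∃ ε > 0, ε < ε1 ∧ ε < ε2 ∧ s + ε < t - ε := by
      refine ⟨min (min (ε1/2) (ε2/2)) ((t-s)/4), by have := sub_pos.2 hst; positivity, ?_, ?_, ?_⟩
      · have := min_le_left (min (ε1/2) (ε2/2)) ((t-s)/4)
        have := min_le_left (ε1/2) (ε2/2); linarith
      · have := min_le_left (min (ε1/2) (ε2/2)) ((t-s)/4)
        have := min_le_right (ε1/2) (ε2/2); linarith
      · have := min_le_right (min (ε1/2) (ε2/2)) ((t-s)/4); linarith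
    obtain ⟨F, hFc, hFe⟩ : ∃ F ∈ c, F ∩ Icc (s+ε) (t-ε) = ∅ := by
      by_contra hcon
      push Not at hcon
      have : (⋂₀ ((fun F => F ∩ Icc (s+ε) (t-ε)) '' c)).Nonempty := by
        refine IsCompact.nonempty_sInter_of_directed_nonempty_isCompact_isClosed (hS := ⟨_, F0, hF0, rfl⟩) ?_ ?_ ?_ ?_
        · rintro _ ⟨A, hA, rfl⟩ _ ⟨B, hB, rfl⟩
          rcases hchain.total hA hB with h | h
          · exact ⟨_, ⟨A, hA, rfl⟩, subset_rfl, inter_subset_inter_left _ h⟩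
          · exact ⟨_, ⟨B, hB, rfl⟩, inter_subset_inter_left _ h, subset_rfl⟩
        · rintro _ ⟨A, hA, rfl⟩; exact hcon A hA
        · rintro _ ⟨A, hA, rfl⟩; exact isCompact_Icc.inter_left (hc hA).closed
        · rintro _ ⟨A, hA, rfl⟩; exact (hc hA).closed.inter isClosed_Icc
      obtain ⟨u, hu⟩ := this
      simp only [sInter_image, mem_iInter, mem_inter_iff] at hu
      have hu2 := (hu F0 hF0).2
      exact hgap u (fun A hA => (hu A hA).1) ⟨by linarith [hu2.1], by linarith [hu2.2]⟩
    have hF := hc hFc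
    have hsF := hs F hFc
    have htF := ht F hFc
    have hc1 : IsCompact (F ∩ Icc s (s+ε)) := isCompact_Icc.inter_left hF.closed
    have hc2 : IsCompact (F ∩ Icc (t-ε) t) := isCompact_Icc.inter_left hF.closed
    obtain ⟨s', ⟨hs'F, hs'⟩, hs'm⟩ := hc1.exists_isGreatest ⟨s, hsF, by constructor <;> linarith⟩
    obtain ⟨t', ⟨ht'F, ht'⟩, ht'm⟩ := hc2.exists_isLeast ⟨t, htF, by constructor <;> linarith⟩
    have := hF.gap s' hs'F t' ht'F (by linarith [hs'.2, ht'.1]) (by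
      rintro u hu ⟨hu1, hu2⟩
      by_cases h : u ≤ s + ε
      · exact absurd (hs'm ⟨hu, by linarith [hs'.1], h⟩) (not_le.2 hu1)
      · by_cases h' : t - ε ≤ u
        · exact absurd (ht'm ⟨hu, h', by linarith [ht'.2]⟩) (not_le.2 hu2)
        · have : u ∈ F ∩ Icc (s+ε) (t-ε) := ⟨hu, by linarith, by linarith⟩
          rw [hFe] at this; exact this)
    have a1 := h1 s' (by rw [Real.dist_eq, abs_of_nonneg] <;> linarith [hs'.1, hs'.2])
    have a2 := h2 t' (by rw [dist_comm, Real.dist_eq, abs_of_nonneg] <;> linarith [ht'.1, ht'.2])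
    have := dist_triangle_left (γ s) (γ t) (γ s')
    rw [‹γ s' = γ t'›] at a1 this
    linarith
  · exact ⟨isClosed_Icc, subset_rfl, by simp, by simp, fun s hs t ht hst h =>
      (h ((s+t)/2) ⟨by linarith [hs.1, ht.1], by linarith [hs.2, ht.2]⟩ ⟨by linarith, by linarith⟩).elim⟩

/-- A path can be replaced by one in the same image, with the same endpoints, all of whose
fibres are intervals. -/
lemma exists_monotone_path {X : Type*} [MetricSpace X] {γ : ℝ → X} (hγ : Continuous γ) :
    ∃ g : ℝ → X, ContinuousOn g (Icc 0 1) ∧ g 0 = γ 0 ∧ g 1 = γ 1 ∧ g '' Icc 0 1 ⊆ γ '' Icc 0 1 ∧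
      ∀ x ∈ Icc (0:ℝ) 1, ∀ y ∈ Icc (0:ℝ) 1, g x = g y → ∀ z, x ≤ z → z ≤ y → g z = g x := by
  obtain ⟨F, hF, hmin⟩ := exists_minimal_loopCut hγ
  have hcut : ∀ s ∈ F, ∀ t ∈ F, s < t → γ s = γ t → ∀ u ∈ F, ¬ (s < u ∧ u < t) := by
    intro s hs t ht hst he u hu hsut
    have := hmin (F \ Ioo s t) ⟨hF.closed.sdiff isOpen_Ioo, sdiff_subset.trans hF.sub,
      ⟨hF.zero, fun h => by linarith [h.1, (hF.sub hs).1]⟩,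
      ⟨hF.one, fun h => by linarith [h.2, (hF.sub ht).2]⟩, ?_⟩ sdiff_subset
    · rw [← this] at hu
      exact hu.2 hsut
    · rintro a ⟨ha, ha'⟩ b ⟨hb, hb'⟩ hab hg
      by_cases h1 : ∀ u ∈ F, ¬ (a < u ∧ u < b)
      · exact hF.gap a ha b hb hab h1
      push Not at h1
      obtain ⟨v, hv, hav, hvb⟩ := h1
      have hvm : v ∈ Ioo s t := by
        by_contra hcon
        exact hg v ⟨hv, hcon⟩ ⟨hav, hvb⟩
      have e1 : a = s := by
        have h2 : a ≤ s := by
          by_contra h; exact ha' ⟨not_le.1 h, by linarith [hvm.2]⟩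
        by_contra h3
        have h4 : a < s := lt_of_le_of_ne h2 h3
        exact hg s ⟨hs, fun h => lt_irrefl _ h.1⟩ ⟨h4, by linarith [hvm.1]⟩
      have e2 : b = t := by
        have h2 : t ≤ b := by
          by_contra h; exact hb' ⟨by linarith [hvm.1], not_le.1 h⟩
        by_contra h3
        have h4 : t < b := lt_of_le_of_ne h2 (Ne.symm h3)
        exact hg t ⟨ht, fun h => lt_irrefl _ h.2⟩ ⟨by linarith [hvm.2], h4⟩
      rw [e1, e2, he]
  have hpr : ∀ x ∈ Icc (0:ℝ) 1, ∃ p, IsGreatest (F ∩ Icc 0 x) p := fun x hx =>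
    (isCompact_Icc.inter_left hF.closed).exists_isGreatest ⟨0, hF.zero, le_rfl, hx.1⟩
  have hnx : ∀ x ∈ Icc (0:ℝ) 1, ∃ p, IsLeast (F ∩ Icc x 1) p := fun x hx =>
    (isCompact_Icc.inter_left hF.closed).exists_isLeast ⟨1, hF.one, hx.2, le_rfl⟩
  choose! pr hpr using hpr
  choose! nx hnx using hnx
  have hprF : ∀ x ∈ Icc (0:ℝ) 1, pr x ∈ F ∧ pr x ≤ x := fun x hx => ⟨(hpr x hx).1.1, (hpr x hx).1.2.2⟩
  have hnxF : ∀ x ∈ Icc (0:ℝ) 1, nx x ∈ F ∧ x ≤ nx x := fun x hx => ⟨(hnx x hx).1.1, (hnx x hx).1.2.1⟩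
  have prmax : ∀ x ∈ Icc (0:ℝ) 1, ∀ u ∈ F, u ≤ x → u ≤ pr x := fun x hx u hu h =>
    (hpr x hx).2 ⟨hu, (hF.sub hu).1, h⟩
  have nxmin : ∀ x ∈ Icc (0:ℝ) 1, ∀ u ∈ F, x ≤ u → nx x ≤ u := fun x hx u hu h =>
    (hnx x hx).2 ⟨hu, h, (hF.sub hu).2⟩
  have hpn : ∀ x ∈ Icc (0:ℝ) 1, γ (pr x) = γ (nx x) := by
    intro x hx
    have a := hprF x hx
    have b := hnxF x hx
    rcases (a.2.trans b.2).eq_or_lt with h | h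
    · rw [h]
    · refine hF.gap _ a.1 _ b.1 h ?_
      rintro u hu ⟨h1, h2⟩
      rcases le_total u x with h3 | h3
      · exact absurd (prmax x hx u hu h3) (not_le.2 h1)
      · exact absurd (nxmin x hx u hu h3) (not_le.2 h2)
  have key : ∀ x ∈ Icc (0:ℝ) 1, ∀ y ∈ Icc (0:ℝ) 1, x ≤ y →
      (nx x ≤ pr y) ∨ pr x = pr y := by
    intro x hx y hy hxy
    by_cases h : x ≤ pr y
    · exact Or.inl (nxmin x hx _ (hprF y hy).1 h)
    · refine Or.inr (le_antisymm (prmax y hy _ (hprF x hx).1 ((hprF x hx).2.trans hxy))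
        (prmax x hx _ (hprF y hy).1 (not_le.1 h).le))
  refine ⟨fun x => γ (pr x), ?_, ?_, ?_, ?_, ?_⟩
  · have key2 : ∀ x ∈ Icc (0:ℝ) 1, ∀ y ∈ Icc (0:ℝ) 1, x ≤ y → γ (pr x) = γ (pr y) ∨
        ∃ u ∈ Icc x y, ∃ v ∈ Icc x y, γ (pr x) = γ u ∧ γ (pr y) = γ v := by
      intro x hx y hy hxy
      rcases key x hx y hy hxy with h | h
      · exact Or.inr ⟨nx x, ⟨(hnxF x hx).2, h.trans (hprF y hy).2⟩, pr y,
          ⟨(hnxF x hx).2.trans h, (hprF y hy).2⟩, hpn x hx, rfl⟩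
      · exact Or.inl (by rw [h])
    intro x hx
    rw [Metric.continuousWithinAt_iff]
    intro ε hε
    obtain ⟨δ, hδ, h⟩ := Metric.continuous_iff.1 hγ x (ε/2) (by linarith)
    refine ⟨δ, hδ, ?_⟩
    intro y hy hxy
    rw [Real.dist_eq] at hxy
    have hxy' := abs_lt.1 hxy
    have fin : ∀ u v, |u - x| ≤ |y - x| → |v - x| ≤ |y - x| → dist (γ u) (γ v) < ε := by
      intro u v hu hv
      have a := h u (by rw [Real.dist_eq]; linarith)
      have b := h v (by rw [Real.dist_eq]; linarith)
      have := dist_triangle_right (γ u) (γ v) (γ x)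
      linarith
    rcases le_total x y with h' | h'
    · rcases key2 x hx y hy h' with e | ⟨u, hu, v, hv, e1, e2⟩
      · simpa [e] using hε
      · simp only [e1, e2]
        apply fin
        · rw [abs_of_nonneg, abs_of_nonneg] <;> linarith [hv.1, hv.2]
        · rw [abs_of_nonneg, abs_of_nonneg] <;> linarith [hu.1, hu.2]
    · rcases key2 y hy x hx h' with e | ⟨u, hu, v, hv, e1, e2⟩
      · simpa [e] using hε
      · simp only [e1, e2]
        apply fin
        · rw [abs_of_nonpos, abs_of_nonpos] <;> linarith [hu.1, hu.2]
        · rw [abs_of_nonpos, abs_of_nonpos] <;> linarith [hv.1, hv.2]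
  · have h0 : (0:ℝ) ∈ Icc (0:ℝ) 1 := by simp
    have := le_antisymm (hprF 0 h0).2 (prmax 0 h0 0 hF.zero le_rfl)
    simp only [this]
  · have h0 : (1:ℝ) ∈ Icc (0:ℝ) 1 := by simp
    have := le_antisymm (hprF 1 h0).2 (prmax 1 h0 1 hF.one le_rfl)
    simp only [this]
  · rintro _ ⟨x, hx, rfl⟩
    exact ⟨pr x, hF.sub (hprF x hx).1, rfl⟩
  · intro x hx y hy hxy z hxz hzy
    have hz : z ∈ Icc (0:ℝ) 1 := ⟨hx.1.trans hxz, hzy.trans hy.2⟩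
    simp only at hxy ⊢
    rcases key x hx z hz hxz with h1 | h1
    swap
    · rw [h1]
    rcases key z hz y hy hzy with h2 | h2
    swap
    · rw [h2, hxy]
    -- `nx x ≤ pr z ≤ nx z ≤ pr y`, and `nx x`, `pr y` are equal or the ends of a gap
    rw [hpn x hx] at hxy ⊢
    have h3 : pr z ≤ pr y := (hprF z hz).2.trans ((hnxF z hz).2.trans h2)
    rcases h1.eq_or_lt with h4 | h4
    · rw [h4]
    rcases h3.eq_or_lt with h5 | h5
    · rw [h5, hxy]
    exact (hcut _ (hnxF x hx).1 _ (hprF y hy).1 (h4.trans h5) hxy _ (hprF z hz).1 ⟨h4, h5⟩).elim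

/-- A continuous monotone reparametrization collapsing precisely the (interval) fibres of `G`. -/
lemma exists_reparam {X : Type*} [MetricSpace X] {G : ℝ → X} (hG : Continuous G)
    (hfib : ∀ x ∈ Icc (0:ℝ) 1, ∀ y ∈ Icc (0:ℝ) 1, G x = G y → ∀ z, x ≤ z → z ≤ y → G z = G x) :
    ∃ c : ℝ → ℝ, Continuous c ∧ (∀ x ∈ Icc (0:ℝ) 1, ∀ y ∈ Icc (0:ℝ) 1, x ≤ y → c x ≤ c y) ∧
      ∀ x ∈ Icc (0:ℝ) 1, ∀ y ∈ Icc (0:ℝ) 1, x ≤ y → (c x = c y ↔ G x = G y) := by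
  -- `h s y` measures how far `G y` is from the initial part `G '' [0,s]`
  set h : ℝ → ℝ → ℝ := fun s y => min 1 (Metric.infDist (G y) (G '' Icc 0 s)) with hh
  have hcont : ∀ s, Continuous (h s) := fun s =>
    continuous_const.min ((Metric.continuous_infDist_pt _).comp hG)
  have h0 : ∀ s y, 0 ≤ h s y := fun s y => le_min zero_le_one Metric.infDist_nonneg
  have h1 : ∀ s y, h s y ≤ 1 := fun s y => min_le_left _ _
  set φ : ℝ → ℝ → ℝ := fun s x => sSup ((fun t => h s (x * t)) '' Icc 0 1) with hφ
  have φcont : ∀ s, Continuous (φ s) := fun s =>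
    isCompact_Icc.continuous_sSup (f := fun x t => h s (x * t))
      ((hcont s).comp (continuous_fst.mul continuous_snd))
  have bdd : ∀ s x, BddAbove ((fun t => h s (x * t)) '' Icc (0:ℝ) 1) := fun s x =>
    ⟨1, by rintro _ ⟨t, -, rfl⟩; exact h1 _ _⟩
  have φle : ∀ s x y, 0 ≤ x → x ≤ y → ∀ b, φ s x ≤ b ↔ ∀ z, 0 ≤ z → z ≤ x → h s z ≤ b := by
    intro s x y hx hxy b
    rw [hφ]; simp only
    rw [csSup_le_iff (bdd s x) ⟨_, 0, by simp, rfl⟩]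
    constructor
    · intro H z hz hzx
      rcases hx.eq_or_lt with e | e
      · have := H (h s (x * 0)) ⟨0, by simp, rfl⟩
        rwa [← e, zero_mul, ← le_antisymm (hzx.trans e.symm.le) hz] at this
      · exact H _ ⟨z / x, ⟨by positivity, (div_le_one e).2 hzx⟩, by simp only; rw [mul_div_cancel₀ _ e.ne']⟩
    · rintro H _ ⟨t, ht, rfl⟩
      exact H _ (mul_nonneg hx ht.1) (mul_le_of_le_one_right hx ht.2)
  have φ1 : ∀ s x, 0 ≤ x → φ s x ≤ 1 := fun s x hx => (φle s x x hx le_rfl 1).2 fun _ _ _ => h1 _ _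
  have leφ : ∀ s x z, 0 ≤ z → z ≤ x → h s z ≤ φ s x := fun s x z hz hzx =>
    (φle s x x (hz.trans hzx) le_rfl _).1 le_rfl z hz hzx
  have φ0 : ∀ s x, 0 ≤ x → 0 ≤ φ s x := fun s x hx => (h0 s 0).trans (leφ s x 0 le_rfl hx)
  have φmono : ∀ s x y, 0 ≤ x → x ≤ y → φ s x ≤ φ s y := fun s x y hx hxy =>
    (φle s x x hx le_rfl _).2 fun z hz hzx => leφ s y z hz (hzx.trans hxy)
  have hzero : ∀ s y, 0 ≤ y → y ≤ s → h s y = 0 := fun s y hy hys => by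
    have : y ∈ Icc 0 s := ⟨hy, hys⟩
    simp [hh, Metric.infDist_zero_of_mem (mem_image_of_mem G this)]
  set q := TopologicalSpace.denseSeq ℝ with hq
  set P : ℝ → ℝ := fun x => max x 0
  have hP : ∀ x, 0 ≤ P x := fun x => le_max_right _ _
  have hPe : ∀ x, 0 ≤ x → P x = x := fun x hx => max_eq_left hx
  have bd : ∀ n x, ‖(1/2:ℝ)^n * φ (q n) (P x)‖ ≤ (1/2:ℝ)^n := by
    intro n x
    rw [Real.norm_of_nonneg (mul_nonneg (by positivity) (φ0 _ _ (hP x)))]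
    exact mul_le_of_le_one_right (by positivity) (φ1 _ _ (hP x))
  have summ : ∀ x, Summable fun n => (1/2:ℝ)^n * φ (q n) (P x) := fun x =>
    Summable.of_norm_bounded summable_geometric_two (fun n => bd n x)
  refine ⟨fun x => ∑' n, (1/2:ℝ)^n * φ (q n) (P x), ?_, ?_, ?_⟩
  · refine continuous_tsum (fun n => continuous_const.mul ((φcont _).comp
      (continuous_id.max continuous_const))) summable_geometric_two bd
  · intro x hx y hy hxy
    refine (summ x).tsum_le_tsum (fun n => ?_) (summ y)
    rw [hPe x hx.1, hPe y hy.1]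
    exact mul_le_mul_of_nonneg_left (φmono _ _ _ hx.1 hxy) (by positivity)
  · intro x hx y hy hxy
    constructor
    · intro hc
      by_contra hne
      have hlt : x < y := lt_of_le_of_ne hxy (fun e => hne (by rw [e]))
      -- a rational `s > x` so close to `x` that `G s ≠ G y`
      have hopen : IsOpen {s | G s ≠ G y} := isOpen_ne_fun hG continuous_const
      obtain ⟨ε, hε, hball⟩ := Metric.isOpen_iff.1 hopen x hne
      have : ∃ n, q n ∈ Ioo x (min y (x+ε)) :=
        (TopologicalSpace.denseRange_denseSeq ℝ).exists_mem_open isOpen_Ioo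
          (nonempty_Ioo.2 (lt_min hlt (by linarith)))
      obtain ⟨n, hn⟩ := this
      have hny : q n < y := hn.2.trans_le (min_le_left _ _)
      have hns : G (q n) ≠ G y := hball (by
        have := hn.2.trans_le (min_le_right _ _)
        rw [Metric.mem_ball, Real.dist_eq, abs_of_pos (by linarith [hn.1])]; linarith)
      have hpos : 0 < φ (q n) y := by
        refine lt_of_lt_of_le ?_ (leφ (q n) y y hy.1 le_rfl)
        refine lt_min one_pos ?_
        refine (IsClosed.notMem_iff_infDist_pos (isCompact_Icc.image hG).isClosed
          ⟨G 0, 0, ⟨le_rfl, hx.1.trans hn.1.le⟩, rfl⟩).1 ?_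
        rintro ⟨u, hu, hue⟩
        refine hns ?_
        rw [hfib u ⟨hu.1, hu.2.trans (hny.le.trans hy.2)⟩ y hy hue (q n) hu.2 hny.le, hue]
      have hz : φ (q n) x = 0 := le_antisymm ((φle _ _ x hx.1 le_rfl 0).2 fun z hz hzx =>
        (hzero _ _ hz (hzx.trans hn.1.le)).le) (φ0 _ _ hx.1)
      refine hc.not_lt ?_
      refine (summ x).tsum_lt_tsum (i := n) (fun m => ?_) ?_ (summ y)
      · simp only [hPe x hx.1, hPe y hy.1]
        exact mul_le_mul_of_nonneg_left (φmono _ _ _ hx.1 hxy) (by positivity)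
      · simp only [hPe x hx.1, hPe y hy.1, hz, mul_zero]
        exact mul_pos (by positivity) hpos
    · intro he
      have : ∀ n, φ (q n) x = φ (q n) y := fun n => by
        refine le_antisymm (φmono _ _ _ hx.1 hxy) ((φle _ _ y hy.1 le_rfl _).2 fun z hz hzy => ?_)
        rcases le_total z x with h' | h'
        · exact leφ _ _ _ hz h'
        · refine le_trans (le_of_eq ?_) (leφ (q n) x x hx.1 le_rfl)
          simp only [hh, hfib x hx y hy he z h' hzy]
      simp only [hPe x hx.1, hPe y hy.1, this]

/-- Every path between distinct points contains an injective path. -/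
theorem exists_injective_path {X : Type*} [MetricSpace X] {x y : X} (γ : Path x y) (hxy : x ≠ y) :
    ∃ δ : Path x y, Function.Injective δ ∧ range δ ⊆ range γ := by
  obtain ⟨g, hgc, hg0, hg1, hgr, hgf⟩ := exists_monotone_path γ.continuous_extend
  rw [Path.extend_zero] at hg0
  rw [Path.extend_one] at hg1
  set G : ℝ → X := fun t => g (projIcc 0 1 zero_le_one t) with hGdef
  have hG : Continuous G := hgc.comp_continuous
    (continuous_subtype_val.comp continuous_projIcc) (fun t => (projIcc 0 1 zero_le_one t).2)
  have hGg : ∀ t ∈ Icc (0:ℝ) 1, G t = g t := fun t ht => by simp [hGdef, projIcc_of_mem _ ht]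
  have i0 : (0:ℝ) ∈ Icc (0:ℝ) 1 := by simp
  have i1 : (1:ℝ) ∈ Icc (0:ℝ) 1 := by simp
  obtain ⟨c, hc, hmono, hiff⟩ := exists_reparam hG (by
    intro a ha b hb hab z h1 h2
    rw [hGg a ha, hGg b hb] at hab
    rw [hGg a ha, hGg z ⟨ha.1.trans h1, h2.trans hb.2⟩]
    exact hgf a ha b hb hab z h1 h2)
  have hpos : 0 < c 1 - c 0 := by
    have h1 := hmono 0 i0 1 i1 zero_le_one
    have h2 : c 0 ≠ c 1 := fun e => hxy (by
      have := (hiff 0 i0 1 i1 zero_le_one).1 e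
      rwa [hGg 0 i0, hGg 1 i1, hg0, hg1] at this)
    exact sub_pos.2 (lt_of_le_of_ne h1 h2)
  let k : unitInterval → unitInterval := fun t => ⟨(c t - c 0) / (c 1 - c 0),
    div_nonneg (sub_nonneg.2 (hmono 0 i0 t t.2 t.2.1)) hpos.le,
    (div_le_one hpos).2 (sub_le_sub_right (hmono t t.2 1 i1 t.2.2) _)⟩
  have hk : Continuous k := Continuous.subtype_mk
    (((hc.comp continuous_subtype_val).sub continuous_const).div_const _) _
  have hksurj : Function.Surjective k := by
    rintro ⟨r, hr⟩
    have hr' : c 0 + r * (c 1 - c 0) ∈ Icc (c 0) (c 1) :=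
      ⟨by nlinarith [hr.1], by nlinarith [hr.2]⟩
    obtain ⟨t, ht, hte⟩ := intermediate_value_Icc zero_le_one hc.continuousOn hr'
    refine ⟨⟨t, ht⟩, Subtype.ext ?_⟩
    simp only [k, hte]
    field_simp
    ring
  have hkiff : ∀ a b : unitInterval, k a = k b ↔ G a = G b := by
    have main : ∀ a b : unitInterval, (a:ℝ) ≤ b → (k a = k b ↔ G a = G b) := by
      intro a b hab
      rw [← hiff a a.2 b b.2 hab, Subtype.ext_iff]
      simp only [k]
      rw [div_left_inj' hpos.ne', sub_left_inj]
    intro a b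
    rcases le_total (a:ℝ) b with h | h
    · exact main a b h
    · rw [eq_comm, main b a h, eq_comm]
  have hq : IsQuotientMap k := hk.isClosedMap.isQuotientMap hk hksurj
  let Gc : C(unitInterval, X) := ⟨fun t => G t, hG.comp continuous_subtype_val⟩
  let kc : C(unitInterval, unitInterval) := ⟨k, hk⟩
  have hq' : IsQuotientMap kc := hq
  have hfac : Function.FactorsThrough Gc kc := fun a b hab => (hkiff a b).1 hab
  have hlift : ∀ t, (hq'.lift Gc hfac) (k t) = G t := fun t =>
    DFunLike.congr_fun (hq'.lift_comp Gc hfac) t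
  have k0 : k 0 = 0 := Subtype.ext (by simp [k])
  have k1 : k 1 = 1 := Subtype.ext (by simp [k, hpos.ne'])
  refine ⟨⟨hq'.lift Gc hfac, ?_, ?_⟩, ?_, ?_⟩
  · simp only [ContinuousMap.toFun_eq_coe]
    rw [← k0, hlift]; simpa [hGg 0 i0] using hg0
  · simp only [ContinuousMap.toFun_eq_coe]
    rw [← k1, hlift]; simpa [hGg 1 i1] using hg1
  · intro a b hab
    obtain ⟨s, rfl⟩ := hksurj a
    obtain ⟨t, rfl⟩ := hksurj b
    have hab' : (hq'.lift Gc hfac) (k s) = (hq'.lift Gc hfac) (k t) := hab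
    rw [hlift, hlift] at hab'
    exact (hkiff s t).2 hab'
  · rintro _ ⟨a, rfl⟩
    obtain ⟨s, rfl⟩ := hksurj a
    have : (hq'.lift Gc hfac) (k s) ∈ range γ := by
      rw [hlift, hGg s s.2]
      obtain ⟨t, ht, hte⟩ := hgr ⟨s, s.2, rfl⟩
      rw [← hte]
      rw [Path.extend_apply _ ht]
      exact ⟨_, rfl⟩
    exact this

/-! ### Circles -/

/-- Circles in a Hausdorff space are the injective continuous images of `Circle`. -/
lemma isCircleSet_iff {X : Type*} [TopologicalSpace X] [T2Space X] {C : Set X} :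
    IsCircleSet C ↔ ∃ h : Circle → X, Continuous h ∧ Function.Injective h ∧ range h = C := by
  have e0 : Nonempty (Circle ≃ₜ ↥(Metric.sphere (0:ℂ) 1)) := ⟨Homeomorph.refl _⟩
  obtain ⟨e0⟩ := e0
  constructor
  · rintro ⟨e⟩
    let k : Circle ≃ₜ C := e0.trans e.symm
    refine ⟨fun z => k z, continuous_subtype_val.comp k.continuous,
      Subtype.val_injective.comp k.injective, ?_⟩
    ext x
    exact ⟨by rintro ⟨z, rfl⟩; exact (k z).2, fun hx => ⟨k.symm ⟨x, hx⟩, by simp⟩⟩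
  · rintro ⟨h, hc, hi, rfl⟩
    exact ⟨((hc.isClosedEmbedding hi).isEmbedding.toHomeomorph).symm.trans e0⟩

/-- A loop without self-intersections, parametrized by `[0,1]`, traces a circle. -/
lemma isCircleSet_of_loop {X : Type*} [TopologicalSpace X] [T2Space X] {l : ℝ → X}
    (hc : ContinuousOn l (Icc 0 1)) (h01 : l 0 = l 1) (hi : InjOn l (Ico 0 1)) :
    IsCircleSet (l '' Icc 0 1) := by
  have : Fact ((0:ℝ) < 1) := ⟨one_pos⟩
  let k : AddCircle (1:ℝ) → X := AddCircle.liftIco 1 0 l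
  have hk : Continuous k := AddCircle.liftIco_continuous (by simpa using h01) (by simpa using hc)
  have hkv : ∀ x ∈ Ico (0:ℝ) 1, k (x : AddCircle (1:ℝ)) = l x := fun x hx =>
    AddCircle.liftIco_zero_coe_apply hx
  have hrep : ∀ q : AddCircle (1:ℝ), ∃ x ∈ Ico (0:ℝ) 1, (x : AddCircle (1:ℝ)) = q := by
    intro q
    have := AddCircle.coe_image_Ico_eq (1:ℝ) 0 ▸ mem_univ q
    simpa using this
  rw [isCircleSet_iff]
  refine ⟨k ∘ (AddCircle.homeomorphCircle one_ne_zero).symm, hk.comp (Homeomorph.continuous _), ?_, ?_⟩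
  · refine Function.Injective.comp ?_ (Homeomorph.injective _)
    intro p q hpq
    obtain ⟨x, hx, rfl⟩ := hrep p
    obtain ⟨y, hy, rfl⟩ := hrep q
    rw [hkv x hx, hkv y hy] at hpq
    rw [hi hx hy hpq]
  · rw [(Homeomorph.surjective _).range_comp]
    ext z
    constructor
    · rintro ⟨q, rfl⟩
      obtain ⟨x, hx, rfl⟩ := hrep q
      exact ⟨x, Ico_subset_Icc_self hx, (hkv x hx).symm⟩
    · rintro ⟨x, hx, rfl⟩
      rcases hx.2.eq_or_lt with h | h
      · refine ⟨((0:ℝ) : AddCircle (1:ℝ)), ?_⟩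
        rw [hkv 0 (by simp), h01, h]
      · exact ⟨x, hkv x ⟨hx.1, h⟩⟩

/-- If an arc is not contained in another arc with the same endpoints,
then their union contains a circle. -/
lemma exists_circle_of_arcs {X : Type*} [TopologicalSpace X] [T2Space X] {x y : X}
    (α β : Path x y) (hα : Function.Injective α) (hβ : Function.Injective β)
    (h : ¬ range α ⊆ range β) : ∃ C ⊆ range α ∪ range β, IsCircleSet C := by
  obtain ⟨_, ⟨t0, rfl⟩, ht0⟩ := not_subset.1 h
  have hcl : IsClosed (α ⁻¹' range β) :=
    (isCompact_range β.continuous).isClosed.preimage α.continuous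
  obtain ⟨a, ⟨haβ, ha⟩, ham⟩ := (isCompact_Icc.inter_left hcl : IsCompact (α ⁻¹' range β ∩ Icc 0 t0)).exists_isGreatest
    ⟨0, ⟨0, by simp⟩, le_rfl, t0.2.1⟩
  obtain ⟨b, ⟨hbβ, hb⟩, hbm⟩ := (isCompact_Icc.inter_left hcl : IsCompact (α ⁻¹' range β ∩ Icc t0 1)).exists_isLeast
    ⟨1, ⟨1, by simp⟩, t0.2.2, le_rfl⟩
  have hat : a < t0 := lt_of_le_of_ne ha.2 (fun e => ht0 (e ▸ haβ))
  have htb : t0 < b := lt_of_le_of_ne hb.1 (fun e => ht0 (e ▸ hbβ))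
  have hgap : ∀ s, a < s → s < b → α s ∉ range β := by
    intro s h1 h2 hs
    rcases le_total s t0 with h | h
    · exact absurd (ham ⟨hs, s.2.1, h⟩) (not_le.2 h1)
    · exact absurd (hbm ⟨hs, h, s.2.2⟩) (not_le.2 h2)
  obtain ⟨u, hu⟩ := haβ
  obtain ⟨v, hv⟩ := hbβ
  have huv : (u:ℝ) ≠ v := fun e => (hat.trans htb).ne (hα (by rw [← hu, ← hv, Subtype.ext e]))
  have hab : (a:ℝ) < b := hat.trans htb
  set l : ℝ → X := fun s => if s ≤ 1/2 then α.extend (a + 2 * s * (b - a))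
    else β.extend (v + (2 * s - 1) * (u - v)) with hl
  have cont : Continuous l := by
    refine Continuous.if_le ?_ ?_ continuous_id continuous_const ?_
    · exact α.continuous_extend.comp (by fun_prop)
    · exact β.continuous_extend.comp (by fun_prop)
    · rintro s rfl
      have e1 : (a:ℝ) + 2 * (1/2) * (b - a) = b := by ring
      have e2 : (v:ℝ) + (2 * (1/2) - 1) * (u - v) = v := by ring
      rw [e1, e2, Path.extend_apply _ b.2, Path.extend_apply _ v.2]
      exact hv.symm
  have mem1 : ∀ s ∈ Icc (0:ℝ) (1/2), (a + 2 * s * (b - a) : ℝ) ∈ Icc (a:ℝ) b := by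
    intro s hs; constructor <;> nlinarith [hs.1, hs.2]
  have mem1' : ∀ s ∈ Icc (0:ℝ) (1/2), (a + 2 * s * (b - a) : ℝ) ∈ Icc (0:ℝ) 1 := fun s hs =>
    ⟨a.2.1.trans (mem1 s hs).1, (mem1 s hs).2.trans b.2.2⟩
  have mem2 : ∀ s ∈ Icc (1/2:ℝ) 1, (v + (2 * s - 1) * (u - v) : ℝ) ∈ Icc (0:ℝ) 1 := by
    intro s hs; constructor
    · nlinarith [hs.1, hs.2, mul_nonneg (sub_nonneg.2 hs.2) v.2.1, mul_nonneg (sub_nonneg.2 hs.1) u.2.1]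
    · nlinarith [hs.1, hs.2, mul_nonneg (sub_nonneg.2 hs.2) (sub_nonneg.2 v.2.2), mul_nonneg (sub_nonneg.2 hs.1) (sub_nonneg.2 u.2.2)]
  have l1 : ∀ s (hs : s ∈ Icc (0:ℝ) (1/2)), l s = α ⟨_, mem1' s hs⟩ := by
    intro s hs
    simp only [hl, if_pos hs.2]
    exact Path.extend_apply _ _
  have l2 : ∀ s (hs : s ∈ Icc (1/2:ℝ) 1), l s = β ⟨_, mem2 s hs⟩ := by
    intro s hs
    rcases hs.1.eq_or_lt with h | h
    · subst h
      rw [l1 _ (by norm_num)]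
      have e1 : (⟨_, mem1' (1/2) (by norm_num)⟩ : unitInterval) = b := Subtype.ext (by simp)
      have e2 : (⟨_, mem2 (1/2) hs⟩ : unitInterval) = v := Subtype.ext (by simp)
      rw [e1, e2]; exact hv.symm
    · simp only [hl, if_neg (not_le.2 h)]
      exact Path.extend_apply _ _
  refine ⟨l '' Icc 0 1, ?_, isCircleSet_of_loop cont.continuousOn ?_ ?_⟩
  · rintro _ ⟨s, hs, rfl⟩
    rcases le_total s (1/2) with h | h
    · rw [l1 s ⟨hs.1, h⟩]; exact Or.inl ⟨_, rfl⟩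
    · rw [l2 s ⟨h, hs.2⟩]; exact Or.inr ⟨_, rfl⟩
  · rw [l1 0 (by norm_num), l2 1 (by norm_num)]
    have e1 : (⟨_, mem1' 0 (by norm_num)⟩ : unitInterval) = a := Subtype.ext (by simp)
    have e2 : (⟨_, mem2 1 (by norm_num)⟩ : unitInterval) = u := Subtype.ext (by simp; ring)
    rw [e1, e2]; exact hu.symm
  · have cross : ∀ s ∈ Ico (0:ℝ) 1, ∀ t ∈ Ico (0:ℝ) 1, s ≤ 1/2 → 1/2 < t → l s ≠ l t := by
      intro s hs t ht h1 h2 he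
      rw [l1 s ⟨hs.1, h1⟩, l2 t ⟨h2.le, ht.2.le⟩] at he
      have hm := mem1 s ⟨hs.1, h1⟩
      rcases hm.1.eq_or_lt with e | e
      · have : (⟨_, mem1' s ⟨hs.1, h1⟩⟩ : unitInterval) = a := Subtype.ext e.symm
        rw [this, ← hu] at he
        have := congrArg Subtype.val (hβ he)
        simp only at this
        have h3 : (2 * t - 2) * (u - v : ℝ) = 0 := by linarith
        rcases mul_eq_zero.1 h3 with h3 | h3
        · linarith [ht.2]
        · exact huv (by linarith)
      rcases hm.2.eq_or_lt with e' | e'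
      · have : (⟨_, mem1' s ⟨hs.1, h1⟩⟩ : unitInterval) = b := Subtype.ext e'
        rw [this, ← hv] at he
        have := congrArg Subtype.val (hβ he)
        simp only at this
        have h3 : (2 * t - 1) * (u - v : ℝ) = 0 := by linarith
        rcases mul_eq_zero.1 h3 with h3 | h3
        · linarith
        · exact huv (by linarith)
      exact hgap _ e e' ⟨_, he.symm⟩
    intro s hs t ht he
    rcases le_or_gt s (1/2) with h1 | h1 <;> rcases le_or_gt t (1/2) with h2 | h2
    · rw [l1 s ⟨hs.1, h1⟩, l1 t ⟨ht.1, h2⟩] at he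
      have := congrArg Subtype.val (hα he)
      simp only at this
      have h3 : (s - t) * (b - a : ℝ) = 0 := by linarith
      rcases mul_eq_zero.1 h3 with h3 | h3 <;> linarith
    · exact (cross s hs t ht h1 h2 he).elim
    · exact (cross t ht s hs h2 h1 he.symm).elim
    · rw [l2 s ⟨h1.le, hs.2.le⟩, l2 t ⟨h2.le, ht.2.le⟩] at he
      have := congrArg Subtype.val (hβ he)
      simp only at this
      have h3 : (s - t) * (u - v : ℝ) = 0 := by linarith
      rcases mul_eq_zero.1 h3 with h3 | h3
      · linarith
      · exact (huv (by linarith)).elim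

/-! ### Segments in circle-free spaces -/

/-- The segment between `x` and `y`: the points common to all connected sets containing both. -/
def seg {T : Type*} [TopologicalSpace T] (x y : T) : Set T :=
  {z | ∀ S : Set T, IsPreconnected S → x ∈ S → y ∈ S → z ∈ S}

section Seg
variable {T : Type*} [TopologicalSpace T] {x y z w : T}

lemma seg_subset {S : Set T} (hS : IsPreconnected S) (hx : x ∈ S) (hy : y ∈ S) : seg x y ⊆ S :=
  fun _ hz => hz S hS hx hy

lemma left_mem_seg : x ∈ seg x y := fun _ _ h _ => h

lemma right_mem_seg : y ∈ seg x y := fun _ _ _ h => h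

lemma seg_comm : seg x y = seg y x := by
  ext z; exact ⟨fun h S hS a b => h S hS b a, fun h S hS a b => h S hS b a⟩

lemma seg_self : seg x x = {x} :=
  (seg_subset isPreconnected_singleton rfl rfl).antisymm (singleton_subset_iff.2 left_mem_seg)

lemma notMem_seg_iff : z ∉ seg x y ↔ ∃ S : Set T, IsPreconnected S ∧ x ∈ S ∧ y ∈ S ∧ z ∉ S := by
  simp only [seg, mem_ofPred_eq]; push Not; rfl

lemma isClosed_setOf_mem_seg [T1Space T] [LocallyConnectedSpace T] (q a : T) :
    IsClosed {x | a ∈ seg q x} := by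
  rw [← isOpen_compl_iff, isOpen_iff_mem_nhds]
  intro x hx
  obtain ⟨S, hS, hq, hxS, ha⟩ := notMem_seg_iff.1 hx
  have hsub : S ⊆ connectedComponentIn {a}ᶜ x :=
    hS.subset_connectedComponentIn hxS (fun s hs e => ha (e ▸ hs))
  refine Filter.mem_of_superset ((isOpen_compl_singleton.connectedComponentIn).mem_nhds
    (hsub hxS)) ?_
  intro x' hx'
  exact notMem_seg_iff.2 ⟨_, isPreconnected_connectedComponentIn, hsub hq, hx',
    fun h => connectedComponentIn_subset _ _ h rfl⟩

end Seg

lemma exists_connected_nhd {X : Type*} [PseudoMetricSpace X] [LocallyConnectedSpace X] (p : X)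
    {ε : ℝ}
    (hε : 0 < ε) : ∃ N, IsOpen N ∧ p ∈ N ∧ IsPreconnected N ∧ N ⊆ Metric.ball p ε := by
  obtain ⟨N, ⟨hN1, hN2, hN3⟩, hN⟩ := (LocallyConnectedSpace.open_connected_basis p).mem_iff.1
    (Metric.ball_mem_nhds p hε)
  exact ⟨N, hN1, hN2, hN3.isPreconnected, hN⟩

section Circlefree
variable {T : Type*} [MetricSpace T] [LocallyPathConnectedSpace T]
  {x y z w : T}

lemma exists_arc [ConnectedSpace T] (hxy : x ≠ y) : ∃ δ : Path x y, Function.Injective δ := by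
  have : PathConnectedSpace T := pathConnectedSpace_iff_connectedSpace.2 inferInstance
  obtain ⟨δ, h, -⟩ := exists_injective_path (PathConnectedSpace.somePath x y) hxy
  exact ⟨δ, h⟩

/-- In a circle-free space every arc is the segment between its ends. -/
lemma range_eq_seg (hT : ∀ C : Set T, ¬ IsCircleSet C) (δ : Path x y) (hδ : Function.Injective δ) :
    range δ = seg x y := by
  apply Subset.antisymm
  · rintro z hz
    by_contra hcon
    obtain ⟨S, hS, hx, hy, hzS⟩ := notMem_seg_iff.1 hcon
    have hxy : x ≠ y := by
      intro e
      have h1 : δ 0 = δ 1 := by rw [δ.source, δ.target, e]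
      exact zero_ne_one (hδ h1)
    have hsub : S ⊆ connectedComponentIn {z}ᶜ x :=
      hS.subset_connectedComponentIn hx (fun s hs e => hzS (e ▸ hs))
    have hp : IsPathConnected (connectedComponentIn {z}ᶜ x) :=
      (isOpen_compl_singleton.connectedComponentIn).isConnected_iff_isPathConnected.1
        ⟨⟨x, hsub hx⟩, isPreconnected_connectedComponentIn⟩
    obtain ⟨γ, hγ⟩ := hp.joinedIn x (hsub hx) y (hsub hy)
    obtain ⟨δ', hδ', hr⟩ := exists_injective_path γ hxy
    obtain ⟨C, -, hC⟩ := exists_circle_of_arcs δ δ' hδ hδ' (fun h => by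
      obtain ⟨t, ht⟩ := hr (h hz)
      exact connectedComponentIn_subset _ _ (hγ t) ht)
    exact hT C hC
  · exact seg_subset (isPreconnected_range δ.continuous) ⟨0, δ.source⟩ ⟨1, δ.target⟩

variable [ConnectedSpace T]

lemma seg_isPreconnected (hT : ∀ C : Set T, ¬ IsCircleSet C) : IsPreconnected (seg x y) := by
  by_cases h : x = y
  · subst h; rw [seg_self]; exact isPreconnected_singleton
  · obtain ⟨δ, hδ⟩ := exists_arc h
    rw [← range_eq_seg hT δ hδ]; exact isPreconnected_range δ.continuous

lemma seg_isCompact (hT : ∀ C : Set T, ¬ IsCircleSet C) : IsCompact (seg x y) := by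
  by_cases h : x = y
  · subst h; rw [seg_self]; exact isCompact_singleton
  · obtain ⟨δ, hδ⟩ := exists_arc h
    rw [← range_eq_seg hT δ hδ]; exact isCompact_range δ.continuous

lemma seg_subset_union (hT : ∀ C : Set T, ¬ IsCircleSet C) (y : T) : seg x z ⊆ seg x y ∪ seg y z :=
  seg_subset ((seg_isPreconnected hT).union y right_mem_seg left_mem_seg (seg_isPreconnected hT))
    (Or.inl left_mem_seg) (Or.inr right_mem_seg)

lemma seg_subset_seg (hT : ∀ C : Set T, ¬ IsCircleSet C) {a b : T} (ha : a ∈ seg x y)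
    (hb : b ∈ seg x y) : seg a b ⊆ seg x y :=
  seg_subset (seg_isPreconnected hT) ha hb

lemma seg_antisymm (hT : ∀ C : Set T, ¬ IsCircleSet C) (h1 : y ∈ seg x w) (h2 : x ∈ seg y w) :
    x = y := by
  by_cases h : x = w
  · subst h; rw [seg_self] at h1; exact h1.symm
  · obtain ⟨δ, hδ⟩ := exists_arc h
    rw [← range_eq_seg hT δ hδ] at h1
    obtain ⟨t, rfl⟩ := h1
    have : seg (δ t) w ⊆ δ '' Icc t 1 := seg_subset (isPreconnected_Icc.image _ δ.continuous.continuousOn)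
      ⟨t, ⟨le_rfl, t.2.2⟩, rfl⟩ ⟨1, ⟨t.2.2, le_rfl⟩, δ.target⟩
    obtain ⟨s, hs, he⟩ := this h2
    have h0 : s = 0 := hδ (by rw [he, δ.source])
    have : t = 0 := le_antisymm (h0 ▸ hs.1) t.2.1
    rw [this, δ.source]

/-- A nonempty closed connected subset contains a gate for every point. -/
lemma exists_gate (hT : ∀ C : Set T, ¬ IsCircleSet C) {A : Set T} (hA : IsClosed A)
    (hc : IsPreconnected A) (hne : A.Nonempty) (x : T) :
    ∃ q ∈ A, ∀ a ∈ A, q ∈ seg x a := by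
  by_cases hx : x ∈ A
  · exact ⟨x, hx, fun a _ => left_mem_seg⟩
  obtain ⟨a0, ha0⟩ := hne
  obtain ⟨δ, hδ⟩ := exists_arc (show x ≠ a0 from fun e => hx (e ▸ ha0))
  obtain ⟨t, ht, htm⟩ := (hA.preimage δ.continuous).isCompact.exists_isLeast
    ⟨1, by simpa using ha0⟩
  refine ⟨δ t, ht, fun a ha => ?_⟩
  have h0 : 0 < t := lt_of_le_of_ne t.2.1 (fun e => hx (by
    have : δ t ∈ A := ht
    rwa [← e, δ.source] at this))
  have hsub : Iio t ⊆ δ ⁻¹' (seg x a) := by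
    intro s hs
    have h1 : δ s ∈ seg x a0 := by rw [← range_eq_seg hT δ hδ]; exact ⟨s, rfl⟩
    rcases seg_subset_union hT a h1 with h | h
    · exact h
    · exact absurd (htm (seg_subset hc ha ha0 h)) (not_le.2 hs)
  have hcl : IsClosed (δ ⁻¹' (seg x a)) := (seg_isCompact hT).isClosed.preimage δ.continuous
  have : t ∈ closure (Iio t) := by
    rw [closure_Iio' (a := t) ⟨(0 : unitInterval), h0⟩]; exact self_mem_Iic
  exact hcl.closure_subset_iff.2 hsub this

/-- Compact connected subsets of a circle-free space have the fixed point property. -/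
theorem fixed_point (hT : ∀ C : Set T, ¬ IsCircleSet C) {B : Type*} [TopologicalSpace B]
    [CompactSpace B] [ConnectedSpace B]
    {ι : B → T} (hι : Continuous ι) (hinj : Function.Injective ι) {h : B → B} (hh : Continuous h) :
    ∃ x, h x = x := by
  obtain ⟨q⟩ : Nonempty B := inferInstance
  set S : Set B := {x | ι x ∈ seg (ι q) (ι (h x))} with hS
  have hemb := hι.isClosedEmbedding hinj
  have hScl : IsClosed S := by
    rw [← isOpen_compl_iff, isOpen_iff_mem_nhds]
    intro x hx
    have hne : ι (h x) ≠ ι x := fun e => hx (by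
      change ι x ∈ seg _ (ι (h x)); rw [e]; exact right_mem_seg)
    obtain ⟨N, hNo, hxN, hNc, hNs⟩ := exists_connected_nhd (ι (h x)) (half_pos (dist_pos.2 hne))
    have hcl : IsClosed (seg (ι q) (ι (h x)) ∪ closure N) :=
      (seg_isCompact hT).isClosed.union isClosed_closure
    have hx' : ι x ∉ seg (ι q) (ι (h x)) ∪ closure N := by
      rintro (h' | h')
      · exact hx h'
      · have := closure_mono hNs h'
        have := Metric.closure_ball_subset_closedBall this
        rw [Metric.mem_closedBall, dist_comm] at this
        linarith [dist_pos.2 hne]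
    filter_upwards [(hcl.isOpen_compl.preimage hι).mem_nhds hx',
      (hNo.preimage (hι.comp hh)).mem_nhds hxN] with x' h1 h2 h3
    rcases seg_subset ((seg_isPreconnected hT).union _ right_mem_seg hxN hNc)
      (Or.inl left_mem_seg) (Or.inr h2) h3 with h' | h'
    · exact h1 (Or.inl h')
    · exact h1 (Or.inr (subset_closure h'))
  let r : S → S → Prop := fun a b => ι a ∈ seg (ι q) (ι b)
  have rtrans : ∀ {a b c : S}, r a b → r b c → r a c := fun {a b c} hab hbc =>
    seg_subset_seg hT left_mem_seg hbc hab
  have hqS : q ∈ S := left_mem_seg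
  obtain ⟨⟨x, hxS⟩, hmax⟩ := exists_maximal_of_chains_bounded (r := r) (by
    intro c hc
    rcases c.eq_empty_or_nonempty with rfl | ⟨a0, ha0⟩
    · exact ⟨⟨q, hqS⟩, fun a ha => ha.elim⟩
    have hne : Nonempty c := ⟨⟨a0, ha0⟩⟩
    have : (⋂ a : c, (S ∩ {x | ι a ∈ seg (ι q) (ι x)})).Nonempty := by
      refine IsCompact.nonempty_iInter_of_directed_nonempty_isCompact_isClosed _ ?_ ?_ ?_ ?_
      · intro a b
        have up : ∀ a b : c, r a b → (S ∩ {x | ι b ∈ seg (ι q) (ι x)}) ⊆ (S ∩ {x | ι a ∈ seg (ι q) (ι x)}) :=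
          fun a b hab y hy => ⟨hy.1, seg_subset_seg hT left_mem_seg hy.2 hab⟩
        have htot : r a b ∨ r b a := by
          by_cases e : (a : S) = b
          · left; rw [e]; exact right_mem_seg
          · exact hc a.2 b.2 e
        rcases htot with h | h
        · exact ⟨b, up a b h, subset_rfl⟩
        · exact ⟨a, subset_rfl, up b a h⟩
      · exact fun a => ⟨a, a.1.2, right_mem_seg⟩
      · exact fun a => (hScl.inter ((isClosed_setOf_mem_seg _ _).preimage hι)).isCompact
      · exact fun a => (hScl.inter ((isClosed_setOf_mem_seg _ _).preimage hι))
    obtain ⟨u, hu⟩ := this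
    rw [mem_iInter] at hu
    exact ⟨⟨u, (hu ⟨a0, ha0⟩).1⟩, fun a ha => (hu ⟨a, ha⟩).2⟩) rtrans
  refine ⟨x, ?_⟩
  by_contra hne
  have hne' : ι x ≠ ι (h x) := fun e => hne (hinj e).symm
  set d := dist (ι x) (ι (h x)) with hd
  have hdpos : 0 < d := dist_pos.2 hne'
  obtain ⟨N, hNo, hxN, hNc, hNs⟩ := exists_connected_nhd (ι (h x)) (half_pos hdpos)
  obtain ⟨W, hWo, hW⟩ := hemb.isInducing.isOpen_iff.1 (hNo.preimage (hι.comp hh))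
  obtain ⟨δ, hδ⟩ := exists_arc hne'
  have hseg := range_eq_seg hT δ hδ
  -- a point of the arc from `ι x` to `ι (h x)`, close to but different from `ι x`
  obtain ⟨t, ht0, htW⟩ : ∃ t : unitInterval, 0 < t ∧ δ t ∈ W ∩ Metric.ball (ι x) (d/2) := by
    have hop : IsOpen (δ ⁻¹' (W ∩ Metric.ball (ι x) (d/2))) :=
      (hWo.inter Metric.isOpen_ball).preimage δ.continuous
    have h0 : (0 : unitInterval) ∈ δ ⁻¹' (W ∩ Metric.ball (ι x) (d/2)) := by
      simp only [mem_preimage, δ.source]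
      refine ⟨?_, Metric.mem_ball_self (half_pos hdpos)⟩
      have : x ∈ ι ⁻¹' W := by rw [hW]; exact hxN
      exact this
    have : (0:unitInterval) ∈ closure (Ioi 0) := by
      rw [closure_Ioi' ⟨1, zero_lt_one⟩]; exact self_mem_Ici
    obtain ⟨t, h1, h2⟩ := mem_closure_iff.1 this _ hop h0
    exact ⟨t, h2, h1⟩
  have hz : δ t ∈ seg (ι x) (ι (h x)) := hseg ▸ ⟨t, rfl⟩
  obtain ⟨b, hb⟩ : δ t ∈ range ι := seg_subset (isPreconnected_range hι) ⟨x, rfl⟩ ⟨h x, rfl⟩ hz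
  have hzx : ι b ≠ ι x := by
    rw [hb]; exact fun e => ht0.ne' (hδ (e.trans δ.source.symm))
  rw [← hb] at hz htW
  have hbN : ι (h b) ∈ N := by
    have : b ∈ ι ⁻¹' W := htW.1
    rw [hW] at this; exact this
  have hbN' : ι b ∉ N := fun h' => by
    have h1 := Metric.mem_ball.1 (hNs h')
    have h2 := Metric.mem_ball.1 htW.2
    have := dist_triangle_left (ι x) (ι (h x)) (ι b)
    linarith
  have hbS : b ∈ S := by
    have h1 : ι b ∈ seg (ι q) (ι (h x)) := seg_subset_seg hT hxS right_mem_seg hz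
    rcases seg_subset_union hT (ι (h b)) h1 with h' | h'
    · exact h'
    · exact (hbN' (seg_subset hNc hbN hxN h')).elim
  have hxb : ι x ∈ seg (ι q) (ι b) := by
    rcases seg_subset_union hT (ι b) hxS with h' | h'
    · exact h'
    · exact (hzx (seg_antisymm hT hz h').symm).elim
  have hbx : ι b ∈ seg (ι q) (ι x) := hmax ⟨b, hbS⟩ hxb
  rw [seg_comm] at hbx hxb
  exact hzx (seg_antisymm hT hbx hxb).symm

end Circlefree

/-! ### Peano continua are uniformly locally path-connected -/

/-- `A` is uniformly locally path-connected: close points of `A` are joined by small paths in `A`. -/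
def ULPC {X : Type*} [MetricSpace X] (A : Set X) : Prop :=
  ∀ ε > 0, ∃ δ > 0, ∀ x ∈ A, ∀ y ∈ A, dist x y < δ → ∃ γ : Path x y, range γ ⊆ A ∩ Metric.ball x ε

/-- Compactness makes local connectedness uniform. -/
lemma exists_small_connected {Y : Type*} [MetricSpace Y] [CompactSpace Y] [LocallyConnectedSpace Y]
    {ε : ℝ} (hε : 0 < ε) : ∃ δ > 0, δ ≤ ε ∧ ∀ x y : Y, dist x y < δ →
      ∃ S : Set Y, IsPreconnected S ∧ x ∈ S ∧ y ∈ S ∧ ∀ z ∈ S, dist z x < ε := by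
  choose N hNo hpN hNc hNs using fun p : Y => exists_connected_nhd p (half_pos hε)
  obtain ⟨δ, hδ, h⟩ := lebesgue_number_lemma_of_metric isCompact_univ hNo
    (fun p _ => mem_iUnion.2 ⟨p, hpN p⟩)
  refine ⟨min δ ε, lt_min hδ hε, min_le_right _ _, fun x y hxy => ?_⟩
  obtain ⟨p, hp⟩ := h x (mem_univ _)
  have hx := hp (Metric.mem_ball_self hδ)
  have hy := hp (show y ∈ Metric.ball x δ by
    rw [Metric.mem_ball, dist_comm]; exact hxy.trans_le (min_le_left _ _))
  refine ⟨N p, hNc p, hx, hy, fun z hz => ?_⟩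
  have h1 := Metric.mem_ball.1 (hNs p hz)
  have h2 := Metric.mem_ball.1 (hNs p hx)
  have := dist_triangle_right z x p
  linarith

/-- Two points of a connected set are joined inside it by a chain of steps shorter than `δ`. The
chain is an eventually constant sequence. -/
lemma exists_chain {Y : Type*} [MetricSpace Y] {S : Set Y} (hS : IsPreconnected S) {δ : ℝ}
    (hδ : 0 < δ) {x y : Y} (hx : x ∈ S) (hy : y ∈ S) :
    ∃ (l : ℕ) (z : ℕ → Y), z 0 = x ∧ (∀ j, l ≤ j → z j = y) ∧ (∀ j, z j ∈ S) ∧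
      ∀ j, dist (z j) (z (j+1)) < δ := by
  let r : Y → Y → Prop := fun a b => a ∈ S ∧ b ∈ S ∧ dist a b < δ
  have hr : Relation.ReflTransGen r x y := by
    refine hS.induction₂ (fun a b => Relation.ReflTransGen r a b) ?_ ?_ ?_ hx hy
    · intro a ha
      filter_upwards [inter_mem_nhdsWithin S (Metric.ball_mem_nhds a hδ)] with b hb
      exact Relation.ReflTransGen.single ⟨ha, hb.1, by rw [dist_comm]; exact hb.2⟩
    · intro a b c _ _ _ h1 h2; exact h1.trans h2
    · intro a b _ _ h
      have : Std.Symm r := ⟨fun a b h => ⟨h.2.1, h.1, by rw [dist_comm]; exact h.2.2⟩⟩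
      exact Std.Symm.symm (r := Relation.ReflTransGen r) _ _ h
  clear hx
  induction hr using Relation.ReflTransGen.head_induction_on with
  | refl => exact ⟨0, fun _ => y, rfl, fun _ _ => rfl, fun _ => hy, fun _ => by simpa using hδ⟩
  | @head a b h _ ih =>
    obtain ⟨l, z, h0, h1, h2, h3⟩ := ih
    refine ⟨l + 1, fun j => Nat.casesOn j a z, rfl, ?_, ?_, ?_⟩
    · rintro (_ | j) hj
      · omega
      · exact h1 j (by omega)
    · rintro (_ | j)
      · exact h.1
      · exact h2 j
    · rintro (_ | j)
      · simpa [h0] using h.2.2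
      · exact h3 j

/-- A finite chain from `x` to `y` (constant after `p.1` steps) whose steps are shorter than `d`. -/
def ChainFrom {Y : Type*} [MetricSpace Y] (x y : Y) (d : ℝ) (p : ℕ × (ℕ → Y)) : Prop :=
  0 < p.1 ∧ p.2 0 = x ∧ (∀ j, p.1 ≤ j → p.2 j = y) ∧ ∀ j, dist (p.2 j) (p.2 (j+1)) < d

/-- Each step of a chain can be subdivided into the same number `N` of shorter steps, staying
within `ε` of the original chain; `j / N` is the step subdivided by the index `j`. -/
lemma ChainFrom.refine {Y : Type*} [MetricSpace Y] {x y : Y} {d ε d' : ℝ} (hd' : 0 < d')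
    (hulc : ∀ x y : Y, dist x y < d →
      ∃ S : Set Y, IsPreconnected S ∧ x ∈ S ∧ y ∈ S ∧ ∀ z ∈ S, dist z x < ε) (hε : 0 < ε)
    {p : ℕ × (ℕ → Y)} (hp : ChainFrom x y d p) :
    ∃ p' : ℕ × (ℕ → Y), ChainFrom x y d' p' ∧ ∃ N, 0 < N ∧ p'.1 = p.1 * N ∧
      ∀ j, dist (p'.2 j) (p.2 (j / N)) < ε := by
  obtain ⟨m, c⟩ := p
  obtain ⟨hm, h0, hy, hstep⟩ := hp
  simp only at hm h0 hy hstep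
  choose S hS hxS hyS hSε using fun j => hulc _ _ (hstep j)
  choose l z hz0 hz1 hzS hzd using fun j => exists_chain (hS j) hd' (hxS j) (hyS j)
  set N := (Finset.range m).sup l + 1 with hN
  have hNpos : 0 < N := Nat.succ_pos _
  have hl : ∀ j < m, l j ≤ N - 1 := fun j hj => by
    have := Finset.le_sup (f := l) (Finset.mem_range.2 hj)
    omega
  let c' : ℕ → Y := fun k => if k / N < m then z (k / N) (k % N) else y
  have hc' : ∀ j r, r < N → c' (N * j + r) = if j < m then z j r else y := by
    intro j r hr
    simp only [c', Nat.mul_add_div hNpos, Nat.div_eq_of_lt hr, Nat.mul_add_mod, Nat.mod_eq_of_lt hr,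
      Nat.add_zero]
  have hrep : ∀ k, ∃ j r, r < N ∧ k = N * j + r := fun k =>
    ⟨k / N, k % N, Nat.mod_lt _ hNpos, (Nat.div_add_mod k N).symm⟩
  refine ⟨(m * N, c'), ⟨Nat.mul_pos hm hNpos, ?_, ?_, ?_⟩, N, hNpos, rfl, ?_⟩
  · have := hc' 0 0 hNpos
    simp only [Nat.mul_zero, Nat.add_zero, if_pos hm] at this
    change c' 0 = x
    rw [this, hz0, h0]
  · intro k hk
    obtain ⟨j, r, hr, rfl⟩ := hrep k
    have hj : ¬ j < m := by
      intro hj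
      have : N * (j + 1) ≤ N * m := Nat.mul_le_mul_left _ hj
      simp only at hk
      nlinarith
    simp only [hc' j r hr, if_neg hj]
  · intro k
    obtain ⟨j, r, hr, rfl⟩ := hrep k
    change dist (c' _) (c' _) < d'
    rw [hc' j r hr]
    by_cases hr' : r + 1 < N
    · rw [add_assoc, hc' j (r+1) hr']
      by_cases hj : j < m
      · simp only [if_pos hj]; exact hzd j r
      · simpa only [if_neg hj, dist_self] using hd'
    · have e : N * j + r + 1 = N * (j + 1) + 0 := by
        have : r + 1 = N := by omega
        rw [add_assoc, this]; ring
      rw [e, hc' (j+1) 0 hNpos]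
      by_cases hj : j < m
      · have e1 : z j r = c (j+1) := hz1 j r (by have := hl j hj; omega)
        rw [if_pos hj, e1]
        by_cases hj' : j + 1 < m
        · rw [if_pos hj', hz0, dist_self]; exact hd'
        · rw [if_neg hj', hy (j+1) (by omega), dist_self]; exact hd'
      · rw [if_neg hj, if_neg (by omega), dist_self]; exact hd'
  · intro k
    obtain ⟨j, r, hr, rfl⟩ := hrep k
    change dist (c' _) (c _) < ε
    rw [hc' j r hr, Nat.mul_add_div hNpos, Nat.div_eq_of_lt hr, Nat.add_zero]
    by_cases hj : j < m
    · rw [if_pos hj]; exact hSε j _ (hzS j r)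
    · rw [if_neg hj, hy j (by omega), dist_self]; exact hε

/-- Close points of a compact locally connected space are joined by a small path, obtained as the
uniform limit of finer and finer chains. -/
lemma exists_small_path {Y : Type*} [MetricSpace Y] [CompactSpace Y] [LocallyConnectedSpace Y]
    {ε : ℝ} (hε : 0 < ε) : ∃ δ > 0, ∀ x y : Y, dist x y < δ →
      ∃ γ : Path x y, range γ ⊆ Metric.ball x ε := by
  set C := ε / 3 with hC
  have hCpos : 0 < C := by positivity
  have hpos : ∀ n : ℕ, 0 < C / 2 / 2 ^ n := fun n => by positivity
  choose d hd hdle hulc using fun n => exists_small_connected (Y := Y) (hpos n)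
  refine ⟨d 0, hd 0, fun x y hxy => ?_⟩
  let St : ℕ → Type _ := fun n => {p : ℕ × (ℕ → Y) // ChainFrom x y (d n) p}
  let s0 : St 0 := ⟨(1, fun j => if j = 0 then x else y), one_pos, rfl,
    fun j hj => if_neg (by simp only at hj; omega), fun j => by
      rcases j with _ | j
      · simpa using hxy
      · simpa using hd 0⟩
  have next : ∀ n (s : St n), ∃ s' : St (n+1), ∃ N, 0 < N ∧ s'.1.1 = s.1.1 * N ∧
      ∀ j, dist (s'.1.2 j) (s.1.2 (j / N)) < C / 2 / 2 ^ n := by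
    intro n s
    obtain ⟨p', h1, h2⟩ := s.2.refine (hd (n+1)) (hulc n) (hpos n)
    exact ⟨⟨p', h1⟩, h2⟩
  choose nx N hN hmul hclose using next
  let s : ∀ n, St n := fun n => Nat.rec s0 (fun n s => nx n s) n
  have hs : ∀ n, s (n+1) = nx n (s n) := fun n => rfl
  let f : ℕ → ℝ → Y := fun n t => (s n).1.2 ⌊((s n).1.1 : ℝ) * t⌋₊
  have hf : ∀ t n, dist (f n t) (f (n+1) t) ≤ C / 2 / 2 ^ n := by
    intro t n
    have h1 := hclose n (s n) ⌊((s (n+1)).1.1 : ℝ) * t⌋₊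
    rw [← hs n, ← Nat.floor_div_natCast] at h1
    have e : ((s (n+1)).1.1 : ℝ) * t / (N n (s n) : ℝ) = ((s n).1.1 : ℝ) * t := by
      rw [hs n, hmul n (s n)]
      have : (N n (s n) : ℝ) ≠ 0 := by exact_mod_cast (hN n (s n)).ne'
      push_cast
      field_simp
    rw [e] at h1
    rw [dist_comm]
    exact h1.le
  have hlim : ∀ t, ∃ a, Filter.Tendsto (fun n => f n t) Filter.atTop (𝓝 a) := fun t =>
    cauchySeq_tendsto_of_complete (cauchySeq_of_le_geometric_two (hf t))
  choose F hF using hlim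
  have hFd : ∀ t n, dist (f n t) (F t) ≤ C / 2 ^ n := fun t n =>
    dist_le_of_le_geometric_two_of_tendsto (hf t) (hF t) n
  have osc : ∀ n t u, t ≤ u → u < t + 1 / ((s n).1.1 : ℝ) → dist (f n t) (f n u) ≤ C / 2 / 2 ^ n := by
    intro n t u h1 h2
    have hm : (0:ℝ) < (s n).1.1 := by exact_mod_cast (s n).2.1
    have a : ⌊((s n).1.1 : ℝ) * t⌋₊ ≤ ⌊((s n).1.1 : ℝ) * u⌋₊ :=
      Nat.floor_mono (mul_le_mul_of_nonneg_left h1 hm.le)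
    have b : ⌊((s n).1.1 : ℝ) * u⌋₊ ≤ ⌊((s n).1.1 : ℝ) * t⌋₊ + 1 := by
      have : ((s n).1.1 : ℝ) * u < ((s n).1.1 : ℝ) * t + 1 := by
        have := mul_lt_mul_of_pos_left h2 hm
        rw [mul_add, mul_one_div_cancel hm.ne'] at this
        exact this
      have h3 : ((s n).1.1 : ℝ) * u < ((⌊((s n).1.1 : ℝ) * t⌋₊ + 1 + 1 : ℕ) : ℝ) := by
        have := Nat.lt_floor_add_one (((s n).1.1 : ℝ) * t)
        push_cast; linarith
      exact Nat.lt_succ_iff.1 ((Nat.floor_lt' (by omega)).2 h3)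
    change dist ((s n).1.2 _) ((s n).1.2 _) ≤ _
    rcases (by omega : ⌊((s n).1.1 : ℝ) * u⌋₊ = ⌊((s n).1.1 : ℝ) * t⌋₊ ∨
      ⌊((s n).1.1 : ℝ) * u⌋₊ = ⌊((s n).1.1 : ℝ) * t⌋₊ + 1) with e | e
    · rw [e, dist_self]; exact (hpos n).le
    · rw [e]; exact ((s n).2.2.2.2 _).le.trans (hdle n)
  have hcont : Continuous F := by
    rw [Metric.continuous_iff]
    intro t η hη
    obtain ⟨n, hn⟩ : ∃ n : ℕ, 3 * C / 2 ^ n < η := by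
      obtain ⟨n, hn⟩ := pow_unbounded_of_one_lt (3 * C / η) one_lt_two
      refine ⟨n, ?_⟩
      rw [div_lt_iff₀ (by positivity)]
      rw [div_lt_iff₀ hη] at hn
      linarith
    have hm : (0:ℝ) < (s n).1.1 := by exact_mod_cast (s n).2.1
    refine ⟨1 / ((s n).1.1 : ℝ), by positivity, fun u hu => ?_⟩
    rw [Real.dist_eq] at hu
    have hu' := abs_lt.1 hu
    have h1 : dist (f n u) (f n t) ≤ C / 2 / 2 ^ n := by
      rcases le_total t u with h | h
      · rw [dist_comm]; exact osc n t u h (by linarith)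
      · exact osc n u t h (by linarith)
    have h2 := hFd t n
    have h3 := hFd u n
    have h4 := dist_triangle4_left (f n u) (f n t) (F u) (F t)
    have h5 : C / 2 / 2 ^ n ≤ C / 2 ^ n := by
      apply div_le_div_of_nonneg_right _ (by positivity); linarith
    have h6 : 3 * C / 2 ^ n = C / 2 ^ n + C / 2 ^ n + C / 2 ^ n := by ring
    linarith
  have F0 : F 0 = x := tendsto_nhds_unique (hF 0) (by
    have : ∀ n, f n 0 = x := fun n => by
      simp only [f, mul_zero, Nat.floor_zero]; exact (s n).2.2.1
    simp only [this]; exact tendsto_const_nhds)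
  have F1 : F 1 = y := tendsto_nhds_unique (hF 1) (by
    have : ∀ n, f n 1 = y := fun n => by
      simp only [f, mul_one, Nat.floor_natCast]; exact (s n).2.2.2.1 _ le_rfl
    simp only [this]; exact tendsto_const_nhds)
  refine ⟨⟨⟨fun t => F t, hcont.comp continuous_subtype_val⟩, by simpa using F0, by simpa using F1⟩, ?_⟩
  rintro _ ⟨t, rfl⟩
  change F t ∈ _
  rw [Metric.mem_ball]
  have h1 := hFd t 0
  simp only [pow_zero, div_one] at h1
  have h2 : dist (f 0 t) x ≤ C := by
    have h0 := hdle 0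
    simp only [pow_zero, div_one] at h0
    have : f 0 t = x ∨ f 0 t = y := by
      change (if _ then x else y) = x ∨ (if _ then x else y) = y
      split_ifs <;> simp
    rcases this with e | e
    · rw [e, dist_self]; exact hCpos.le
    · rw [e, dist_comm]; linarith
  have := dist_triangle_left (F t) x (f 0 t)
  linarith

lemma ulpc_of_locallyConnected {X : Type*} [MetricSpace X] {A : Set X} (hA : IsCompact A)
    (hlc : LocallyConnectedSpace A) : ULPC A := by
  intro ε hε
  have := isCompact_iff_compactSpace.1 hA
  obtain ⟨δ, hδ, h⟩ := exists_small_path (Y := A) hε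
  refine ⟨δ, hδ, fun x hx y hy hxy => ?_⟩
  obtain ⟨γ, hγ⟩ := h ⟨x, hx⟩ ⟨y, hy⟩ hxy
  refine ⟨γ.map continuous_subtype_val, ?_⟩
  rintro _ ⟨t, rfl⟩
  exact ⟨(γ t).2, hγ ⟨t, rfl⟩⟩

lemma ULPC.union {X : Type*} [MetricSpace X] {A B : Set X} (hA : IsCompact A) (hB : IsCompact B)
    (h1 : ULPC A) (h2 : ULPC B) : ULPC (A ∪ B) := by
  intro ε hε
  obtain ⟨d1, hd1, h1⟩ := h1 (ε/2) (half_pos hε)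
  obtain ⟨d2, hd2, h2⟩ := h2 (ε/2) (half_pos hε)
  set d := min (min d1 d2) (ε/2) with hd
  have hdpos : 0 < d := lt_min (lt_min hd1 hd2) (half_pos hε)
  have hdd1 : d ≤ d1 := (min_le_left _ _).trans (min_le_left _ _)
  have hdd2 : d ≤ d2 := (min_le_left _ _).trans (min_le_right _ _)
  have hdε : d ≤ ε/2 := min_le_right _ _
  obtain ⟨η, hη, h⟩ : ∃ η > 0, ∀ x ∈ A, ∀ y ∈ B, dist x y < η →
      ∃ z ∈ A ∩ B, dist x z < d ∧ dist z y < d := by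
    let U : Set (X × X) := ⋃ z ∈ A ∩ B, {p | dist p.1 z < d ∧ dist z p.2 < d}
    have hU : IsOpen U := isOpen_biUnion fun z _ =>
      (isOpen_lt (continuous_fst.dist continuous_const) continuous_const).inter
        (isOpen_lt (continuous_const.dist continuous_snd) continuous_const)
    have hK : IsCompact ((A ×ˢ B) \ U) := (hA.prod hB).diff hU
    rcases ((A ×ˢ B) \ U).eq_empty_or_nonempty with he | hne
    · refine ⟨1, one_pos, fun x hx y hy _ => ?_⟩
      have : (x, y) ∈ U := by
        by_contra hcon
        have : (x, y) ∈ (A ×ˢ B) \ U := ⟨⟨hx, hy⟩, hcon⟩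
        rw [he] at this; exact this
      simp only [U, mem_iUnion] at this
      obtain ⟨z, hz, h1, h2⟩ := this
      exact ⟨z, hz, h1, h2⟩
    · obtain ⟨⟨a, b⟩, ⟨⟨ha, hb⟩, hab⟩, hmin⟩ := hK.exists_isMinOn hne continuous_dist.continuousOn
      refine ⟨dist a b, dist_pos.2 ?_, fun x hx y hy hxy => ?_⟩
      · rintro rfl
        refine hab ?_
        simp only [U, mem_iUnion]
        exact ⟨a, ⟨ha, hb⟩, by simpa using hdpos⟩
      · by_contra hcon
        have : (x, y) ∉ U := by
          intro hxyU
          apply hcon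
          simp only [U, mem_iUnion] at hxyU
          obtain ⟨z, hz, h1, h2⟩ := hxyU
          exact ⟨z, hz, h1, h2⟩
        have := hmin (show (x, y) ∈ (A ×ˢ B) \ U from ⟨⟨hx, hy⟩, this⟩)
        simp only [mem_ofPred_eq] at this
        linarith
  have cross : ∀ x ∈ A, ∀ y ∈ B, dist x y < η → ∃ γ : Path x y, range γ ⊆ (A ∪ B) ∩ Metric.ball x ε
      ∧ range γ ⊆ Metric.ball y ε := by
    intro x hx y hy hxy
    obtain ⟨z, ⟨hzA, hzB⟩, hz1, hz2⟩ := h x hx y hy hxy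
    obtain ⟨γ1, hγ1⟩ := h1 z hzA x hx (by rw [dist_comm]; linarith)
    obtain ⟨γ2, hγ2⟩ := h2 z hzB y hy (hz2.trans_le hdd2)
    have hr : range (γ1.symm.trans γ2) ⊆ (A ∪ B) ∩ Metric.ball z (ε/2) := by
      rw [Path.trans_range, Path.symm_range]
      exact union_subset (hγ1.trans (inter_subset_inter_left _ subset_union_left))
        (hγ2.trans (inter_subset_inter_left _ subset_union_right))
    have hsub : ∀ w, dist z w < d → Metric.ball z (ε/2) ⊆ Metric.ball w ε := fun w hw =>
      Metric.ball_subset_ball' (by linarith)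
    exact ⟨γ1.symm.trans γ2, fun p hp => ⟨(hr hp).1, hsub x (by rwa [dist_comm]) (hr hp).2⟩,
      fun p hp => hsub y hz2 (hr hp).2⟩
  refine ⟨min d η, lt_min hdpos hη, ?_⟩
  have hb : ∀ x : X, Metric.ball x (ε/2) ⊆ Metric.ball x ε := fun x => Metric.ball_subset_ball (by linarith)
  rintro x (hx | hx) y (hy | hy) hxy
  · obtain ⟨γ, hγ⟩ := h1 x hx y hy (hxy.trans_le ((min_le_left _ _).trans hdd1))
    exact ⟨γ, fun p hp => ⟨Or.inl (hγ hp).1, hb x (hγ hp).2⟩⟩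
  · obtain ⟨γ, hγ, -⟩ := cross x hx y hy (hxy.trans_le (min_le_right _ _))
    exact ⟨γ, hγ⟩
  · obtain ⟨γ, hγ, hγ'⟩ := cross y hy x hx (by rw [dist_comm]; exact hxy.trans_le (min_le_right _ _))
    refine ⟨γ.symm, ?_⟩
    rw [Path.symm_range]
    exact fun p hp => ⟨(hγ hp).1, hγ' hp⟩
  · obtain ⟨γ, hγ⟩ := h2 x hx y hy (hxy.trans_le ((min_le_left _ _).trans hdd2))
    exact ⟨γ, fun p hp => ⟨Or.inr (hγ hp).1, hb x (hγ hp).2⟩⟩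

lemma locallyPathConnectedSpace_of_peano {Y : Type*} [MetricSpace Y] [CompactSpace Y]
    [LocallyConnectedSpace Y] : LocallyPathConnectedSpace Y := by
  refine LocallyPathConnectedSpace.of_bases (p := fun _ (ε : ℝ) => 0 < ε)
    (s := fun x ε => pathComponentIn (Metric.ball x ε) x) (fun x => ?_) (fun x ε hε =>
      isPathConnected_pathComponentIn (Metric.mem_ball_self hε))
  refine ⟨fun U => ?_⟩
  constructor
  · intro hU
    obtain ⟨ε, hε, h⟩ := Metric.mem_nhds_iff.1 hU
    exact ⟨ε, hε, pathComponentIn_subset.trans h⟩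
  · rintro ⟨ε, hε, h⟩
    obtain ⟨δ, hδ, h'⟩ := exists_small_path (Y := Y) hε
    refine Filter.mem_of_superset (Metric.ball_mem_nhds x hδ) (Subset.trans (fun y hy => ?_) h)
    obtain ⟨γ, hγ⟩ := h' x y (by rw [dist_comm]; exact hy)
    exact ⟨γ, fun t => hγ ⟨t, rfl⟩⟩

/-! ### Neighbourhoods with finite boundary and extension of circle-valued maps -/

/-- Every point of `B` has arbitrarily small open neighbourhoods with finite boundary. -/
def RegularOn {Z : Type*} [TopologicalSpace Z] (B : Set Z) : Prop :=
  ∀ p ∈ B, ∀ O, IsOpen O → p ∈ O → ∃ W, IsOpen W ∧ p ∈ W ∧ W ⊆ O ∧ (frontier W).Finite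

/-- In a circle-free space the boundary of `O` is covered by the interiors of finitely many
branches `{x | z ∈ seg p x}` with `z ≠ p`. Removing these branches from `O` leaves a neighbourhood
of `p` whose boundary consists of the finitely many cut points `z`. -/
lemma exists_finite_frontier {T : Type*} [MetricSpace T] [ConnectedSpace T]
    [LocallyPathConnectedSpace T] (hT : ∀ C : Set T, ¬ IsCircleSet C) {p : T} {O : Set T}
    (hO : IsOpen O) (hp : p ∈ O) (hfr : IsCompact (frontier O)) :
    ∃ W, IsOpen W ∧ p ∈ W ∧ W ⊆ O ∧ (frontier W).Finite := by
  classical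
  have key : ∀ q : T, q ≠ p → ∃ z ∈ seg p q, z ≠ p ∧ z ≠ q := by
    intro q hq
    have hinf : (seg p q).Infinite := (seg_isPreconnected hT).infinite_of_nontrivial
      ⟨p, left_mem_seg, q, right_mem_seg, hq.symm⟩
    obtain ⟨z, hz, hz'⟩ := hinf.exists_notMem_finite (toFinite {p, q})
    simp only [mem_insert_iff, mem_singleton_iff, not_or] at hz'
    exact ⟨z, hz, hz'⟩
  have key' : ∀ q : T, ∃ z, q ≠ p → z ∈ seg p q ∧ z ≠ p ∧ z ≠ q := fun q => by
    by_cases h : q = p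
    · exact ⟨p, fun h' => (h' h).elim⟩
    · obtain ⟨z, hz⟩ := key q h
      exact ⟨z, fun _ => hz⟩
  choose z hz using key'
  let K : T → Set T := fun q => {x | z q ∈ seg p x}
  have hKc : ∀ q, IsClosed (K q) := fun q => isClosed_setOf_mem_seg p (z q)
  have hKint : ∀ q x, x ∈ K q → x ≠ z q → z q ≠ p → x ∈ interior (K q) := by
    intro q x hx hxz hzp
    refine mem_interior.2 ⟨connectedComponentIn {z q}ᶜ x, fun y hy => ?_,
      isOpen_compl_singleton.connectedComponentIn, mem_connectedComponentIn hxz⟩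
    have h1 : z q ∈ seg p y ∪ seg y x := seg_subset_union hT y hx
    rcases h1 with h1 | h1
    · exact h1
    · exact (connectedComponentIn_subset _ _ (seg_subset isPreconnected_connectedComponentIn hy
        (mem_connectedComponentIn hxz) h1) rfl).elim
  have hne : ∀ q ∈ frontier O, q ≠ p := by
    rintro q hq rfl
    exact (hO.inter_frontier_eq ▸ (⟨hp, hq⟩ : q ∈ O ∩ frontier O) : q ∈ (∅ : Set T))
  obtain ⟨t, ht, hcov⟩ := hfr.elim_nhds_subcover (fun q => if q ≠ p then interior (K q) else univ) (by
    intro q hq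
    obtain ⟨h1, h2, h3⟩ := hz q (hne q hq)
    simp only [if_pos (hne q hq)]
    exact isOpen_interior.mem_nhds (hKint q q h1 h3.symm h2))
  have hclosed : IsClosed (⋃ q ∈ t, K q) := t.finite_toSet.isClosed_biUnion fun q _ => hKc q
  refine ⟨O \ ⋃ q ∈ t, K q, hO.sdiff hclosed, ⟨hp, ?_⟩, sdiff_subset, ?_⟩
  · simp only [mem_iUnion, not_exists]
    intro q hq hpq
    have : z q ∈ seg p p := hpq
    rw [seg_self] at this
    exact (hz q (hne q (ht q hq))).2.1 this
  · refine (t.finite_toSet.image z).subset ?_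
    intro x hx
    by_contra hcon
    rw [(hO.sdiff hclosed).frontier_eq] at hx
    have hnoint : ∀ q ∈ t, x ∉ interior (K q) := by
      intro q hq hxq
      obtain ⟨y, hy1, hy2⟩ := mem_closure_iff.1 hx.1 _ isOpen_interior hxq
      exact hy2.2 (mem_biUnion hq (interior_subset hy1))
    have hnoK : ∀ q ∈ t, x ∉ K q := by
      intro q hq hxq
      refine hnoint q hq (hKint q x hxq ?_ (hz q (hne q (ht q hq))).2.1)
      rintro rfl
      exact hcon ⟨q, hq, rfl⟩
    have hxO : x ∉ O := fun hxO => hx.2 ⟨hxO, by simpa using hnoK⟩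
    have hxfr : x ∈ frontier O := by
      rw [hO.frontier_eq]; exact ⟨closure_mono sdiff_subset hx.1, hxO⟩
    have := hcov hxfr
    simp only [mem_iUnion] at this
    obtain ⟨q, hq, hxq⟩ := this
    rw [if_pos (hne q (ht q hq))] at hxq
    exact hnoint q hq hxq

lemma IsCircleSet.nontrivial {X : Type*} [TopologicalSpace X] {C : Set X} (h : IsCircleSet C) :
    C.Nontrivial := by
  obtain ⟨e⟩ := h
  let a : Metric.sphere (0:ℂ) 1 := ⟨1, by simp⟩
  let b : Metric.sphere (0:ℂ) 1 := ⟨-1, by simp⟩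
  refine ⟨e.symm a, (e.symm a).2, e.symm b, (e.symm b).2, fun h => ?_⟩
  have h1 := e.symm.injective (Subtype.ext h)
  have h2 := congrArg (fun z => (z.1).re) h1
  norm_num [a, b] at h2

lemma IsCircleSet.image {X Y : Type*} [TopologicalSpace X] [TopologicalSpace Y] {C : Set X}
    (h : IsCircleSet C) {f : X → Y} (hf : IsEmbedding f) : IsCircleSet (f '' C) := by
  obtain ⟨e⟩ := h
  exact ⟨(hf.homeomorphImage C).symm.trans e⟩

/-- In a space with finitely many circles every point has small connected open neighbourhoods that
contain no circle. -/
lemma exists_circleFree_nhd {Z : Type*} [MetricSpace Z] [LocallyConnectedSpace Z]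
    (hfin : {C : Set Z | IsCircleSet C}.Finite) (p : Z) {ε : ℝ} (hε : 0 < ε) :
    ∃ U, IsOpen U ∧ p ∈ U ∧ IsPreconnected U ∧ U ⊆ Metric.ball p ε ∧
      ∀ C : Set U, ¬ IsCircleSet C := by
  have hc : ∀ C : Set Z, ∃ c, IsCircleSet C → c ∈ C ∧ c ≠ p := by
    intro C
    by_cases h : IsCircleSet C
    · obtain ⟨c, hc, hcp⟩ := h.nontrivial.exists_ne p
      exact ⟨c, fun _ => ⟨hc, hcp⟩⟩
    · exact ⟨p, fun h' => (h h').elim⟩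
  choose c hc using hc
  have hF : IsClosed (c '' {C : Set Z | IsCircleSet C}) := (hfin.image c).isClosed
  have hpF : p ∈ Metric.ball p ε ∩ (c '' {C : Set Z | IsCircleSet C})ᶜ := by
    refine ⟨Metric.mem_ball_self hε, ?_⟩
    rintro ⟨C, hC, h⟩
    exact (hc C hC).2 h
  obtain ⟨r, hr, hsub⟩ := Metric.isOpen_iff.1 (Metric.isOpen_ball.inter hF.isOpen_compl) p hpF
  obtain ⟨U, hU, hpU, hUc, hUs⟩ := exists_connected_nhd p hr
  refine ⟨U, hU, hpU, hUc, fun x hx => (hsub (hUs hx)).1, fun C hC => ?_⟩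
  have h1 := hC.image (IsEmbedding.subtypeVal (p := (· ∈ U)))
  obtain ⟨⟨y, hy⟩, -, hy'⟩ := (hc _ h1).1
  simp only at hy'
  exact (hsub (hUs hy)).2 ⟨_, h1, hy'.symm⟩

/-- Local dendrites are regular curves: this is a local statement, and locally there are no
circles. -/
lemma regularOn_of_finite_circles {Z : Type*} [MetricSpace Z] [CompactSpace Z]
    [LocallyConnectedSpace Z]
    (hfin : {C : Set Z | IsCircleSet C}.Finite) : RegularOn (univ : Set Z) := by
  intro p _ O hO hp
  obtain ⟨ε, hε, hεO⟩ := Metric.isOpen_iff.1 hO p hp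
  obtain ⟨U, hU, hpU, hUc, hUs, hUC⟩ := exists_circleFree_nhd hfin p hε
  obtain ⟨r, hr, hrU⟩ := Metric.nhds_basis_closedBall.mem_iff.1 (hU.mem_nhds hpU)
  have : ConnectedSpace U := isConnected_iff_connectedSpace.1 ⟨⟨p, hpU⟩, hUc⟩
  have : LocallyPathConnectedSpace Z := locallyPathConnectedSpace_of_peano
  have : LocallyPathConnectedSpace U := hU.locallyPathConnectedSpace
  have hemb : IsOpenEmbedding (Subtype.val : U → Z) := hU.isOpenEmbedding_subtypeVal
  obtain ⟨W, hW, hpW, hWO, hWf⟩ := exists_finite_frontier hUC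
    (O := Subtype.val ⁻¹' Metric.ball p r) (p := ⟨p, hpU⟩)
    (Metric.isOpen_ball.preimage continuous_subtype_val) (Metric.mem_ball_self hr) (by
      rw [← hemb.isOpenMap.preimage_frontier_eq_frontier_preimage hemb.continuous]
      refine hemb.isInducing.isCompact_preimage' ?_ ?_
      · exact isClosed_frontier.isCompact
      · rw [Subtype.range_coe]
        exact (frontier_subset_closure.trans Metric.closure_ball_subset_closedBall).trans hrU)
  refine ⟨Subtype.val '' W, hemb.isOpenMap _ hW, ⟨_, hpW, rfl⟩, ?_, ?_⟩
  · rintro _ ⟨x, -, rfl⟩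
    exact hεO (hUs x.2)
  · have hsub : Subtype.val '' W ⊆ Metric.ball p r := image_subset_iff.2 hWO
    have h1 : frontier (Subtype.val '' W) ⊆ U := (frontier_subset_closure.trans
      ((closure_mono hsub).trans Metric.closure_ball_subset_closedBall)).trans hrU
    have h2 := hemb.isOpenMap.preimage_frontier_eq_frontier_preimage hemb.continuous (Subtype.val '' W)
    rw [preimage_image_eq _ Subtype.val_injective] at h2
    rw [← h2] at hWf
    have h3 := hWf.image Subtype.val
    rwa [Subtype.image_preimage_coe, inter_eq_self_of_subset_right h1] at h3

/-- Nonvanishing complex functions extend from closed sets whose complement consists of points with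
small neighbourhoods of finite boundary. -/
lemma exists_nonvanishing_extension {Y : Type*} [MetricSpace Y] [CompactSpace Y] {A : Set Y}
    (hA : IsClosed A) (hreg : RegularOn Aᶜ) {φ : Y → ℂ} (hφ : ContinuousOn φ A)
    (hne : ∀ a ∈ A, φ a ≠ 0) : ∃ Φ : Y → ℂ, Continuous Φ ∧ (∀ y, Φ y ≠ 0) ∧ EqOn Φ φ A := by
  classical
  obtain ⟨g, hg⟩ := ContinuousMap.exists_restrict_eq hA
    (⟨A.domRestrict φ, continuousOn_iff_continuous_domRestrict.1 hφ⟩ : C(A, ℂ))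
  have hgA : ∀ a ∈ A, g a = φ a := fun a ha => DFunLike.congr_fun hg ⟨a, ha⟩
  have hZ : IsCompact {y | g y = 0} := (isClosed_eq g.continuous continuous_const).isCompact
  have hZA : {y | g y = 0} ⊆ Aᶜ := fun y hy hyA => hne y hyA ((hgA y hyA).symm.trans hy)
  have hreg' : ∀ p : Y, ∃ W, IsOpen W ∧ W ⊆ Aᶜ ∧ (frontier W).Finite ∧ (p ∈ Aᶜ → p ∈ W) := by
    intro p
    by_cases hp : p ∈ Aᶜ
    · obtain ⟨W, h1, h2, h3, h4⟩ := hreg p hp _ hA.isOpen_compl hp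
      exact ⟨W, h1, h3, h4, fun _ => h2⟩
    · exact ⟨∅, isOpen_empty, empty_subset _, by simp, fun h => (hp h).elim⟩
  choose W hWo hWA hWf hpW using hreg'
  obtain ⟨t, ht, hcov⟩ := hZ.elim_nhds_subcover W (fun p hp => (hWo p).mem_nhds (hpW p (hZA hp)))
  set V := ⋃ p ∈ t, W p with hV
  have hVo : IsOpen V := isOpen_biUnion fun p _ => hWo p
  have hVf : (frontier V).Finite := by
    refine (t.finite_toSet.biUnion fun p _ => hWf p).subset ?_
    intro x hx
    rw [hVo.frontier_eq] at hx
    obtain ⟨hx1, hx2⟩ := hx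
    replace hx1 := t.finite_toSet.closure_biUnion W ▸ hx1
    rw [hV] at hx2
    simp only [mem_iUnion, not_exists] at hx1 hx2 ⊢
    obtain ⟨p, hp, hxp⟩ := hx1
    exact ⟨p, hp, by rw [(hWo p).frontier_eq]; exact ⟨hxp, hx2 p hp⟩⟩
  have hfne : ∀ y ∈ frontier V, g y ≠ 0 := by
    intro y hy h0
    rw [hVo.frontier_eq] at hy
    exact hy.2 (hcov h0)
  have hfin : Finite (frontier V) := hVf
  have hdisc : DiscreteTopology (frontier V) := inferInstance
  obtain ⟨l, hl⟩ := ContinuousMap.exists_restrict_eq (isClosed_frontier (s := V))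
    (⟨fun y => Complex.log (g y), continuous_of_discreteTopology⟩ : C(frontier V, ℂ))
  have hlf : ∀ y ∈ frontier V, l y = Complex.log (g y) := fun y hy => DFunLike.congr_fun hl ⟨y, hy⟩
  refine ⟨V.piecewise (fun y => Complex.exp (l y)) g, Continuous.piecewise (fun y hy => ?_)
    (Complex.continuous_exp.comp l.continuous) g.continuous, fun y => ?_, fun a ha => ?_⟩
  · rw [hlf y hy, Complex.exp_log (hfne y hy)]
  · by_cases hy : y ∈ V
    · rw [piecewise_eq_of_mem _ _ _ hy]; exact Complex.exp_ne_zero _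
    · rw [piecewise_eq_of_notMem _ _ _ hy]; exact fun h => hy (hcov h)
  · rw [piecewise_eq_of_notMem _ _ _ ?_, hgA a ha]
    simp only [hV, mem_iUnion, not_exists]
    exact fun p _ h => hWA p h ha

/-- Extension across a local dendrite `L` contained in a larger space. -/
lemma exists_extension_union {X : Type*} [MetricSpace X] {A L : Set X} (hA : IsClosed A)
    (hL : IsCompact L) (hlc : LocallyConnectedSpace L)
    (hfin : {C : Set X | C ⊆ L ∧ IsCircleSet C}.Finite) {φ : X → ℂ} (hφ : ContinuousOn φ A)
    (hne : ∀ a ∈ A, φ a ≠ 0) :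
    ∃ Φ : X → ℂ, ContinuousOn Φ (A ∪ L) ∧ (∀ y ∈ A ∪ L, Φ y ≠ 0) ∧ EqOn Φ φ A := by
  classical
  have : CompactSpace L := isCompact_iff_compactSpace.1 hL
  have hfin' : {C : Set L | IsCircleSet C}.Finite := by
    refine Finite.of_finite_image (f := image Subtype.val) (hfin.subset ?_)
      (Subtype.val_injective.image_injective.injOn)
    rintro _ ⟨C, hC, rfl⟩
    exact ⟨Subtype.coe_image_subset _ _, hC.image IsEmbedding.subtypeVal⟩
  obtain ⟨Ψ, hΨ, hΨ0, hΨA⟩ := exists_nonvanishing_extension (Y := L) (A := Subtype.val ⁻¹' A)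
    (hA.preimage continuous_subtype_val)
    (fun p _ => regularOn_of_finite_circles hfin' p (mem_univ _))
    (φ := fun x => φ x) (hφ.comp continuous_subtype_val.continuousOn fun x hx => hx)
    (fun a ha => hne a ha)
  let Φ : X → ℂ := fun x => if x ∈ A then φ x else if h : x ∈ L then Ψ ⟨x, h⟩ else 0
  have hΦA : EqOn Φ φ A := fun x hx => if_pos hx
  have hΦL : ∀ x : L, Φ x = Ψ x := by
    intro x
    by_cases hx : x.1 ∈ A
    · rw [hΦA hx]; exact (hΨA hx).symm
    · simp only [Φ, if_neg hx, dif_pos x.2]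
  refine ⟨Φ, ContinuousOn.union_of_isClosed (hφ.congr hΦA) ?_ hA hL.isClosed, ?_, hΦA⟩
  · rw [continuousOn_iff_continuous_domRestrict]
    exact hΨ.congr fun x => (hΦL x).symm
  · rintro y (hy | hy)
    · rw [hΦA hy]; exact hne y hy
    · have := hΦL ⟨y, hy⟩
      simp only at this
      rw [this]; exact hΨ0 _

lemma regularOn_of_freeInterval {X : Type*} [TopologicalSpace X] [T2Space X] {J : Set X}
    (hJ : IsOpen J) (h : Nonempty (J ≃ₜ Ioo (0:ℝ) 1)) : RegularOn J := by
  obtain ⟨e⟩ := h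
  intro p hp O hO hpO
  let ψ : Ioo (0:ℝ) 1 → X := fun t => (e.symm t : X)
  have hψ : IsOpenEmbedding ψ := hJ.isOpenEmbedding_subtypeVal.comp e.symm.isOpenEmbedding
  have hval : IsOpenEmbedding (Subtype.val : Ioo (0:ℝ) 1 → ℝ) := isOpen_Ioo.isOpenEmbedding_subtypeVal
  have hn : Subtype.val '' (ψ ⁻¹' O) ∈ 𝓝 ((e ⟨p, hp⟩ : Ioo (0:ℝ) 1) : ℝ) :=
    (hval.isOpenMap _ (hO.preimage hψ.continuous)).mem_nhds ⟨e ⟨p, hp⟩, by simpa [ψ] using hpO, rfl⟩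
  obtain ⟨r, hr, hsub⟩ := Metric.nhds_basis_closedBall.mem_iff.1 hn
  set s : ℝ := ((e ⟨p, hp⟩ : Ioo (0:ℝ) 1) : ℝ) with hs
  let W : Set X := ψ '' (Subtype.val ⁻¹' Metric.ball s r)
  let K : Set X := ψ '' (Subtype.val ⁻¹' Metric.closedBall s r)
  have hr01 : Metric.closedBall s r ⊆ range (Subtype.val : Ioo (0:ℝ) 1 → ℝ) :=
    fun t ht => by obtain ⟨x, -, rfl⟩ := hsub ht; exact ⟨x, rfl⟩
  have hK : IsCompact K := (hval.isInducing.isCompact_preimage' (isCompact_closedBall s r) hr01).image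
    hψ.continuous
  have hWo : IsOpen W := hψ.isOpenMap _ (Metric.isOpen_ball.preimage continuous_subtype_val)
  refine ⟨W, hWo, ⟨e ⟨p, hp⟩, Metric.mem_ball_self hr, by simp [ψ]⟩, ?_, ?_⟩
  · rintro _ ⟨t, ht, rfl⟩
    obtain ⟨t', ht', he⟩ := hsub (Metric.ball_subset_closedBall ht)
    rw [Subtype.val_injective he] at ht'
    exact ht'
  · have hfin : (ψ '' (Subtype.val ⁻¹' Metric.sphere s r)).Finite := by
      refine Finite.image _ (Finite.preimage Subtype.val_injective.injOn ?_)
      refine (toFinite {s - r, s + r}).subset fun x hx => ?_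
      rw [Metric.mem_sphere, Real.dist_eq] at hx
      rcases eq_or_eq_neg_of_abs_eq hx with h | h
      · right; simp only [mem_singleton_iff]; linarith
      · left; linarith
    refine hfin.subset fun x hx => ?_
    rw [hWo.frontier_eq] at hx
    have hxK : x ∈ K := hK.isClosed.closure_subset_iff.2
      (image_mono (preimage_mono Metric.ball_subset_closedBall)) hx.1
    obtain ⟨t, ht, rfl⟩ := hxK
    refine ⟨t, ?_, rfl⟩
    have : t.1 ∉ Metric.ball s r := fun h => hx.2 ⟨t, h, rfl⟩
    rw [mem_preimage, Metric.mem_sphere]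
    rw [Metric.mem_ball, not_lt] at this
    exact le_antisymm ht this

/-- Circle-valued maps extend from closed subsets of a space in the class `𝒞` with local dendrites
as remainders. -/
lemma ClassC.exists_circle_extension {X : Type*} [MetricSpace X] [CompactSpace X] {L J R : Set X}
    (hC : ClassC L J R) (hL : IsLocalDendrite L) (hR : IsLocalDendrite R) {A : Set X}
    (hA : IsClosed A) {φ : X → Circle} (hφ : ContinuousOn φ A) :
    ∃ Φ : X → Circle, Continuous Φ ∧ EqOn Φ φ A := by
  obtain ⟨Φ1, h1c, h1n, h1e⟩ := exists_extension_union hA hC.compactL hC.locConnL hL.2.2.2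
    (φ := fun x => (φ x : ℂ)) (continuous_subtype_val.comp_continuousOn hφ)
    (fun a _ => Circle.coe_ne_zero _)
  have hAL := hA.union hC.compactL.isClosed
  obtain ⟨Φ2, h2c, h2n, h2e⟩ := exists_extension_union hAL hC.compactR hC.locConnR hR.2.2.2 h1c h1n
  have hALR := hAL.union hC.compactR.isClosed
  have hreg : RegularOn (A ∪ L ∪ R)ᶜ := by
    intro p hp
    refine regularOn_of_freeInterval hC.openJ hC.freeJ p ?_
    have : p ∈ L ∪ J ∪ R := hC.union_eq ▸ mem_univ p
    simp only [mem_compl_iff, mem_union, not_or] at hp this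
    tauto
  obtain ⟨Φ3, h3c, h3n, h3e⟩ := exists_nonvanishing_extension hALR hreg h2c h2n
  refine ⟨fun x => ⟨Φ3 x / ‖Φ3 x‖, ?_⟩, ?_, ?_⟩
  · have : ‖Φ3 x‖ ≠ 0 := norm_ne_zero_iff.2 (h3n x)
    rw [Submonoid.unitSphere, ← SetLike.mem_coe]
    simp [this]
  · refine Continuous.subtype_mk (h3c.div (Complex.continuous_ofReal.comp h3c.norm) ?_) _
    intro x
    exact Complex.ofReal_ne_zero.2 (norm_ne_zero_iff.2 (h3n x))
  · intro a ha
    have : Φ3 a = φ a := by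
      rw [h3e (Or.inl (Or.inl ha)), h2e (Or.inl ha), h1e ha]
    apply Circle.ext
    change Φ3 a / (‖Φ3 a‖ : ℂ) = φ a
    rw [this, Circle.norm_coe]
    simp

/-! ### Extending maps that factor through the line -/

/-- Close points of a uniformly locally path-connected set are joined by a canonical small path. -/
lemma ULPC.exists_paths {X : Type*} [MetricSpace X] {P : Set X} (hP : IsPathConnected P)
    (hU : ULPC P) : ∃ γ : X → X → ℝ → X, (∀ x y, Continuous (γ x y)) ∧
      (∀ x ∈ P, ∀ y ∈ P, γ x y 0 = x ∧ γ x y 1 = y ∧ ∀ t, γ x y t ∈ P) ∧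
      ∀ ε > 0, ∃ δ > 0, ∀ x ∈ P, ∀ y ∈ P, dist x y < δ → ∀ t, dist (γ x y t) x < ε := by
  classical
  let Rad : X → X → Set ℝ := fun x y => {r | 0 < r ∧ ∃ γ : Path x y, range γ ⊆ P ∩ Metric.ball x r}
  have hRne : ∀ x ∈ P, ∀ y ∈ P, (Rad x y).Nonempty := by
    intro x hx y hy
    obtain ⟨γ, hγ⟩ := hP.joinedIn x hx y hy
    obtain ⟨r, hr⟩ := (isCompact_range γ.continuous).isBounded.subset_ball_lt 0 x
    exact ⟨r, hr.1, γ, fun p hp => ⟨by obtain ⟨t, rfl⟩ := hp; exact hγ t, hr.2 hp⟩⟩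
  have hbdd : ∀ x y, BddBelow (Rad x y) := fun x y => ⟨0, fun r hr => hr.1.le⟩
  have hex : ∀ x y, ∃ g : ℝ → X, Continuous g ∧ (x ∈ P → y ∈ P → g 0 = x ∧ g 1 = y ∧ (∀ t, g t ∈ P) ∧
      ∀ r ∈ Rad x y, ∀ t, dist (g t) x < r + dist x y) := by
    intro x y
    by_cases h : x ∈ P ∧ y ∈ P
    · by_cases hxy : x = y
      · subst hxy
        refine ⟨fun _ => x, continuous_const, fun _ _ => ⟨rfl, rfl, fun _ => h.1, fun r hr t => ?_⟩⟩
        simpa using hr.1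
      · obtain ⟨r, hr, hr'⟩ := exists_lt_of_csInf_lt (hRne x h.1 y h.2)
          (lt_add_of_pos_right (sInf (Rad x y)) (dist_pos.2 hxy))
        obtain ⟨-, γ, hγ⟩ := hr
        have hmem : ∀ t, γ.extend t ∈ P ∩ Metric.ball x r := fun t =>
          hγ (γ.extend_range ▸ ⟨t, rfl⟩)
        refine ⟨γ.extend, γ.continuous_extend, fun _ _ => ⟨γ.extend_zero, γ.extend_one,
          fun t => (hmem t).1, fun r' h' t => ?_⟩⟩
        have h1 := (hmem t).2
        have h2 := csInf_le (hbdd x y) h'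
        rw [Metric.mem_ball] at h1
        linarith
    · exact ⟨fun _ => x, continuous_const, fun hx hy => (h ⟨hx, hy⟩).elim⟩
  choose γ hγc hγ using hex
  refine ⟨γ, hγc, fun x hx y hy => ⟨(hγ x y hx hy).1, (hγ x y hx hy).2.1, (hγ x y hx hy).2.2.1⟩, ?_⟩
  intro ε hε
  obtain ⟨δ, hδ, h⟩ := hU (ε/2) (half_pos hε)
  refine ⟨min δ (ε/2), lt_min hδ (half_pos hε), fun x hx y hy hxy t => ?_⟩
  have h1 := (hγ x y hx hy).2.2.2 (ε/2) ⟨half_pos hε, h x hx y hy (hxy.trans_le (min_le_left _ _))⟩ t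
  have h2 := hxy.trans_le (min_le_right _ _)
  linarith

/-- Extension over the gaps of a closed set of reals that is unbounded in both directions. -/
lemma exists_gap_extension_aux {X : Type*} [MetricSpace X] {P : Set X} (hP : IsPathConnected P)
    (hU : ULPC P) {Z : Set ℝ} (hZ : IsClosed Z) (hlo : ∀ t, ∃ z ∈ Z, z ≤ t)
    (hhi : ∀ t, ∃ z ∈ Z, t ≤ z) {s : ℝ → X} (hs : ContinuousOn s Z) (hsP : ∀ z ∈ Z, s z ∈ P) :
    ∃ S : ℝ → X, Continuous S ∧ (∀ t, S t ∈ P) ∧ EqOn S s Z := by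
  obtain ⟨γ, hγc, hγ, hγs⟩ := hU.exists_paths hP
  have ha : ∀ t, ∃ a, IsGreatest (Z ∩ Iic t) a := fun t => by
    obtain ⟨z, hz, hzt⟩ := hlo t
    have hne : (Z ∩ Iic t).Nonempty := ⟨z, hz, hzt⟩
    have hb : BddAbove (Z ∩ Iic t) := ⟨t, fun _ h => h.2⟩
    exact ⟨_, (hZ.inter isClosed_Iic).csSup_mem hne hb, fun _ h => le_csSup hb h⟩
  have hb : ∀ t, ∃ b, IsLeast (Z ∩ Ici t) b := fun t => by
    obtain ⟨z, hz, hzt⟩ := hhi t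
    have hne : (Z ∩ Ici t).Nonempty := ⟨z, hz, hzt⟩
    have hb : BddBelow (Z ∩ Ici t) := ⟨t, fun _ h => h.2⟩
    exact ⟨_, (hZ.inter isClosed_Ici).csInf_mem hne hb, fun _ h => csInf_le hb h⟩
  choose a ha using ha
  choose b hb using hb
  have haZ : ∀ t, a t ∈ Z := fun t => (ha t).1.1
  have hbZ : ∀ t, b t ∈ Z := fun t => (hb t).1.1
  have hat : ∀ t, a t ≤ t := fun t => (ha t).1.2
  have hbt : ∀ t, t ≤ b t := fun t => (hb t).1.2
  have hau : ∀ t z, z ∈ Z → z ≤ t → z ≤ a t := fun t z hz h => (ha t).2 ⟨hz, h⟩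
  have hbu : ∀ t z, z ∈ Z → t ≤ z → b t ≤ z := fun t z hz h => (hb t).2 ⟨hz, h⟩
  let S : ℝ → X := fun t => γ (s (a t)) (s (b t)) ((t - a t) / (b t - a t))
  have hSP : ∀ t, S t ∈ P := fun t => (hγ _ (hsP _ (haZ t)) _ (hsP _ (hbZ t))).2.2 _
  have hSZ : EqOn S s Z := by
    intro z hz
    have h1 : a z = z := le_antisymm (hat z) (hau z z hz le_rfl)
    have h2 : b z = z := le_antisymm (hbu z z hz le_rfl) (hbt z)
    simp only [S, h1, h2, sub_self, zero_div]
    exact (hγ _ (hsP _ hz) _ (hsP _ hz)).1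
  -- on the closure of a gap the extension is the chosen path
  have hgap : ∀ p ∈ Z, ∀ q ∈ Z, p < q → (∀ z ∈ Z, z ≤ p ∨ q ≤ z) →
      EqOn S (fun t => γ (s p) (s q) ((t - p) / (q - p))) (Icc p q) := by
    intro p hp q hq hpq hno t ht
    have hpath := hγ _ (hsP _ hp) _ (hsP _ hq)
    rcases ht.1.eq_or_lt with rfl | h1
    · simp only [sub_self, zero_div]; rw [hSZ hp, hpath.1]
    rcases ht.2.eq_or_lt with rfl | h2
    · simp only; rw [div_self (sub_pos.2 hpq).ne', hSZ hq, hpath.2.1]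
    have ea : a t = p := le_antisymm ((hno _ (haZ t)).resolve_right
      (fun h => absurd (h.trans (hat t)) (not_le.2 h2))) (hau t p hp h1.le)
    have eb : b t = q := le_antisymm (hbu t q hq h2.le) ((hno _ (hbZ t)).resolve_left
      (fun h => absurd ((hbt t).trans h) (not_le.2 h1)))
    simp only [S, ea, eb]
  have hgapc : ∀ p q, Continuous (fun t : ℝ => γ (s p) (s q) ((t - p) / (q - p))) := fun p q =>
    (hγc _ _).comp ((continuous_id.sub continuous_const).div_const _)
  -- points of `Z` accumulated from one side
  have hacc : ∀ t ∈ Z, ∀ ε > 0, ∃ d > 0, ∀ u p q, p ∈ Z → q ∈ Z → |p - t| < d → |q - t| < d →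
      p ≤ u → u ≤ q → dist (S u) (S t) < ε := by
    intro t ht ε hε
    obtain ⟨η, hη, hη'⟩ := hγs (ε/2) (half_pos hε)
    obtain ⟨d, hd, hd'⟩ := Metric.continuousOn_iff.1 hs t ht (min (η/2) (ε/2)) (by positivity)
    refine ⟨d, hd, fun u p q hp hq hpt hqt hpu huq => ?_⟩
    have hp1 := abs_lt.1 hpt
    have hq1 := abs_lt.1 hqt
    have h1 := hau u p hp hpu
    have h2 := hbu u q hq huq
    have h3 := hat u
    have h4 := hbt u
    have d1 := hd' (a u) (haZ u) (by rw [Real.dist_eq, abs_lt]; constructor <;> linarith)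
    have d2 := hd' (b u) (hbZ u) (by rw [Real.dist_eq, abs_lt]; constructor <;> linarith)
    have d3 := hη' _ (hsP _ (haZ u)) _ (hsP _ (hbZ u)) (by
      have := dist_triangle_right (s (a u)) (s (b u)) (s t)
      have e1 := d1.trans_le (min_le_left _ _)
      have e2 := d2.trans_le (min_le_left _ _)
      linarith) ((u - a u) / (b u - a u))
    rw [hSZ ht]
    have := dist_triangle (S u) (s (a u)) (s t)
    have e1 := d1.trans_le (min_le_right _ _)
    change dist (S u) _ < _ at d3
    linarith
  refine ⟨S, continuous_iff_continuousAt.2 fun t => ?_, hSP, hSZ⟩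
  by_cases ht : t ∈ Z
  · rw [continuousAt_iff_continuous_left_right]
    constructor
    · by_cases hiso : ∃ z ∈ Z, z < t ∧ ∀ z' ∈ Z, z' ≤ z ∨ t ≤ z'
      · obtain ⟨p, hp, hpt, hno⟩ := hiso
        have hE := hgap p hp t ht hpt hno
        have h1 : ContinuousWithinAt S (Icc p t) t :=
          ((hgapc p t).continuousWithinAt).congr hE (hE ⟨hpt.le, le_rfl⟩)
        exact h1.mono_of_mem_nhdsWithin (Icc_mem_nhdsLE hpt)
      · rw [Metric.continuousWithinAt_iff]
        intro ε hε
        obtain ⟨d, hd, h⟩ := hacc t ht ε hε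
        obtain ⟨z, hz, hz1, hz2⟩ : ∃ z ∈ Z, t - d < z ∧ z < t := by
          by_contra hcon
          push Not at hcon
          refine hiso ⟨a (t - d), haZ _, (hat _).trans_lt (by linarith), fun z' hz' => ?_⟩
          rcases le_or_gt z' (t - d) with h' | h'
          · exact Or.inl (hau _ _ hz' h')
          · exact Or.inr (hcon z' hz' h')
        refine ⟨t - z, by linarith, fun u hu hut => ?_⟩
        rw [Real.dist_eq, abs_lt] at hut
        exact h u z t hz ht (by rw [abs_lt]; constructor <;> linarith) (by simpa using hd)
          (by linarith) hu
    · by_cases hiso : ∃ z ∈ Z, t < z ∧ ∀ z' ∈ Z, z' ≤ t ∨ z ≤ z'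
      · obtain ⟨q, hq, hqt, hno⟩ := hiso
        have hE := hgap t ht q hq hqt hno
        have h1 : ContinuousWithinAt S (Icc t q) t :=
          ((hgapc t q).continuousWithinAt).congr hE (hE ⟨le_rfl, hqt.le⟩)
        exact h1.mono_of_mem_nhdsWithin (Icc_mem_nhdsGE hqt)
      · rw [Metric.continuousWithinAt_iff]
        intro ε hε
        obtain ⟨d, hd, h⟩ := hacc t ht ε hε
        obtain ⟨z, hz, hz1, hz2⟩ : ∃ z ∈ Z, z < t + d ∧ t < z := by
          by_contra hcon
          push Not at hcon
          refine hiso ⟨b (t + d), hbZ _, (by linarith : t < t + d).trans_le (hbt _), fun z' hz' => ?_⟩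
          rcases le_or_gt (t + d) z' with h' | h'
          · exact Or.inr (hbu _ _ hz' h')
          · exact Or.inl (hcon z' hz' h')
        refine ⟨z - t, by linarith, fun u hu hut => ?_⟩
        rw [Real.dist_eq, abs_lt] at hut
        exact h u t z ht hz (by simpa using hd) (by rw [abs_lt]; constructor <;> linarith)
          hu (by linarith)
  · have h1 : a t < t := lt_of_le_of_ne (hat t) (fun h => ht (h ▸ haZ t))
    have h2 : t < b t := lt_of_le_of_ne (hbt t) (fun h => ht (h ▸ hbZ t))
    have hE := hgap (a t) (haZ t) (b t) (hbZ t) (h1.trans h2) (fun z hz => by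
      rcases le_total z t with h | h
      · exact Or.inl (hau t z hz h)
      · exact Or.inr (hbu t z hz h))
    exact (hgapc (a t) (b t)).continuousAt.congr
      (Filter.eventuallyEq_of_mem (Icc_mem_nhds h1 h2) hE).symm

/-- A continuous map from a compact subset of the line to a path-connected, uniformly locally
path-connected set extends to the line: the gaps are filled by paths, and short gaps by small ones. -/
lemma exists_gap_extension {X : Type*} [MetricSpace X] {P : Set X} (hP : IsPathConnected P)
    (hU : ULPC P) {Z : Set ℝ} (hZ : IsCompact Z) (hne : Z.Nonempty) {s : ℝ → X}
    (hs : ContinuousOn s Z) (hsP : ∀ z ∈ Z, s z ∈ P) :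
    ∃ S : ℝ → X, Continuous S ∧ (∀ t, S t ∈ P) ∧ EqOn S s Z := by
  obtain ⟨m, hm⟩ := hZ.exists_isLeast hne
  obtain ⟨M, hM⟩ := hZ.exists_isGreatest hne
  have hmM : m ≤ M := hm.2 hM.1
  let c : ℝ → ℝ := fun t => max m (min t M)
  have hc : Continuous c := continuous_const.max (continuous_id.min continuous_const)
  have hcZ : ∀ t ∈ Z, c t = t := fun t ht => by
    simp only [c, min_eq_left (hM.2 ht), max_eq_right (hm.2 ht)]
  have hmaps : MapsTo c (Z ∪ Iic m ∪ Ici M) Z := by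
    rintro t ((ht | ht) | ht)
    · rw [hcZ t ht]; exact ht
    · have : c t = m := by
        simp only [c, min_eq_left (le_trans (mem_Iic.1 ht) hmM), max_eq_left (mem_Iic.1 ht)]
      rw [this]; exact hm.1
    · have : c t = M := by simp only [c, min_eq_right (mem_Ici.1 ht), max_eq_right hmM]
      rw [this]; exact hM.1
  obtain ⟨S, hS, hSP, hSe⟩ := exists_gap_extension_aux hP hU
    ((hZ.isClosed.union isClosed_Iic).union isClosed_Ici) (Z := Z ∪ Iic m ∪ Ici M)
    (fun t => ⟨min t m, Or.inl (Or.inr (mem_Iic.2 (min_le_right t m))), min_le_left _ _⟩)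
    (fun t => ⟨max t M, Or.inr (mem_Ici.2 (le_max_right t M)), le_max_left _ _⟩)
    (s := s ∘ c) (hs.comp hc.continuousOn hmaps) (fun z hz => hsP _ (hmaps hz))
  refine ⟨S, hS, hSP, fun z hz => ?_⟩
  rw [hSe (Or.inl (Or.inl hz)), Function.comp_apply, hcZ z hz]

/-- A self-map of a compact set `M ⊆ P` that factors through a real function extends to a self-map of
the whole space. -/
lemma exists_extension_of_factor {X : Type*} [MetricSpace X] {P : Set X} (hP : IsPathConnected P)
    (hU : ULPC P) {M : Set X} (hM : IsCompact M) (hne : M.Nonempty) (hMP : M ⊆ P) {f : M → M}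
    (hf : Continuous f) {e : M → ℝ} (he : Continuous e) (hef : ∀ x y, e x = e y → f x = f y) :
    ∃ F : X → X, Continuous F ∧ ∀ x : M, F x = f x := by
  have : CompactSpace M := isCompact_iff_compactSpace.1 hM
  have : Nonempty M := hne.to_subtype
  obtain ⟨E, hE⟩ := ContinuousMap.exists_restrict_eq hM.isClosed (⟨e, he⟩ : C(M, ℝ))
  have hE' : ∀ x : M, E x = e x := fun x => DFunLike.congr_fun hE x
  let s : ℝ → X := fun t => f (Function.invFun e t)
  have hse : ∀ x, s (e x) = f x := fun x => by
    have := hef _ _ (Function.invFun_eq (f := e) ⟨x, rfl⟩)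
    simp only [s, this]
  have hq : IsQuotientMap (rangeFactorization e) :=
    IsQuotientMap.of_surjective_continuous rangeFactorization_surjective he.rangeFactorization
  have hs : ContinuousOn s (range e) := by
    rw [continuousOn_iff_continuous_domRestrict, hq.continuous_iff]
    exact (continuous_subtype_val.comp hf).congr fun x => (hse x).symm
  obtain ⟨S, hS, -, hSe⟩ := exists_gap_extension hP hU (isCompact_range he) (range_nonempty e) hs
    (by rintro _ ⟨x, rfl⟩; rw [hse]; exact hMP (f x).2)
  refine ⟨S ∘ E, hS.comp E.continuous, fun x => ?_⟩
  rw [Function.comp_apply, hE', hSe ⟨x, rfl⟩, hse]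

/-! ### Realizing minimal sets: finite sets, subsets of the free interval, disjoint circles -/

/-- A self-map without nonempty proper closed forward-invariant subsets. -/
def IsMinimalMap {Y : Type*} [TopologicalSpace Y] (f : Y → Y) : Prop :=
  ∀ N : Set Y, IsClosed N → N.Nonempty → MapsTo f N N → N = univ

/-- Surjectivity onto `M` need not be assumed, since the image of `M` is a nonempty closed
invariant set. -/
lemma mem_MSpace_of {X : Type*} [TopologicalSpace X] [T2Space X] {M : Set X} (hM : IsCompact M)
    (hne : M.Nonempty) {F : X → X} (hF : Continuous F) (hmaps : MapsTo F M M)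
    (hmin : ∀ N ⊆ M, N.Nonempty → IsClosed N → MapsTo F N N → M ⊆ N) : M ∈ MSpace X :=
  ⟨hM, F, hF, hne, (image_subset_iff.2 hmaps).antisymm
    (hmin _ (image_subset_iff.2 hmaps) (hne.image F) (hM.image hF).isClosed
      (fun _ hx => mem_image_of_mem F (image_subset_iff.2 hmaps hx))),
    fun N hN h1 h2 h3 => hN.antisymm (hmin N hN h1 h2 (image_subset_iff.1 h3))⟩

lemma mem_MSpace_of_extension {X : Type*} [TopologicalSpace X] [T2Space X] {M : Set X}
    (hM : IsCompact M) (hne : M.Nonempty) {F : X → X} (hF : Continuous F) {f : M → M}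
    (hFf : ∀ x : M, F x = f x) (hmin : IsMinimalMap f) : M ∈ MSpace X := by
  refine mem_MSpace_of hM hne hF (fun x hx => ?_) (fun N hN hN1 hN2 hN3 x hx => ?_)
  · rw [hFf ⟨x, hx⟩]; exact Subtype.coe_prop _
  · have := hmin (Subtype.val ⁻¹' N) (hN2.preimage continuous_subtype_val)
      (by obtain ⟨y, hy⟩ := hN1; exact ⟨⟨y, hN hy⟩, hy⟩)
      (fun y hy => by rw [mem_preimage, ← hFf y]; exact hN3 hy)
    have h : (⟨x, hx⟩ : M) ∈ Subtype.val ⁻¹' N := this ▸ mem_univ _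
    exact h

open Fin.NatCast in
lemma exists_minimalMap_of_finite {Y : Type*} [TopologicalSpace Y] [Finite Y] [Nonempty Y] :
    ∃ f : Y → Y, IsMinimalMap f := by
  obtain ⟨n, ⟨e⟩⟩ := Finite.exists_equiv_fin Y
  have : NeZero n := ⟨by rintro rfl; exact (e (Classical.arbitrary Y)).elim0⟩
  refine ⟨fun y => e.symm (e y + 1), fun N _ ⟨x, hx⟩ hN => eq_univ_of_forall fun y => ?_⟩
  have key : ∀ k : ℕ, e.symm (e x + (k : Fin n)) ∈ N := by
    intro k
    induction k with
    | zero => simpa using hx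
    | succ k ih =>
      have := hN ih
      simpa [add_assoc] using this
  have h := key (e y - e x).val
  rw [Fin.cast_val_eq_self] at h
  simpa using h

/-- A compact subset of `J` lies in an arc `A ⊆ J`. A self-map of it extends to a map of `X` into `A`
by the Tietze theorem. -/
lemma exists_extension_of_subset_freeInterval {X : Type*} [MetricSpace X] {J : Set X}
    (hJ : Nonempty (J ≃ₜ Ioo (0:ℝ) 1)) {M : Set X} (hM : IsCompact M) (hne : M.Nonempty)
    (hMJ : M ⊆ J) {f : M → M} (hf : Continuous f) :
    ∃ F : X → X, Continuous F ∧ ∀ x : M, F x = f x := by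
  obtain ⟨e⟩ := hJ
  have : CompactSpace M := isCompact_iff_compactSpace.1 hM
  have : Nonempty M := hne.to_subtype
  let g : M → ℝ := fun x => e ⟨f x, hMJ (f x).2⟩
  have hg : Continuous g := continuous_subtype_val.comp (e.continuous.comp
    ((continuous_subtype_val.comp hf).subtype_mk _))
  obtain ⟨a, ha⟩ := (isCompact_range hg).exists_isLeast (range_nonempty g)
  obtain ⟨b, hb⟩ := (isCompact_range hg).exists_isGreatest (range_nonempty g)
  have hab : a ≤ b := ha.2 hb.1
  have ha0 : 0 < a := by
    obtain ⟨x, hx⟩ := ha.1; rw [← hx]; exact (e _).2.1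
  have hb1 : b < 1 := by
    obtain ⟨x, hx⟩ := hb.1; rw [← hx]; exact (e _).2.2
  obtain ⟨G, hG⟩ := ContinuousMap.exists_restrict_eq hM.isClosed (⟨g, hg⟩ : C(M, ℝ))
  have hG' : ∀ x : M, G x = g x := fun x => DFunLike.congr_fun hG x
  have hI : ∀ t : Icc a b, (t : ℝ) ∈ Ioo (0:ℝ) 1 := fun t =>
    ⟨ha0.trans_le t.2.1, t.2.2.trans_lt hb1⟩
  refine ⟨fun x => (e.symm ⟨projIcc a b hab (G x), hI _⟩ : X), ?_, fun x => ?_⟩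
  · exact continuous_subtype_val.comp (e.symm.continuous.comp
      ((continuous_subtype_val.comp (continuous_projIcc.comp G.continuous)).subtype_mk _))
  · have h1 : projIcc a b hab (G x) = ⟨g x, ha.2 ⟨x, rfl⟩, hb.2 ⟨x, rfl⟩⟩ := by
      rw [hG']; exact projIcc_of_mem hab _
    simp only [h1]
    simp [g]

/-- An irrational rotation: every nonempty closed set invariant under it is the whole circle. -/
lemma exists_irrational_rotation : ∃ w : Circle, ∀ A : Set Circle, IsClosed A → A.Nonempty →
    (∀ z ∈ A, w * z ∈ A) → A = univ := by
  have hd : DenseRange (· • ((√2 : ℝ) : AddCircle (1:ℝ)) : ℤ → AddCircle (1:ℝ)) := by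
    have : Fact ((0:ℝ) < 1) := ⟨one_pos⟩
    rw [AddCircle.denseRange_zsmul_coe_iff, div_one]
    exact irrational_sqrt_two
  have : Fact ((0:ℝ) < 1) := ⟨one_pos⟩
  rw [denseRange_zsmul_iff_nsmul] at hd
  set q : AddCircle (1:ℝ) := ((√2 : ℝ) : AddCircle (1:ℝ))
  let T := AddCircle.homeomorphCircle (T := 1) one_ne_zero
  refine ⟨T q, fun A hA hne hw => ?_⟩
  obtain ⟨z, hz⟩ := hne
  have hadd : ∀ x y, T (x + y) = T x * T y := fun x y => by
    simp only [T, AddCircle.homeomorphCircle_apply, AddCircle.toCircle_add]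
  have key : ∀ n : ℕ, T (n • q) * z ∈ A := by
    intro n
    induction n with
    | zero =>
      have : T 0 = 1 := by simp only [T, AddCircle.homeomorphCircle_apply, AddCircle.toCircle_zero]
      simpa [this] using hz
    | succ n ih =>
      have := hw _ ih
      rwa [← mul_assoc, ← hadd, ← succ_nsmul'] at this
  have h2 : DenseRange (fun n : ℕ => T (n • q) * z) := by
    have hs : Function.Surjective (fun x => T x * z) := fun y => by
      obtain ⟨x, hx⟩ := T.surjective (y * z⁻¹)
      exact ⟨x, by simp [hx]⟩
    exact hs.denseRange.comp hd (T.continuous.mul continuous_const)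
  refine eq_univ_of_univ_subset ?_
  rw [← h2.closure_range]
  exact hA.closure_subset_iff.2 (by rintro _ ⟨n, rfl⟩; exact key n)

lemma continuousOn_range_of_comp {Y X Z : Type*} [TopologicalSpace Y] [CompactSpace Y]
    [TopologicalSpace X] [T2Space X] [TopologicalSpace Z] {h : Y → X} (hh : Continuous h) {g : X → Z}
    (hg : Continuous (g ∘ h)) : ContinuousOn g (range h) := by
  have hq : IsQuotientMap (rangeFactorization h) :=
    IsQuotientMap.of_surjective_continuous rangeFactorization_surjective hh.rangeFactorization
  rw [continuousOn_iff_continuous_domRestrict, hq.continuous_iff]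
  exact hg

/-- Prescribed maps on finitely many disjoint circles extend, if circle-valued maps extend. -/
lemma exists_circles_extension {X : Type*} [MetricSpace X] [CompactSpace X] {P : Set X}
    (hP : IsPathConnected P) (hU : ULPC P)
    (hext : ∀ (A : Set X) (φ : X → Circle), IsClosed A → ContinuousOn φ A →
      ∃ Φ : X → Circle, Continuous Φ ∧ EqOn Φ φ A)
    {n : ℕ} [NeZero n] {h H : Fin n → Circle → X} (hh : ∀ i, Continuous (h i))
    (hinj : ∀ i z j w, h i z = h j w → i = j ∧ z = w) (hH : ∀ i, Continuous (H i))
    (hHP : ∀ i z, H i z ∈ P) :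
    ∃ F : X → X, Continuous F ∧ ∀ i z, F (h i z) = H i z := by
  classical
  have hcl : ∀ i, IsClosed (range (h i)) := fun i => (isCompact_range (hh i)).isClosed
  -- the index of a circle, extended to a real function `u`
  let u0 : X → ℝ := fun x => if hx : ∃ i z, h i z = x then (hx.choose : Fin n).val else 0
  have hu0 : ∀ i z, u0 (h i z) = (i : Fin n).val := by
    intro i z
    have hx : ∃ j w, h j w = h i z := ⟨i, z, rfl⟩
    obtain ⟨w, hw⟩ := hx.choose_spec
    simp only [u0, dif_pos hx, (hinj _ _ _ _ hw).1]
  have hu0c : ContinuousOn u0 (⋃ i, range (h i)) := by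
    refine (locallyFinite_of_finite _).continuousOn_iUnion hcl fun i => ?_
    refine continuousOn_range_of_comp (hh i) ?_
    exact continuous_const.congr fun z => (hu0 i z).symm
  have hucl : IsClosed (⋃ i, range (h i)) := isClosed_iUnion_of_finite hcl
  obtain ⟨u, hu⟩ := ContinuousMap.exists_restrict_eq hucl
    (⟨_, continuousOn_iff_continuous_domRestrict.1 hu0c⟩ : C(_, ℝ))
  have hu' : ∀ i z, u (h i z) = (i : Fin n).val := fun i z =>
    (DFunLike.congr_fun hu ⟨h i z, mem_iUnion.2 ⟨i, z, rfl⟩⟩).trans (hu0 i z)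
  let idx : ℝ → Fin n := fun t => if ht : ∃ i : Fin n, |t - (i.val : ℝ)| ≤ 1/3 then ht.choose else 0
  have hidx : ∀ (t : ℝ) (i : Fin n), |t - (i.val : ℝ)| ≤ 1/3 → idx t = i := by
    intro t i hi
    have ht : ∃ i : Fin n, |t - (i.val : ℝ)| ≤ 1/3 := ⟨i, hi⟩
    have h1 := ht.choose_spec
    simp only [idx, dif_pos ht]
    set j := ht.choose
    have h2 : |((j.val : ℤ) : ℝ) - ((i.val : ℤ) : ℝ)| < 1 := by
      rw [abs_le] at h1 hi
      rw [abs_lt]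
      push_cast
      constructor <;> linarith
    rw [← Int.cast_sub, ← Int.cast_abs] at h2
    have h3 : |(j.val : ℤ) - (i.val : ℤ)| < 1 := by exact_mod_cast h2
    rw [Int.abs_lt_one_iff] at h3
    apply Fin.ext; omega
  have hIcl : ∀ i : Fin n, IsClosed {t : ℝ | |t - i.val| ≤ 1/3} := fun i =>
    isClosed_le (by fun_prop) continuous_const
  let Z : Set ℝ := ⋃ i : Fin n, {t : ℝ | |t - i.val| ≤ 1/3}
  have hZ : IsCompact Z := by
    refine isCompact_iUnion fun i => ?_
    refine (isCompact_Icc (a := (i.val : ℝ) - 1/3) (b := i.val + 1/3)).of_isClosed_subset (hIcl i) ?_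
    intro t ht
    have ht : |t - (i.val : ℝ)| ≤ 1/3 := ht
    rw [abs_le] at ht
    constructor <;> linarith
  obtain ⟨Γ, hΓ, -, hΓe⟩ := exists_gap_extension hP hU hZ
    ⟨(0 : Fin n).val, mem_iUnion.2 ⟨0, by simp⟩⟩ (s := fun t => H (idx t) 1) (by
      refine (locallyFinite_of_finite _).continuousOn_iUnion hIcl fun i => ?_
      exact (continuousOn_const (c := H i 1)).congr fun t ht => by rw [hidx t i ht])
    (fun _ _ => hHP _ _)
  let N : Fin n → Set X := fun i => {x | |u x - i.val| ≤ 1/3}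
  have hN : ∀ i, IsClosed (N i) := fun i => (hIcl i).preimage u.continuous
  let Far : Set X := {x | ∀ i : Fin n, 1/3 ≤ |u x - i.val|}
  have hFar : IsClosed Far := by
    simp only [Far, ofPred_forall]
    exact isClosed_iInter fun i => isClosed_le continuous_const (by fun_prop)
  let φ : X → Circle := fun x => if hx : ∃ z i, h i z = x then hx.choose else 1
  have hφ : ∀ i z, φ (h i z) = z := by
    intro i z
    have hx : ∃ w j, h j w = h i z := ⟨z, i, rfl⟩
    obtain ⟨j, hj⟩ := hx.choose_spec
    simp only [φ, dif_pos hx, (hinj _ _ _ _ hj).2]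
  have hφF : ∀ x ∈ Far, φ x = 1 := by
    intro x hx
    refine dif_neg ?_
    rintro ⟨z, i, rfl⟩
    have := hx i
    rw [hu', sub_self, abs_zero] at this
    norm_num at this
  obtain ⟨Φ, hΦ, hΦe⟩ := hext ((⋃ i, range (h i)) ∪ Far) φ (hucl.union hFar)
    (ContinuousOn.union_of_isClosed ((locallyFinite_of_finite _).continuousOn_iUnion hcl fun i =>
      continuousOn_range_of_comp (hh i) (continuous_id.congr fun z => (hφ i z).symm))
      (continuousOn_const.congr hφF) hucl hFar)
  let F : X → X := fun x => if x ∈ ⋃ i, N i then H (idx (u x)) (Φ x) else Γ (u x)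
  have hFN : ∀ i, EqOn F (fun x => H i (Φ x)) (N i) := fun i x hx => by
    have : x ∈ ⋃ i, N i := mem_iUnion.2 ⟨i, hx⟩
    simp only [F, if_pos this, hidx _ i hx]
  have hFF : EqOn F (fun x => Γ (u x)) Far := by
    intro x hx
    by_cases hxN : x ∈ ⋃ i, N i
    · simp only [F, if_pos hxN]
      have h1 : u x ∈ Z := by
        obtain ⟨i, hi⟩ := mem_iUnion.1 hxN; exact mem_iUnion.2 ⟨i, hi⟩
      rw [hΓe h1, hΦe (Or.inr hx), hφF x hx]
    · simp only [F, if_neg hxN]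
  refine ⟨F, ?_, fun i z => ?_⟩
  · rw [← continuousOn_univ]
    have hcov : (univ : Set X) = (⋃ i, N i) ∪ Far := by
      refine (eq_univ_of_forall fun x => ?_).symm
      by_cases hx : x ∈ ⋃ i, N i
      · exact Or.inl hx
      · simp only [N, mem_iUnion, not_exists, mem_ofPred_eq, not_le] at hx
        exact Or.inr fun i => (hx i).le
    rw [hcov]
    refine ContinuousOn.union_of_isClosed ?_ ?_ (isClosed_iUnion_of_finite hN) hFar
    · refine (locallyFinite_of_finite _).continuousOn_iUnion hN fun i => ?_
      exact ((hH i).comp hΦ).continuousOn.congr (hFN i)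
    · exact (hΓ.comp u.continuous).continuousOn.congr hFF
  · have hx : h i z ∈ N i := by
      change |u (h i z) - i.val| ≤ 1/3
      rw [hu']; norm_num
    rw [hFN i hx]
    simp only
    rw [hΦe (Or.inl (mem_iUnion.2 ⟨i, z, rfl⟩)), hφ]

open Fin.NatCast in
/-- Disjoint circles `C₀, …, Cₙ₋₁` are permuted cyclically by a map whose `n`-th power is an
irrational rotation of each of them. -/
lemma FinUnionDisjCircles.mem_MSpace {X : Type*} [MetricSpace X] [CompactSpace X] {P : Set X}
    (hP : IsPathConnected P) (hU : ULPC P)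
    (hext : ∀ (A : Set X) (φ : X → Circle), IsClosed A → ContinuousOn φ A →
      ∃ Φ : X → Circle, Continuous Φ ∧ EqOn Φ φ A) {M : Set X} (hMP : M ⊆ P)
    (hM : FinUnionDisjCircles M) : M ∈ MSpace X := by
  obtain ⟨n, C, hn, hC, hdisj, rfl⟩ := hM
  have : NeZero n := ⟨hn.ne'⟩
  choose h hh hi hr using fun i => isCircleSet_iff.1 (hC i)
  have hmem : ∀ i z, h i z ∈ C i := fun i z => hr i ▸ ⟨z, rfl⟩
  have hinj : ∀ i z j w, h i z = h j w → i = j ∧ z = w := by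
    intro i z j w e
    have hij : i = j := by
      by_contra hne
      exact (hdisj hne).le_bot ⟨hmem i z, e ▸ hmem j w⟩
    subst hij
    exact ⟨rfl, hi i e⟩
  obtain ⟨w, hw⟩ := exists_irrational_rotation
  have hsub : ∀ i z, h i z ∈ ⋃ i, C i := fun i z => mem_iUnion.2 ⟨i, hmem i z⟩
  obtain ⟨F, hF, hFh⟩ := exists_circles_extension hP hU hext hh hinj
    (H := fun i z => if i + 1 = 0 then h 0 (w * z) else h (i + 1) z) (fun i => by
      by_cases e : i + 1 = 0
      · simp only [if_pos e]; exact (hh 0).comp (continuous_const.mul continuous_id)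
      · simp only [if_neg e]; exact hh _) (fun i z => by
      by_cases e : i + 1 = 0
      · simp only [if_pos e]; exact hMP (hsub _ _)
      · simp only [if_neg e]; exact hMP (hsub _ _))
  refine mem_MSpace_of (isCompact_iUnion fun i => by rw [← hr i]; exact isCompact_range (hh i))
    ⟨_, hsub 0 1⟩ hF ?_ ?_
  · intro x hx
    obtain ⟨i, hx⟩ := mem_iUnion.1 hx
    rw [← hr i] at hx
    obtain ⟨z, rfl⟩ := hx
    rw [hFh]
    split_ifs <;> exact hsub _ _
  · intro N hN hne hNc hNF
    have step : ∀ i z, i + 1 ≠ 0 → h i z ∈ N → h (i+1) z ∈ N := fun i z e hz => by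
      have := hNF hz
      rwa [hFh, if_neg e] at this
    have step0 : ∀ i z, i + 1 = 0 → h i z ∈ N → h 0 (w * z) ∈ N := fun i z e hz => by
      have := hNF hz
      rwa [hFh, if_pos e] at this
    have all : ∀ z, h 0 z ∈ N → ∀ k : ℕ, k < n → h (k : Fin n) z ∈ N := by
      intro z hz k
      induction k with
      | zero => intro _; simpa using hz
      | succ k ih =>
        intro hk
        have h1 := step (k : Fin n) z (fun e => by
          have h2 := congrArg Fin.val e
          rw [← Nat.cast_succ, Fin.val_natCast, Nat.mod_eq_of_lt hk] at h2
          simp at h2) (ih (by omega))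
        rwa [← Nat.cast_succ] at h1
    have hlast : ((n - 1 : ℕ) : Fin n) + 1 = 0 := by
      rw [← Nat.cast_succ, Nat.succ_eq_add_one, Nat.sub_add_cancel hn]; simp
    have h0 : ∃ z, h 0 z ∈ N := by
      obtain ⟨x, hx⟩ := hne
      obtain ⟨i, hxi⟩ := mem_iUnion.1 (hN hx)
      rw [← hr i] at hxi
      obtain ⟨z, rfl⟩ := hxi
      have : ∀ k : ℕ, ∃ z, h (i + (k : Fin n)) z ∈ N := by
        intro k
        induction k with
        | zero => exact ⟨z, by simpa using hx⟩
        | succ k ih =>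
          obtain ⟨z', hz'⟩ := ih
          rw [Nat.cast_succ, ← add_assoc]
          by_cases e : i + (k : Fin n) + 1 = 0
          · exact ⟨w * z', by rw [e]; exact step0 _ _ e hz'⟩
          · exact ⟨z', step _ _ e hz'⟩
      obtain ⟨z', hz'⟩ := this (-i).val
      rw [Fin.cast_val_eq_self, add_neg_cancel] at hz'
      exact ⟨z', hz'⟩
    have hA := hw (h 0 ⁻¹' N) (hNc.preimage (hh 0)) h0 (fun z hz =>
      step0 _ _ hlast (all z hz (n-1) (by omega)))
    intro x hx
    obtain ⟨i, hx⟩ := mem_iUnion.1 hx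
    rw [← hr i] at hx
    obtain ⟨z, rfl⟩ := hx
    have hz : h 0 z ∈ N := by
      have : z ∈ h 0 ⁻¹' N := hA ▸ mem_univ z
      exact this
    have := all z hz i.val i.2
    rwa [Fin.cast_val_eq_self] at this

/-! ### Minimal maps on cantoroids -/

/-- A finite approximation of a self-map of `Y`: the points coded by `v` are to be mapped into
(the closure of) `E v`. -/
structure Stage (Y : Type*) [TopologicalSpace Y] where
  /-- the finite set of codes -/
  V : Type
  finite : Finite V
  /-- the code of a point -/
  b : Y → V
  locConst : IsLocallyConstant b
  /-- the target region of the points with a given code -/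
  E : V → Set Y
  isOpen : ∀ v, IsOpen (E v)
  nonempty : ∀ v, (E v).Nonempty
  cover : ∀ y, ∃ v, y ∈ E v
  conn : ∀ v w, Relation.ReflTransGen (fun v w => ∃ y ∈ E v, b y = w) v w

/-- One code may follow another along an orbit of an approximated map. -/
def Stage.Edge {Y : Type*} [TopologicalSpace Y] (S : Stage Y) (v w : S.V) : Prop :=
  ∃ y ∈ S.E v, S.b y = w

/-- `S'` refines `S`, has target regions of diameter at most `ε`, and every infinite walk in the
graph of `S'` visits all codes of `S`. -/
def Stage.Refines {Y : Type*} [MetricSpace Y] (S S' : Stage Y) (ε : ℝ) : Prop :=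
  ∃ p : S'.V → S.V, (∀ y, p (S'.b y) = S.b y) ∧ (∀ v, S'.E v ⊆ S.E (p v)) ∧
    (∀ v, ∀ x ∈ S'.E v, ∀ y ∈ S'.E v, dist x y ≤ ε) ∧
    ∀ q : ℕ → S'.V, (∀ i, S'.Edge (q i) (q (i+1))) → ∀ v, ∃ i, p (q i) = v

lemma exists_walk {V : Type*} {r : V → V → Prop} {a b : V} (h : Relation.ReflTransGen r a b) :
    ∃ (l : ℕ) (w : ℕ → V), w 0 = a ∧ w l = b ∧ ∀ i < l, r (w i) (w (i+1)) := by
  induction h with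
  | refl => exact ⟨0, fun _ => a, rfl, rfl, by simp⟩
  | @tail c d _ hcd ih =>
    obtain ⟨l, w, h0, hl, hw⟩ := ih
    refine ⟨l+1, fun i => if i ≤ l then w i else d, by simp [h0], by simp, fun i hi => ?_⟩
    have h1 : i ≤ l := by omega
    simp only [if_pos h1]
    split_ifs with h2
    · exact hw i (by omega)
    · have : i = l := by omega
      rw [this, hl]; exact hcd

/-- In a strongly connected graph there is a walk from `a` to `b` visiting a prescribed finite set
of vertices. -/
lemma exists_walk_visiting {V : Type*} {r : V → V → Prop} (h : ∀ a b, Relation.ReflTransGen r a b)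
    (s : Finset V) (a b : V) :
    ∃ (l : ℕ) (w : ℕ → V), w 0 = a ∧ w l = b ∧ (∀ i < l, r (w i) (w (i+1))) ∧
      ∀ v ∈ s, ∃ i ≤ l, w i = v := by
  classical
  induction s using Finset.induction_on generalizing a with
  | empty =>
    obtain ⟨l, w, h⟩ := exists_walk (h a b)
    exact ⟨l, w, h.1, h.2.1, h.2.2, by simp⟩
  | insert c s _ ih =>
    obtain ⟨l, w, h0, hl, hw⟩ := exists_walk (h a c)
    obtain ⟨l', w', h0', hl', hw', hv'⟩ := ih c
    have hshift : ∀ i, (if l + i ≤ l then w (l+i) else w' (l + i - l)) = w' i := by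
      intro i
      split_ifs with h1
      · have : i = 0 := by omega
        subst this; rw [add_zero, hl, h0']
      · rw [Nat.add_sub_cancel_left]
    refine ⟨l + l', fun i => if i ≤ l then w i else w' (i - l), by simp [h0], ?_, ?_, ?_⟩
    · simp only [hshift, hl']
    · intro i hi
      by_cases h1 : i < l
      · simp only [if_pos h1.le, if_pos (show i + 1 ≤ l by omega)]
        exact hw i h1
      · obtain ⟨k, rfl⟩ : ∃ k, i = l + k := ⟨i - l, by omega⟩
        simp only [add_assoc, hshift]
        exact hw' k (by omega)
    · intro v hv
      rcases Finset.mem_insert.1 hv with rfl | hv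
      · exact ⟨l, by omega, by simp [hl]⟩
      · obtain ⟨i, hi, e⟩ := hv' v hv
        exact ⟨l + i, by omega, by simp only [hshift, e]⟩

/-- The property of cantoroids used below: small clopen sets exist near every point. -/
def ClopenInOpen (Y : Type*) [TopologicalSpace Y] : Prop :=
  ∀ O : Set Y, IsOpen O → O.Nonempty → ∃ Z ⊆ O, IsClopen Z ∧ Z.Nonempty

/-- Since there are no isolated points, the clopen sets found in finitely many open sets can be
chosen small and pairwise disjoint, even if the open sets coincide. -/
lemma exists_disjoint_clopens {Y : Type*} [MetricSpace Y]
    (hiso : NoIsolatedPoints Y) (hcl : ClopenInOpen Y) {ε : ℝ} (hε : 0 < ε) {κ : Type*} [Finite κ] {G : κ → Set Y}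
    (hG : ∀ k, IsOpen (G k)) (hne : ∀ k, (G k).Nonempty) :
    ∃ C : κ → Set Y, (∀ k, IsClopen (C k)) ∧ (∀ k, C k ⊆ G k) ∧ (∀ k, (C k).Nonempty) ∧
      (∀ k, ∀ x ∈ C k, ∀ y ∈ C k, dist x y ≤ ε) ∧ ∀ k l, ∀ y ∈ C k, y ∈ C l → k = l := by
  classical
  have := Fintype.ofFinite κ
  have hinf : ∀ k, (G k).Infinite := by
    intro k hfin
    obtain ⟨y, hy⟩ := hne k
    refine hiso y ?_
    have h1 : IsOpen (G k \ (G k \ {y})) := (hG k).sdiff (hfin.subset sdiff_subset).isClosed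
    convert h1 using 1
    ext z
    simp only [mem_singleton_iff, mem_sdiff, not_and, not_not]
    exact ⟨by rintro rfl; exact ⟨hy, fun _ => rfl⟩, fun h => h.2 h.1⟩
  choose t ht htc using fun k => (hinf k).exists_subset_card_eq (Fintype.card κ)
  obtain ⟨x, hx, hxt⟩ := (Finset.all_card_le_biUnion_card_iff_exists_injective t).1 (by
    intro s
    rcases s.eq_empty_or_nonempty with rfl | ⟨k, hk⟩
    · simp
    · calc s.card ≤ Fintype.card κ := Finset.card_le_univ s
        _ = (t k).card := (htc k).symm
        _ ≤ _ := Finset.card_le_card (Finset.subset_biUnion_of_mem t hk))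
  obtain ⟨U, hU, hUd⟩ := (finite_range x).t2_separation
  choose C hC1 hC2 hC3 using fun k => hcl (G k ∩ U (x k) ∩ Metric.ball (x k) (ε/2))
    (((hG k).inter (hU _).2).inter Metric.isOpen_ball)
    ⟨x k, ⟨ht k (hxt k), (hU _).1⟩, Metric.mem_ball_self (by positivity)⟩
  refine ⟨C, hC2, fun k y hy => (hC1 k hy).1.1, hC3, fun k y hy z hz => ?_, fun k l y h1 h2 => ?_⟩
  · have h1 := (hC1 k hy).2
    have h2 := (hC1 k hz).2
    rw [Metric.mem_ball] at h1 h2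
    linarith [dist_triangle_right y z (x k)]
  by_contra hkl
  exact (hUd ⟨k, rfl⟩ ⟨l, rfl⟩ (hx.ne hkl)).le_bot ⟨(hC1 k h1).1.2, (hC1 l h2).1.2⟩

/-- A cover by small open cells `O e`, each contained in the target region of a code `π e` and
consisting of points with a single code `j e`. -/
lemma Stage.exists_small_cover {Y : Type*} [MetricSpace Y] [CompactSpace Y] [Nonempty Y]
    (S : Stage Y) {ε : ℝ} (hε : 0 < ε) :
    ∃ (m : ℕ) (O : Fin m → Set Y) (π j : Fin m → S.V), 0 < m ∧ (∀ e, IsOpen (O e)) ∧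
      (∀ e, (O e).Nonempty) ∧ (∀ e, O e ⊆ S.E (π e)) ∧ (∀ e, ∀ y ∈ O e, S.b y = j e) ∧
      (∀ e, ∀ x ∈ O e, ∀ y ∈ O e, dist x y ≤ ε) ∧ ∀ y, ∃ e, y ∈ O e := by
  choose π hπ using S.cover
  let W : Y → Set Y := fun y => S.E (π y) ∩ Metric.ball y (ε/2) ∩ S.b ⁻¹' {S.b y}
  have hW : ∀ y, IsOpen (W y) := fun y =>
    ((S.isOpen _).inter Metric.isOpen_ball).inter (S.locConst _)
  have hWm : ∀ y, y ∈ W y := fun y => ⟨⟨hπ y, Metric.mem_ball_self (by positivity)⟩, rfl⟩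
  obtain ⟨t, ht⟩ := isCompact_univ.elim_nhds_subcover W fun y _ => (hW y).mem_nhds (hWm y)
  let g := t.equivFin.symm
  have hc : ∀ y, ∃ e, y ∈ W (g e) := by
    intro y
    obtain ⟨z, hz, hy⟩ := mem_iUnion₂.1 (ht.2 (mem_univ y))
    exact ⟨t.equivFin ⟨z, hz⟩, by simpa [g] using hy⟩
  refine ⟨t.card, fun e => W (g e), fun e => π (g e), fun e => S.b (g e), ?_, fun e => hW _,
    fun e => ⟨_, hWm _⟩, fun e y hy => hy.1.1, fun e y hy => hy.2, fun e x hx y hy => ?_, hc⟩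
  · obtain ⟨e, -⟩ := hc (Classical.arbitrary Y)
    exact e.pos
  · have h1 := hx.1.2
    have h2 := hy.1.2
    rw [Metric.mem_ball] at h1 h2
    linarith [dist_triangle_right x y (g e : Y)]

/-- For every small cell take a walk through all codes of `S` that ends at a code whose target
region contains the next cell. The steps of the walks become the new codes: they are realized by
pairwise disjoint small clopen sets, and the points outside these sets receive an entry code. An
infinite walk in the new graph traverses one of these walks completely, and hence visits all
codes of `S`. -/
lemma Stage.exists_refinement {Y : Type*} [MetricSpace Y] [CompactSpace Y] [Nonempty Y]
    (hiso : NoIsolatedPoints Y) (hcl : ClopenInOpen Y) (S : Stage Y) {ε : ℝ} (hε : 0 < ε) :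
    ∃ S' : Stage Y, S.Refines S' ε := by
  classical
  obtain ⟨m, O, π, j, hm, hO, hOne, hOE, hOj, hOd, hOc⟩ := S.exists_small_cover hε
  have : NeZero m := ⟨hm.ne'⟩
  have := S.finite
  have := Fintype.ofFinite S.V
  -- for every cell `e` a walk through all codes, from the code of the points of `O e`
  -- to the code whose region contains the next cell
  choose l w hw0 hwl hwr hwv using fun e : Fin m =>
    exists_walk_visiting S.conn Finset.univ (j e) (π (e + 1))
  let V' := {x : Fin m × ℕ // x.2 ≤ l x.1}
  have hfin : Finite V' := by
    have : Finite (Σ e : Fin m, Fin (l e + 1)) := inferInstance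
    refine Finite.of_injective
      (fun x : V' => (⟨x.1.1, ⟨x.1.2, by have := x.2; omega⟩⟩ : Σ e : Fin m, Fin (l e + 1))) ?_
    rintro ⟨⟨e, i⟩, hx⟩ ⟨⟨e', i'⟩, hx'⟩ h
    simp only [Sigma.mk.injEq] at h
    obtain ⟨rfl, h⟩ := h
    simp only [Fin.mk.injEq, heq_eq_eq] at h
    subst h; rfl
  let next : V' → V' := fun x => if h : x.1.2 < l x.1.1 then ⟨(x.1.1, x.1.2 + 1), h⟩
    else ⟨(x.1.1 + 1, 0), Nat.zero_le _⟩
  let G : V' → Set Y := fun x =>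
    if x.1.2 < l x.1.1 then S.E (w x.1.1 x.1.2) ∩ S.b ⁻¹' {w x.1.1 (x.1.2 + 1)} else O (x.1.1 + 1)
  obtain ⟨C, hCc, hCG, hCne, hCs, hCd⟩ := exists_disjoint_clopens hiso hcl hε (G := G) (fun x => by
      by_cases h : x.1.2 < l x.1.1
      · simp only [G, if_pos h]; exact (S.isOpen _).inter (S.locConst _)
      · simp only [G, if_neg h]; exact hO _) (fun x => by
      by_cases h : x.1.2 < l x.1.1
      · simp only [G, if_pos h]
        obtain ⟨y, h1, h2⟩ := hwr x.1.1 x.1.2 h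
        exact ⟨y, h1, h2⟩
      · simp only [G, if_neg h]; exact hOne _)
  choose d hd using hOc
  let p : V' → S.V := fun x => w x.1.1 x.1.2
  let start : Fin m → V' := fun e => ⟨(e, 0), Nat.zero_le _⟩
  -- an entry cell for every code
  have hdef : ∀ v : S.V, ∃ e, (∃ y, S.b y = v) → j e = v := by
    intro v
    by_cases h : ∃ y, S.b y = v
    · obtain ⟨y, hy⟩ := h
      exact ⟨d y, fun _ => by rw [← hOj _ _ (hd y), hy]⟩
    · exact ⟨0, fun h' => absurd h' h⟩
  choose D hD using hdef
  let Fn : S.V → (V' → Prop) → V' := fun v P => if h : ∃ x, P x then next h.choose else start (D v)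
  let b' : Y → V' := fun y => Fn (S.b y) (fun x => y ∈ C x)
  have hb'C : ∀ x, ∀ y ∈ C x, b' y = next x := by
    intro x y hy
    have h : ∃ x, y ∈ C x := ⟨x, hy⟩
    simp only [b', Fn, dif_pos h]
    rw [hCd _ _ y h.choose_spec hy]
  have hb'n : ∀ y, (¬ ∃ x, y ∈ C x) → b' y = start (D (S.b y)) := by
    intro y hy
    simp only [b', Fn, dif_neg hy]
  let E' : V' → Set Y := fun x => if x.1.2 < l x.1.1 then C x else
    O (x.1.1 + 1) \ ⋃ z : {z : V' // z.1.2 < l z.1.1}, C z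
  have hCE : ∀ x, C x ⊆ E' x := by
    intro x y hy
    by_cases h : x.1.2 < l x.1.1
    · simp only [E', if_pos h]; exact hy
    · have h1 := hCG x hy
      simp only [G, if_neg h] at h1
      simp only [E', if_neg h]
      refine ⟨h1, fun h2 => ?_⟩
      obtain ⟨z, hz⟩ := mem_iUnion.1 h2
      exact h (hCd _ _ y hz hy ▸ z.2)
  have hstep : ∀ x, ∃ y ∈ E' x, b' y = next x := fun x => by
    obtain ⟨y, hy⟩ := hCne x
    exact ⟨y, hCE x hy, hb'C x y hy⟩
  have hwalk : ∀ e i (hi : i ≤ l e), Relation.ReflTransGen (fun v w => ∃ y ∈ E' v, b' y = w)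
      (start e) ⟨(e, i), hi⟩ := by
    intro e i
    induction i with
    | zero => intro _; exact .refl
    | succ i ih =>
      intro hi
      refine (ih (by omega)).tail ?_
      have := hstep ⟨(e, i), by change i ≤ l e; omega⟩
      have h1 : i < l e := hi
      simpa only [next, dif_pos h1] using this
  have hto : ∀ e k i (hi : i ≤ l e), l e = i + k →
      Relation.ReflTransGen (fun v w => ∃ y ∈ E' v, b' y = w) ⟨(e, i), hi⟩ (start (e+1)) := by
    intro e k
    induction k with
    | zero =>
      intro i hi h
      have := hstep ⟨(e, i), hi⟩
      have h1 : ¬ i < l e := by omega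
      simp only [next, dif_neg h1] at this
      exact .single this
    | succ k ih =>
      intro i hi h
      have := hstep ⟨(e, i), hi⟩
      have h1 : i < l e := by omega
      simp only [next, dif_pos h1] at this
      exact .head this (ih (i+1) h1 (by omega))
  have hround : ∀ e (k : ℕ), Relation.ReflTransGen (fun v w => ∃ y ∈ E' v, b' y = w)
      (start e) (start (e + Fin.ofNat m k)) := by
    intro e k
    induction k with
    | zero => simpa using Relation.ReflTransGen.refl
    | succ k ih =>
      have h1 := (ih.trans (hto (e + Fin.ofNat m k) _ 0 (Nat.zero_le _) (by rw [zero_add])))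
      convert h1 using 2
      rw [add_assoc]
      congr 1
      apply Fin.ext
      simp [Fin.val_add]
  have hconn : ∀ x z, Relation.ReflTransGen (fun v w => ∃ y ∈ E' v, b' y = w) x z := by
    rintro ⟨⟨e, i⟩, hi⟩ ⟨⟨e', i'⟩, hi'⟩
    refine (hto e (l e - i) i hi (by have : i ≤ l e := hi; omega)).trans (.trans ?_ (hwalk e' i' hi'))
    have := hround (e+1) (e' - (e+1)).val
    rw [show Fin.ofNat m (e' - (e+1)).val = e' - (e+1) from by
      apply Fin.ext; simp [Fin.ofNat, Nat.mod_eq_of_lt]] at this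
    simpa using this
  have hpb : ∀ y, p (b' y) = S.b y := by
    intro y
    by_cases hy : ∃ x, y ∈ C x
    · obtain ⟨x, hx⟩ := hy
      rw [hb'C x y hx]
      have h1 := hCG x hx
      by_cases h : x.1.2 < l x.1.1
      · simp only [G, if_pos h] at h1
        simp only [next, dif_pos h, p]
        exact h1.2.symm
      · simp only [G, if_neg h] at h1
        simp only [next, dif_neg h, p]
        rw [hw0, hOj _ _ h1]
    · rw [hb'n y hy]
      simp only [p, start]
      rw [hw0, hD _ ⟨y, rfl⟩]
  have hEp : ∀ x, E' x ⊆ S.E (p x) := by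
    rintro ⟨⟨e, i⟩, hx⟩ y hy
    by_cases h : i < l e
    · simp only [E', if_pos h] at hy
      have h1 := hCG _ hy
      simp only [G, if_pos h] at h1
      exact h1.1
    · simp only [E', if_neg h] at hy
      have h2 : i = l e := by have : i ≤ l e := hx; omega
      subst h2
      simp only [p, hwl]
      exact hOE _ hy.1
  have hedge1 : ∀ e i (hi : i < l e) z, (∃ y ∈ E' ⟨(e, i), hi.le⟩, b' y = z) → z = ⟨(e, i+1), hi⟩ := by
    rintro e i hi z ⟨y, hy, rfl⟩
    simp only [E', if_pos hi] at hy
    rw [hb'C _ y hy]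
    simp only [next, dif_pos hi]
  have hedge2 : ∀ e i (hi : i ≤ l e) z, ¬ i < l e → (∃ y ∈ E' ⟨(e, i), hi⟩, b' y = z) →
      ∃ e', z = start e' := by
    rintro e i hi z h ⟨y, hy, rfl⟩
    simp only [E', if_neg h] at hy
    by_cases hy' : ∃ x, y ∈ C x
    · obtain ⟨x, hx⟩ := hy'
      have h2 : ¬ x.1.2 < l x.1.1 := fun h2 => hy.2 (mem_iUnion.2 ⟨⟨x, h2⟩, hx⟩)
      rw [hb'C x y hx]
      exact ⟨x.1.1 + 1, by simp only [next, dif_neg h2, start]⟩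
    · exact ⟨_, hb'n y hy'⟩
  refine ⟨⟨V', hfin, b', ?_, E', ?_, ?_, ?_, hconn⟩, p, hpb, hEp, ?_, ?_⟩
  · rw [IsLocallyConstant.iff_eventually_eq]
    intro y
    have h1 : ∀ x : V', ∀ᶠ z in 𝓝 y, (z ∈ C x) = (y ∈ C x) := by
      intro x
      by_cases hy : y ∈ C x
      · filter_upwards [(hCc x).isOpen.mem_nhds hy] with z hz
        simp [hz, hy]
      · filter_upwards [(hCc x).compl.isOpen.mem_nhds hy] with z hz
        simp only [mem_compl_iff] at hz
        simp [hz, hy]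
    filter_upwards [Filter.eventually_all.2 h1, S.locConst.eventually_eq y] with z hz hz'
    have h2 : (fun x => z ∈ C x) = fun x => y ∈ C x := funext hz
    simp only [b', hz', h2]
  · intro x
    by_cases h : x.1.2 < l x.1.1
    · simp only [E', if_pos h]; exact (hCc x).isOpen
    · simp only [E', if_neg h]
      exact (hO _).sdiff (isClosed_iUnion_of_finite fun z => (hCc _).isClosed)
  · exact fun x => (hCne x).mono (hCE x)
  · intro y
    by_cases hy : y ∈ ⋃ z : {z : V' // z.1.2 < l z.1.1}, C z
    · obtain ⟨z, hz⟩ := mem_iUnion.1 hy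
      exact ⟨z, hCE _ hz⟩
    · refine ⟨⟨(d y - 1, l (d y - 1)), le_rfl⟩, ?_⟩
      simp only [E', if_neg (lt_irrefl _), sub_add_cancel]
      exact ⟨hd y, hy⟩
  · rintro x y hy z hz
    by_cases h : x.1.2 < l x.1.1
    · simp only [E', if_pos h] at hy hz
      exact hCs x y hy z hz
    · simp only [E', if_neg h] at hy hz
      exact hOd _ y hy.1 z hz.1
  · intro q hq v
    obtain ⟨n, e, hne⟩ : ∃ n e, q n = start e := by
      have : ∀ k n e i (hi : i ≤ l e), l e = i + k → q n = ⟨(e, i), hi⟩ → ∃ n e, q n = start e := by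
        intro k
        induction k with
        | zero =>
          intro n e i hi h hqn
          have h1 := hq n
          rw [hqn] at h1
          obtain ⟨e', he'⟩ := hedge2 e i hi _ (by omega) h1
          exact ⟨_, _, he'⟩
        | succ k ih =>
          intro n e i hi h hqn
          have h1 := hq n
          rw [hqn] at h1
          have h2 : i < l e := by omega
          exact ih (n+1) e (i+1) h2 (by omega) (hedge1 e i h2 _ h1)
      exact this _ 0 _ _ (q 0).2 (Nat.add_sub_of_le (q 0).2).symm rfl
    have hrun : ∀ i (hi : i ≤ l e), q (n + i) = ⟨(e, i), hi⟩ := by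
      intro i
      induction i with
      | zero => intro _; exact hne
      | succ i ih =>
        intro hi
        have h1 := hq (n + i)
        rw [ih (by omega)] at h1
        exact hedge1 e i hi _ h1
    obtain ⟨i, hi, h⟩ := hwv e v (Finset.mem_univ v)
    exact ⟨n + i, by rw [hrun i hi]; exact h⟩

/-- The one-vertex stage. -/
def Stage.trivial (Y : Type*) [TopologicalSpace Y] [Nonempty Y] : Stage Y where
  V := Unit
  finite := inferInstance
  b := fun _ => ()
  locConst := IsLocallyConstant.const ()
  E := fun _ => univ
  isOpen := fun _ => isOpen_univ
  nonempty := fun _ => univ_nonempty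
  cover := fun _ => ⟨(), mem_univ _⟩
  conn := fun _ _ => .refl

/-- A compact space without isolated points in which every nonempty open set contains a nonempty
clopen set carries a minimal map, and this map factors through a subset of the line. -/
theorem exists_minimalMap_of_clopenInOpen {Y : Type*} [MetricSpace Y] [CompactSpace Y] [Nonempty Y]
    (hiso : NoIsolatedPoints Y) (hcl : ClopenInOpen Y) :
    ∃ f : Y → Y, Continuous f ∧ IsMinimalMap f ∧ ∃ e : Y → ℝ, Continuous e ∧
      ∀ x y, e x = e y → f x = f y := by
  classical
  choose! R hR using fun (k : ℕ) (S : Stage Y) =>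
    S.exists_refinement hiso hcl (ε := 1 / ((k:ℝ) + 1)) (by positivity)
  let S : ℕ → Stage Y := fun k => Nat.rec (Stage.trivial Y) (fun k S => R k S) k
  have hS : ∀ k, (S k).Refines (S (k+1)) (1 / ((k:ℝ)+1)) := fun k => hR k (S k)
  choose p hpb hpE hpd hpv using hS
  have hne : ∀ y, (⋂ k, closure ((S k).E ((S k).b y))).Nonempty := by
    intro y
    refine IsCompact.nonempty_iInter_of_sequence_nonempty_isCompact_isClosed _ (fun k => ?_)
      (fun k => ((S k).nonempty _).mono subset_closure) isClosed_closure.isCompact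
      (fun k => isClosed_closure)
    have := hpE k ((S (k+1)).b y)
    rw [hpb] at this
    exact closure_mono this
  choose f hf using hne
  have hf' : ∀ y k, f y ∈ closure ((S k).E ((S k).b y)) := fun y k => mem_iInter.1 (hf y) k
  have hdist : ∀ k, ∀ v, ∀ x ∈ closure ((S (k+1)).E v), ∀ y ∈ closure ((S (k+1)).E v),
      dist x y ≤ 1 / ((k:ℝ)+1) := by
    intro k v x hx y hy
    have h1 : Metric.diam (closure ((S (k+1)).E v)) ≤ 1 / ((k:ℝ)+1) := by
      rw [Metric.diam_closure]
      exact Metric.diam_le_of_forall_dist_le (by positivity) (hpd k v)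
    exact (Metric.dist_le_diam_of_mem isClosed_closure.isCompact.isBounded hx hy).trans h1
  have hsmall : ∀ ε > 0, ∃ k : ℕ, 1 / ((k:ℝ)+1) < ε := fun ε hε => exists_nat_one_div_lt hε
  refine ⟨f, ?_, ?_, ?_⟩
  · rw [Metric.continuous_iff']
    intro y ε hε
    obtain ⟨k, hk⟩ := hsmall ε hε
    filter_upwards [(S (k+1)).locConst.eventually_eq y] with z hz
    refine (hdist k _ _ ?_ _ (hf' y (k+1))).trans_lt hk
    rw [← hz]; exact hf' z (k+1)
  · intro N hN hNne hNf
    refine eq_univ_of_forall fun x => hN.closure_subset (Metric.mem_closure_iff.2 fun ε hε => ?_)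
    obtain ⟨k, hk⟩ := hsmall ε hε
    obtain ⟨y, hy⟩ := hNne
    have hit : ∀ i, f^[i] y ∈ N := fun i => (hNf.iterate i) hy
    obtain ⟨v, hv⟩ := (S (k+1)).cover x
    obtain ⟨i, hi⟩ := hpv (k+1) (fun i => (S (k+2)).b (f^[i] y)) (fun i => by
      have h1 := hf' (f^[i] y) (k+2)
      rw [← Function.iterate_succ_apply' f] at h1
      obtain ⟨z, hz1, hz2⟩ := mem_closure_iff.1 h1 _
        ((S (k+2)).locConst {(S (k+2)).b (f^[i+1] y)}) rfl
      exact ⟨z, hz2, hz1⟩) v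
    rw [hpb] at hi
    refine ⟨f^[i+1] y, hit _, (hdist k v _ (subset_closure hv) _ ?_).trans_lt hk⟩
    rw [Function.iterate_succ_apply', ← hi]
    exact hf' (f^[i] y) (k+1)
  · choose c hc using fun k => (have := (S k).finite; Finite.exists_equiv_fin (S k).V)
    let c' := fun k => (hc k).some
    let val : ∀ k, Y → ℕ := fun k y => (c' k ((S k).b y)).val
    have hval : ∀ k x y, val k x = val k y → (S k).b x = (S k).b y := fun k x y h =>
      (c' k).injective (Fin.ext h)
    have hloc : ∀ k, IsLocallyConstant (val k) := fun k =>
      (S k).locConst.comp (fun v => (c' k v).val)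
    let a : Y → ℕ → Bool := fun y n => decide (val n.unpair.1 y = n.unpair.2)
    refine ⟨fun y => Cardinal.cantorFunction (1/3) (a y), ?_, fun x y hxy => ?_⟩
    · unfold Cardinal.cantorFunction
      refine continuous_tsum (u := fun n : ℕ => (1/3:ℝ)^n) (fun n => ?_)
        (summable_geometric_of_lt_one (by norm_num) (by norm_num)) (fun n y => ?_)
      · have : IsLocallyConstant fun y => Cardinal.cantorFunctionAux (1/3) (a y) n :=
          (hloc n.unpair.1).comp (fun j => bif decide (j = n.unpair.2) then (1/3:ℝ)^n else 0)
        exact this.continuous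
      · unfold Cardinal.cantorFunctionAux
        cases a y n <;> simp
    · have h1 : a x = a y := Cardinal.cantorFunction_injective (by norm_num) (by norm_num) hxy
      have h2 : ∀ k, (S k).b x = (S k).b y := fun k => by
        refine hval k x y ?_
        have := congrFun h1 (Nat.pair k (val k y))
        simpa [a] using this
      refine eq_of_forall_dist_le fun ε hε => ?_
      obtain ⟨k, hk⟩ := hsmall ε hε
      refine (hdist k _ _ (hf' x (k+1)) _ ?_).trans hk.le
      have h3 := hf' y (k+1)
      rw [← h2 (k+1)] at h3; exact h3

/-- A degenerate component of a compact space is the intersection of its clopen neighbourhoods. -/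
lemma IsCantoroid.clopenInOpen {X : Type*} [TopologicalSpace X] [T2Space X] {M : Set X}
    (hM : IsCantoroid M) : ClopenInOpen M := by
  obtain ⟨hne, hc, -, hd⟩ := hM
  have : CompactSpace M := isCompact_iff_compactSpace.1 hc
  intro O hO hOne
  obtain ⟨x, hxO, hx⟩ := hd.inter_open_nonempty O hO hOne
  have hx : connectedComponent x = {x} := hx
  rw [connectedComponent_eq_iInter_isClopen] at hx
  have hne : Nonempty { s : Set M // IsClopen s ∧ x ∈ s } := ⟨⟨univ, isClopen_univ, mem_univ x⟩⟩
  obtain ⟨Z, hZ⟩ := exists_subset_nhds_of_isCompact'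
    (V := fun s : { s : Set M // IsClopen s ∧ x ∈ s } => s.1) (fun s t =>
      ⟨⟨s.1 ∩ t.1, s.2.1.inter t.2.1, s.2.2, t.2.2⟩, inter_subset_left, inter_subset_right⟩)
    (fun s => s.2.1.isClosed.isCompact) (fun s => s.2.1.isClosed) (U := O) (fun y hy => by
      rw [hx] at hy
      rw [mem_singleton_iff.1 hy]; exact hO.mem_nhds hxO)
  exact ⟨Z.1, hZ, Z.2.1, x, Z.2.2⟩

lemma IsCantorSet.isCantoroid {X : Type*} [TopologicalSpace X] {M : Set X} (hM : IsCantorSet M) :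
    IsCantoroid M := by
  obtain ⟨hne, hc, ht, hi⟩ := hM
  refine ⟨hne, hc, hi, ?_⟩
  have : TotallyDisconnectedSpace M := totallyDisconnectedSpace_subtype_iff.2 ht
  convert dense_univ
  ext x
  simp [connectedComponent_eq_singleton]

/-! ### Minimal maps: backward orbits, irreducibility, recurrence -/

section Minimal
variable {Y : Type*} [TopologicalSpace Y] {f : Y → Y}

/-- A closed set containing a full backward orbit of a minimal map is the whole space. -/
lemma IsMinimalMap.univ_of_backward [CompactSpace Y] (hmin : IsMinimalMap f) (hf : Continuous f)
    {x : ℕ → Y}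
    (hx : ∀ n, f (x (n+1)) = x n) {A : Set Y} (hA : IsClosed A) (hxA : ∀ n, x n ∈ A) : A = univ := by
  let N : Set Y := ⋂ k, closure (x '' Ici k)
  have hN : N = univ := by
    refine hmin N (isClosed_iInter fun k => isClosed_closure) ?_ ?_
    · refine IsCompact.nonempty_iInter_of_sequence_nonempty_isCompact_isClosed _ (fun k => ?_)
        (fun k => ⟨x k, subset_closure ⟨k, self_mem_Ici, rfl⟩⟩) isClosed_closure.isCompact
        (fun k => isClosed_closure)
      exact closure_mono (image_mono (Ici_subset_Ici.2 k.le_succ))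
    · intro y hy
      refine mem_iInter.2 fun k => ?_
      have h1 := mem_iInter.1 hy (k+1)
      refine closure_mono ?_ (image_closure_subset_closure_image hf (mem_image_of_mem f h1))
      rintro _ ⟨_, ⟨n, hn, rfl⟩, rfl⟩
      obtain ⟨j, rfl⟩ : ∃ j, n = j + 1 := ⟨n - 1, by have : k + 1 ≤ n := hn; omega⟩
      have hn : k + 1 ≤ j + 1 := hn
      exact ⟨j, (by omega : k ≤ j), (hx j).symm⟩
  refine eq_univ_of_univ_subset (hN ▸ (iInter_subset _ 0).trans ?_)
  exact hA.closure_subset_iff.2 (by rintro _ ⟨n, -, rfl⟩; exact hxA n)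

lemma IsMinimalMap.surjective [CompactSpace Y] [T2Space Y] (hmin : IsMinimalMap f)
    (hf : Continuous f) :
    Function.Surjective f := by
  rcases isEmpty_or_nonempty Y with h | h
  · exact fun y => (h.false y).elim
  · exact range_eq_univ.1 (hmin _ (isCompact_range hf).isClosed (range_nonempty f)
      fun y _ => mem_range_self y)

/-- Minimal maps are irreducible: if `f '' A = univ`, then some backward orbit stays in `A`. -/
lemma IsMinimalMap.irreducible [CompactSpace Y] (hmin : IsMinimalMap f) (hf : Continuous f)
    {A : Set Y}
    (hA : IsClosed A) (h : f '' A = univ) : A = univ := by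
  rcases isEmpty_or_nonempty Y with hY | ⟨⟨y⟩⟩
  · exact eq_univ_of_forall fun y => (hY.false y).elim
  have : ∀ y, ∃ a ∈ A, f a = y := fun y => by
    have : y ∈ f '' A := h ▸ mem_univ y
    exact this
  choose g hgA hg using this
  exact hmin.univ_of_backward hf (x := fun n => g^[n+1] y)
    (fun n => by rw [Function.iterate_succ_apply' g (n+1), hg]) hA
    (fun n => by rw [Function.iterate_succ_apply']; exact hgA _)

lemma IsMinimalMap.irreducible_iterate [CompactSpace Y] [T2Space Y] (hmin : IsMinimalMap f)
    (hf : Continuous f) (m : ℕ)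
    {A : Set Y} (hA : IsClosed A) (h : f^[m] '' A = univ) : A = univ := by
  induction m generalizing A with
  | zero => simpa using h
  | succ m ih =>
    rw [Function.iterate_succ, image_comp] at h
    exact hmin.irreducible hf hA (ih (hA.isCompact.image hf).isClosed h)

lemma IsMinimalMap.exists_iterate_mem (hmin : IsMinimalMap f) (hf : Continuous f) (x : Y)
    {U : Set Y} (hU : IsOpen U) (hne : U.Nonempty) : ∃ n, f^[n] x ∈ U := by
  have h : closure (range fun n => f^[n] x) = univ := by
    refine hmin _ isClosed_closure ⟨x, subset_closure ⟨0, rfl⟩⟩ fun y hy => ?_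
    refine closure_mono ?_ (image_closure_subset_closure_image hf (mem_image_of_mem f hy))
    rintro _ ⟨_, ⟨n, rfl⟩, rfl⟩
    exact ⟨n+1, Function.iterate_succ_apply' f n x⟩
  obtain ⟨y, hy⟩ := hne
  obtain ⟨_, h1, n, rfl⟩ := mem_closure_iff.1 (h ▸ mem_univ y : y ∈ closure _) U hU hy
  exact ⟨n, h1⟩

lemma IsMinimalMap.finite_of_periodic [T2Space Y] (hmin : IsMinimalMap f) {x : Y} {n : ℕ}
    (hn : 0 < n)
    (hx : f^[n] x = x) : Finite Y := by
  have hfin : ((fun k => f^[k] x) '' Iio n).Finite := (finite_Iio n).image _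
  have : (fun k => f^[k] x) '' Iio n = univ := by
    refine hmin _ hfin.isClosed ⟨x, 0, hn, rfl⟩ ?_
    rintro _ ⟨k, hk, rfl⟩
    have hk : k < n := hk
    rcases Nat.lt_or_ge (k+1) n with h | h
    · exact ⟨k+1, h, Function.iterate_succ_apply' f k x⟩
    · refine ⟨0, hn, ?_⟩
      simp only
      rw [← Function.iterate_succ_apply' f, show k.succ = n by omega, hx]; rfl
  rw [this] at hfin
  exact finite_univ_iff.1 hfin

lemma IsMinimalMap.noIsolatedPoints [T2Space Y] [Infinite Y] (hmin : IsMinimalMap f)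
    (hf : Continuous f) :
    NoIsolatedPoints Y := by
  intro y hy
  obtain ⟨n, hn⟩ := hmin.exists_iterate_mem hf (f y) hy ⟨y, rfl⟩
  have := hmin.finite_of_periodic (n := n+1) n.succ_pos (x := y) hn
  exact not_finite Y

/-- A minimal map on an infinite space admits no open set with one boundary point and
treelike closure: the iterate returning the boundary point into the open set,
followed by the retraction, would have a fixed point. -/
lemma IsMinimalMap.no_branch [CompactSpace Y] [T2Space Y] [Infinite Y] (hmin : IsMinimalMap f)
    (hf : Continuous f)
    {T : Type*} [MetricSpace T] [ConnectedSpace T] [LocallyPathConnectedSpace T]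
    (hT : ∀ C : Set T, ¬ IsCircleSet C) {B : Set Y} {q : Y} (hB : IsOpen B) (hne : B.Nonempty)
    (hq : q ∉ B) (hcl : IsClosed (insert q B)) (hconn : IsPreconnected (insert q B))
    {ι : Y → T} (hι : ContinuousOn ι (insert q B)) (hinj : InjOn ι (insert q B)) : False := by
  classical
  obtain ⟨n, hn⟩ := hmin.exists_iterate_mem hf (f q) hB hne
  have hn' : f^[n+1] q ∈ B := hn
  have : CompactSpace ↥(insert q B) := isCompact_iff_compactSpace.1 hcl.isCompact
  have : ConnectedSpace ↥(insert q B) :=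
    isConnected_iff_connectedSpace.1 ⟨⟨q, mem_insert q B⟩, hconn⟩
  let r : Y → ↥(insert q B) := fun y => if h : y ∈ B then ⟨y, mem_insert_of_mem q h⟩ else ⟨q, mem_insert q B⟩
  have hr : Continuous r := by
    rw [continuous_induced_rng, ← continuousOn_univ]
    have h1 : (univ : Set Y) = insert q B ∪ Bᶜ := by
      ext y; by_cases h : y ∈ B <;> simp [h]
    rw [h1]
    refine ContinuousOn.union_of_isClosed ?_ ?_ hcl hB.isClosed_compl
    · refine continuousOn_id.congr fun y hy => ?_
      by_cases h : y ∈ B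
      · simp [r, h]
      · rcases hy with rfl | hy
        · simp [r, h]
        · exact absurd hy h
    · refine (continuousOn_const (c := q)).congr fun y hy => ?_
      have hy : y ∉ B := hy
      simp [r, hy]
  obtain ⟨y, hy⟩ := fixed_point hT (ι := fun y : ↥(insert q B) => ι y)
    (continuousOn_iff_continuous_domRestrict.1 hι) (injOn_iff_injective.1 hinj)
    (h := fun y => r (f^[n+1] y)) (hr.comp ((hf.iterate (n+1)).comp continuous_subtype_val))
  by_cases h : f^[n+1] y ∈ B
  · have : f^[n+1] (y : Y) = y := by
      have := congrArg Subtype.val hy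
      simpa only [r, dif_pos h] using this
    have := hmin.finite_of_periodic n.succ_pos this
    exact not_finite Y
  · have h2 := congrArg Subtype.val hy
    simp only [r, dif_neg h] at h2
    rw [← h2] at h
    exact h hn'

end Minimal

/-! ### Free intervals in minimal systems -/

/-- A non-injective real function takes all its values on some open interval also outside of it.
This contradicts irreducibility when the function describes a minimal map along a free interval. -/
lemma exists_redundant_interval {g : ℝ → ℝ} (hg : Continuous g) {u v : ℝ} (huv : u < v)
    (h : g u = g v) : ∃ a b, a < b ∧ ∀ t ∈ Ioo a b, ∃ s ∉ Ioo a b, g s = g t := by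
  have key : ∀ g : ℝ → ℝ, Continuous g → ∀ c ∈ Ioo u v, IsMaxOn g (Icc u v) c →
      ∃ a b, a < b ∧ ∀ t ∈ Ioo a b, ∃ s ∉ Ioo a b, g s = g t := by
    intro g hg c hc hmax
    obtain ⟨s1, hs1, h1⟩ := isCompact_Icc.exists_isMinOn (nonempty_Icc.2 hc.1.le) hg.continuousOn
    obtain ⟨s2, hs2, h2⟩ := isCompact_Icc.exists_isMinOn (nonempty_Icc.2 hc.2.le) hg.continuousOn
    rcases le_total (g s1) (g s2) with h12 | h12
    · refine ⟨c, v, hc.2, fun t ht => ?_⟩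
      obtain ⟨s, hs, e⟩ := intermediate_value_Icc hs1.2 hg.continuousOn
        (show g t ∈ Icc (g s1) (g c) from ⟨h12.trans (h2 ⟨ht.1.le, ht.2.le⟩),
          hmax ⟨(hc.1.trans ht.1).le, ht.2.le⟩⟩)
      exact ⟨s, fun h => absurd h.1 (not_lt.2 hs.2), e⟩
    · refine ⟨u, c, hc.1, fun t ht => ?_⟩
      obtain ⟨s, hs, e⟩ := intermediate_value_Icc' hs2.1 hg.continuousOn
        (show g t ∈ Icc (g s2) (g c) from ⟨h12.trans (h1 ⟨ht.1.le, ht.2.le⟩),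
          hmax ⟨ht.1.le, (ht.2.trans hc.2).le⟩⟩)
      exact ⟨s, fun h => absurd h.2 (not_lt.2 hs.1), e⟩
  obtain ⟨c, hc, hext⟩ := exists_Ioo_extr_on_Icc huv hg.continuousOn h
  rcases hext with hm | hm
  · obtain ⟨a, b, hab, H⟩ := key (fun t => -g t) hg.neg c hc hm.neg
    exact ⟨a, b, hab, fun t ht => by simpa using H t ht⟩
  · exact key g hg c hc hm

lemma image_Icc_mem_nhds {g : ℝ → ℝ} {c d t : ℝ} (hg : ContinuousOn g (Icc c d))
    (hinj : InjOn g (Icc c d)) (ht : t ∈ Ioo c d) : g '' Icc c d ∈ 𝓝 (g t) := by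
  have hcd : c ≤ d := (ht.1.trans ht.2).le
  have htm := Ioo_subset_Icc_self ht
  rcases hg.strictMonoOn_of_injOn_Icc' hcd hinj with h | h
  · exact Filter.mem_of_superset (Icc_mem_nhds (h (left_mem_Icc.2 hcd) htm ht.1)
      (h htm (right_mem_Icc.2 hcd) ht.2)) (intermediate_value_Icc hcd hg)
  · exact Filter.mem_of_superset (Icc_mem_nhds (h htm (right_mem_Icc.2 hcd) ht.2)
      (h (left_mem_Icc.2 hcd) htm ht.1)) (intermediate_value_Icc' hcd hg)

lemma exists_small_chart {Y : Type*} [TopologicalSpace Y] {w : ℝ → Y} (hw : IsOpenEmbedding w)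
    (t : ℝ) {O : Set Y} (hO : IsOpen O) (ht : w t ∈ O) :
    ∃ w' : ℝ → Y, IsOpenEmbedding w' ∧ w' 0 = w t ∧ range w' ⊆ O := by
  obtain ⟨ε, hε, hb⟩ := Metric.isOpen_iff.1 (hO.preimage hw.continuous) t ht
  let φ := OpenPartialHomeomorph.univBall t ε
  refine ⟨w ∘ φ, hw.comp (φ.isOpenEmbedding (OpenPartialHomeomorph.univBall_source t ε)), ?_, ?_⟩
  · simp [φ]
  · rintro _ ⟨s, rfl⟩
    refine hb ?_
    have : φ s ∈ φ.target := φ.map_source (by simp [φ])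
    rwa [OpenPartialHomeomorph.univBall_target _ hε] at this

section MinimalChart
variable {Y : Type*} [TopologicalSpace Y] [CompactSpace Y] [T2Space Y] {f : Y → Y}

/-- A minimal map is injective along a free interval as long as the image stays in a free
interval. -/
lemma IsMinimalMap.injective_comp_chart (hmin : IsMinimalMap f) (hf : Continuous f) {m : ℕ}
    {w i : ℝ → Y} (hw : IsOpenEmbedding w) (hi : IsOpenEmbedding i)
    (hwi : ∀ t, f^[m] (w t) ∈ range i) : Function.Injective (fun t => f^[m] (w t)) := by
  choose g hg using hwi
  have hgc : Continuous g := by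
    rw [hi.isEmbedding.continuous_iff]
    have : i ∘ g = fun t => f^[m] (w t) := funext hg
    rw [this]
    exact (hf.iterate m).comp hw.continuous
  have key : ∀ u v, u < v → f^[m] (w u) ≠ f^[m] (w v) := by
    intro u v huv h
    rw [← hg, ← hg] at h
    obtain ⟨a, b, hab, H⟩ := exists_redundant_interval hgc huv (hi.injective h)
    have hA := hmin.irreducible_iterate hf m (A := (w '' Ioo a b)ᶜ)
      (hw.isOpenMap _ isOpen_Ioo).isClosed_compl (eq_univ_of_forall fun y => by
        obtain ⟨z, rfl⟩ := (hmin.surjective hf).iterate m y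
        by_cases hz : z ∈ w '' Ioo a b
        · obtain ⟨t, ht, rfl⟩ := hz
          obtain ⟨s, hs, e⟩ := H t ht
          refine ⟨w s, fun h => hs ?_, by rw [← hg, ← hg, e]⟩
          obtain ⟨s', hs', e'⟩ := h
          exact hw.injective e' ▸ hs'
        · exact ⟨z, hz, rfl⟩)
    have h2 : w ((a+b)/2) ∈ (w '' Ioo a b)ᶜ := hA ▸ mem_univ _
    exact h2 ⟨_, ⟨by linarith, by linarith⟩, rfl⟩
  intro u v h
  rcases lt_trichotomy u v with h1 | h1 | h1
  · exact absurd h (key u v h1)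
  · exact h1
  · exact absurd h.symm (key v u h1)

/-- Minimal maps send free intervals locally onto free intervals. -/
lemma IsMinimalMap.chart_image (hmin : IsMinimalMap f) (hf : Continuous f) {x : Y}
    (hx : ∃ w : ℝ → Y, IsOpenEmbedding w ∧ x ∈ range w) :
    ∃ w : ℝ → Y, IsOpenEmbedding w ∧ f x ∈ range w := by
  obtain ⟨i, hi, t0, rfl⟩ := hx
  obtain ⟨m, hm⟩ := hmin.exists_iterate_mem hf (f (i t0)) hi.isOpen_range (range_nonempty i)
  obtain ⟨w, hw, hw0, hwO⟩ := exists_small_chart hi t0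
    (hi.isOpen_range.preimage (hf.iterate (m+1))) hm
  have hinj := hmin.injective_comp_chart hf hw hi (m := m+1) fun t => hwO ⟨t, rfl⟩
  have hGo : IsOpenMap (fun t => f^[m+1] (w t)) := by
    choose g hg using fun t => hwO ⟨t, rfl⟩
    have hgi : Function.Injective g := fun s t h => hinj (by simp only [← hg, h])
    have hgc : Continuous g := by
      rw [hi.isEmbedding.continuous_iff]
      have : i ∘ g = fun t => f^[m+1] (w t) := funext hg
      rw [this]
      exact (hf.iterate (m+1)).comp hw.continuous
    have hgo : IsOpenMap g := by
      refine isOpenMap_iff_nhds_le.2 fun t U hU => ?_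
      obtain ⟨ε, hε, hb⟩ := Metric.nhds_basis_closedBall.mem_iff.1 (Filter.mem_map.1 hU)
      rw [Real.closedBall_eq_Icc] at hb
      exact Filter.mem_of_superset (image_Icc_mem_nhds hgc.continuousOn hgi.injOn
        ⟨by linarith, by linarith⟩) (image_subset_iff.2 hb)
    have : (fun t => f^[m+1] (w t)) = i ∘ g := (funext hg).symm
    rw [this]
    exact hi.isOpenMap.comp hgo
  have hIoo : ∀ c d, IsOpen (f '' (w '' Ioo c d)) := by
    intro c d
    let G := (fun t => f^[m+1] (w t)) '' Ioo c d
    have hG : IsOpen G := hGo _ isOpen_Ioo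
    have hK : IsClosed (f '' (w '' Icc c d)) :=
      ((isCompact_Icc.image hw.continuous).image hf).isClosed
    have hA := hmin.irreducible_iterate hf m (A := (f^[m] ⁻¹' G \ f '' (w '' Icc c d))ᶜ)
      ((hG.preimage (hf.iterate m)).sdiff hK).isClosed_compl (eq_univ_of_forall fun y => by
        by_cases hy : y ∈ G
        · obtain ⟨t, ht, rfl⟩ := hy
          exact ⟨f (w t), fun h => h.2 ⟨_, ⟨t, Ioo_subset_Icc_self ht, rfl⟩, rfl⟩, rfl⟩
        · obtain ⟨z, rfl⟩ := (hmin.surjective hf).iterate m y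
          exact ⟨z, fun h => hy h.1, rfl⟩)
    have heq : f '' (w '' Ioo c d) = f^[m] ⁻¹' G := by
      ext z
      constructor
      · rintro ⟨_, ⟨t, ht, rfl⟩, rfl⟩
        exact ⟨t, ht, rfl⟩
      · rintro hz
        have h1 : z ∈ f '' (w '' Icc c d) := by
          by_contra h
          have : z ∈ (f^[m] ⁻¹' G \ f '' (w '' Icc c d))ᶜ := hA ▸ mem_univ z
          exact this ⟨hz, h⟩
        obtain ⟨_, ⟨s, hs, rfl⟩, rfl⟩ := h1
        obtain ⟨t, ht, e⟩ := hz
        have : t = s := hinj e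
        exact ⟨_, ⟨t, ht, rfl⟩, by rw [this]⟩
    rw [heq]
    exact hG.preimage (hf.iterate m)
  refine ⟨f ∘ w, .of_continuous_injective_isOpenMap (hf.comp hw.continuous) ?_ ?_, 0, by simp [hw0]⟩
  · intro s t h
    have h : f (w s) = f (w t) := h
    exact hinj (by simp only [Function.iterate_succ_apply, h])
  · intro U hU
    rw [isOpen_iff_mem_nhds]
    rintro _ ⟨t, ht, rfl⟩
    obtain ⟨ε, hε, hb⟩ := Metric.isOpen_iff.1 hU t ht
    rw [Real.ball_eq_Ioo] at hb
    refine Filter.mem_of_superset ((hIoo (t-ε) (t+ε)).mem_nhds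
      ⟨_, ⟨t, ⟨by linarith, by linarith⟩, rfl⟩, rfl⟩) ?_
    rintro _ ⟨_, ⟨s, hs, rfl⟩, rfl⟩
    exact ⟨s, hb hs, rfl⟩

lemma IsMinimalMap.chart_everywhere (hmin : IsMinimalMap f) (hf : Continuous f)
    (h : ∃ w : ℝ → Y, IsOpenEmbedding w) (y : Y) :
    ∃ w : ℝ → Y, IsOpenEmbedding w ∧ y ∈ range w := by
  let V : Set Y := {x | ∃ w : ℝ → Y, IsOpenEmbedding w ∧ x ∈ range w}
  have hV : IsOpen V := by
    rw [isOpen_iff_mem_nhds]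
    rintro x ⟨w, hw, hx⟩
    exact Filter.mem_of_superset (hw.isOpen_range.mem_nhds hx) fun z hz => ⟨w, hw, hz⟩
  by_contra hy
  choose g hg using hmin.surjective hf
  have hback : ∀ n, g^[n] y ∈ Vᶜ := by
    intro n
    induction n with
    | zero => exact hy
    | succ n ih =>
      intro hn
      refine ih ?_
      rw [Function.iterate_succ_apply'] at hn
      have h2 := hmin.chart_image hf hn
      rwa [hg] at h2
  have h1 := hmin.univ_of_backward hf (x := fun n => g^[n] y)
    (fun n => by rw [Function.iterate_succ_apply', hg]) hV.isClosed_compl hback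
  obtain ⟨w, hw⟩ := h
  have h2 : w 0 ∈ Vᶜ := h1 ▸ mem_univ _
  exact h2 ⟨w, hw, 0, rfl⟩

end MinimalChart

/-- An infinite compact space with a minimal map and a free interval is a disjoint union of
finitely many circles. -/
theorem IsMinimalMap.circle_components {Y : Type*} [MetricSpace Y] [CompactSpace Y] [Infinite Y]
    {f : Y → Y} (hmin : IsMinimalMap f) (hf : Continuous f) (h : ∃ w : ℝ → Y, IsOpenEmbedding w)
    (y : Y) : IsOpen (connectedComponent y) ∧ IsCircleSet (connectedComponent y) := by
  have hch := hmin.chart_everywhere hf h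
  have : LocallyPathConnectedSpace Y := by
    rw [locallyPathConnectedSpace_iff_pathComponentIn_mem_nhds]
    intro x U hU hx
    obtain ⟨w, hw, t, rfl⟩ := hch x
    obtain ⟨w', hw', h0, hr⟩ := exists_small_chart hw t hU hx
    refine Filter.mem_of_superset (hw'.isOpen_range.mem_nhds ⟨0, h0⟩) ?_
    have hp : IsPathConnected (range w') := by
      rw [← image_univ]
      exact (isPathConnected_univ (X := ℝ)).image hw'.continuous
    exact hp.subset_pathComponentIn ⟨0, h0⟩ hr
  have hop : IsOpen (connectedComponent y) := isOpen_connectedComponent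
  refine ⟨hop, ?_⟩
  set Z := connectedComponent y
  obtain ⟨C, hC⟩ : ∃ C : Set Z, IsCircleSet C := by
    by_contra hno
    push Not at hno
    have : CompactSpace Z := isCompact_iff_compactSpace.1 isClosed_connectedComponent.isCompact
    have : ConnectedSpace Z := isConnected_iff_connectedSpace.1 isConnected_connectedComponent
    have : LocallyPathConnectedSpace Z := hop.locallyPathConnectedSpace
    obtain ⟨n, hn⟩ := hmin.exists_iterate_mem hf (f y) hop ⟨y, mem_connectedComponent⟩
    have hn : f^[n+1] y ∈ Z := hn
    have hmaps : ∀ z : Z, f^[n+1] z ∈ Z := by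
      have h1 : IsPreconnected (f^[n+1] '' Z) :=
        isPreconnected_connectedComponent.image _ (hf.iterate _).continuousOn
      have h2 := h1.subset_connectedComponent ⟨y, mem_connectedComponent, rfl⟩
      have h3 : connectedComponent y = connectedComponent (f^[n+1] y) := connectedComponent_eq hn
      rw [← h3] at h2
      exact fun z => h2 (mem_image_of_mem _ z.2)
    obtain ⟨x, hx⟩ := fixed_point hno (ι := id) continuous_id Function.injective_id
      (h := fun z : Z => ⟨f^[n+1] z, hmaps z⟩)
      (((hf.iterate (n+1)).comp continuous_subtype_val).subtype_mk _)
    have := hmin.finite_of_periodic n.succ_pos (congrArg Subtype.val hx)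
    exact not_finite Y
  have hC' : IsCircleSet (Subtype.val '' C) := hC.image .subtypeVal
  set C' : Set Y := Subtype.val '' C
  have hsub : C' ⊆ Z := Subtype.coe_image_subset _ _
  obtain ⟨g, hg, hgi, hgr⟩ := isCircleSet_iff.1 hC'
  have hopen : IsOpen C' := by
    rw [isOpen_iff_mem_nhds]
    intro x hx
    rw [← hgr] at hx
    obtain ⟨z, rfl⟩ := hx
    obtain ⟨w, hw, t, ht⟩ := hch (g z)
    -- compare a local parametrization of the circle with the chart
    let a : ℝ → Circle := fun s => z * Circle.exp s
    have ha : Continuous a := continuous_const.mul Circle.exp.continuous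
    have ha0 : a 0 = z := by simp [a]
    have hU : (fun s => g (a s)) ⁻¹' range w ∈ 𝓝 (0:ℝ) :=
      (hw.isOpen_range.preimage (hg.comp ha)).mem_nhds (by
        refine ⟨t, ?_⟩
        change w t = g (a 0)
        rw [ha0, ht])
    obtain ⟨ε, hε, hb⟩ := Metric.nhds_basis_closedBall.mem_iff.1 hU
    let δ := min ε 1
    have hδ : 0 < δ := lt_min hε one_pos
    have hδr : ∀ s ∈ Icc (-δ) δ, g (a s) ∈ range w := fun s hs => hb (by
      rw [Real.closedBall_eq_Icc]
      have := min_le_left ε 1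
      constructor <;> linarith [hs.1, hs.2])
    choose! k hk using hδr
    have hkc : ContinuousOn k (Icc (-δ) δ) := by
      rw [hw.isEmbedding.continuousOn_iff]
      exact ((hg.comp ha).continuousOn).congr hk
    have hki : InjOn k (Icc (-δ) δ) := by
      intro s hs s' hs' e
      have h1 : g (a s) = g (a s') := by rw [← hk s hs, ← hk s' hs', e]
      have h2 := hgi h1
      have h3 : Circle.exp s = Circle.exp s' := mul_left_cancel h2
      have hδ1 : δ ≤ 1 := min_le_right _ _
      have hpi := Real.pi_gt_three
      exact Circle.exp_injOn_Icc (a := -δ) (b := δ) (by linarith) hs hs' h3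
    have h1 := image_Icc_mem_nhds hkc hki (t := 0) ⟨by linarith, hδ⟩
    have h2 := hw.isOpenMap.image_mem_nhds h1
    rw [hk 0 ⟨by linarith, hδ.le⟩, ha0] at h2
    refine Filter.mem_of_superset h2 ?_
    rintro _ ⟨_, ⟨s, hs, rfl⟩, rfl⟩
    rw [hk s hs, ← hgr]
    exact ⟨_, rfl⟩
  have hclosed : IsClosed C' := hgr ▸ (isCompact_range hg).isClosed
  have hne : g 1 ∈ C' := hgr ▸ ⟨1, rfl⟩
  have hZ : Z ⊆ C' := by
    have h1 : Z = connectedComponent (g 1) := connectedComponent_eq (hsub hne)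
    rw [h1]
    exact IsClopen.connectedComponent_subset ⟨hclosed, hopen⟩ hne
  rw [hZ.antisymm hsub]
  exact hC'

/-! ### Nondegenerate components force a free interval -/

/-- Countably many closed sets covering a nonempty open set: one of them contains a nonempty
open subset of it. -/
lemma exists_open_subset_of_cover {Y : Type*} [MetricSpace Y] [CompactSpace Y] {κ : Type*}
    [Countable κ] {U : Set Y} (hU : IsOpen U) (hne : U.Nonempty) {F : κ → Set Y}
    (hF : ∀ k, IsClosed (F k)) (hc : U ⊆ ⋃ k, F k) :
    ∃ k, ∃ V, IsOpen V ∧ V.Nonempty ∧ V ⊆ U ∧ V ⊆ F k := by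
  have hκ : Nonempty κ := by
    obtain ⟨x, hx⟩ := hne
    exact ⟨(mem_iUnion.1 (hc hx)).choose⟩
  have hd := dense_iUnion_interior_of_closed (f := fun k => F k ∪ Uᶜ)
    (fun k => (hF k).union hU.isClosed_compl) (eq_univ_of_forall fun x => by
      by_cases hx : x ∈ U
      · obtain ⟨k, hk⟩ := mem_iUnion.1 (hc hx)
        exact mem_iUnion.2 ⟨k, Or.inl hk⟩
      · obtain ⟨k⟩ := hκ
        exact mem_iUnion.2 ⟨k, Or.inr hx⟩)
  obtain ⟨x, hxU, hx⟩ := hd.inter_open_nonempty U hU hne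
  obtain ⟨k, hk⟩ := mem_iUnion.1 hx
  refine ⟨k, U ∩ interior (F k ∪ Uᶜ), hU.inter isOpen_interior, ⟨x, hxU, hk⟩, inter_subset_left, ?_⟩
  rintro y ⟨hyU, hy⟩
  exact (interior_subset hy).resolve_right fun h => h hyU

/-- Boundary bumping: if no clopen set of the space lies in `W` and contains `y`, then the component
of `y` in the closure of `W` reaches the frontier of `W`. -/
lemma component_meets_frontier {Y : Type*} [TopologicalSpace Y] [CompactSpace Y] [T2Space Y]
    {W : Set Y} (hW : IsOpen W) (hcl : ∀ Z, IsClopen Z → Z ⊆ W → Z.Nonempty → False) {y : Y}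
    (hy : y ∈ W) : (connectedComponentIn (closure W) y ∩ frontier W).Nonempty := by
  by_contra hno
  have hyK : y ∈ closure W := subset_closure hy
  have : CompactSpace (closure W) := isCompact_iff_compactSpace.1 isClosed_closure.isCompact
  have hsub : connectedComponent (⟨y, hyK⟩ : closure W) ⊆ Subtype.val ⁻¹' W := by
    intro z hz
    by_contra hzW
    refine hno ⟨z, ?_, ?_⟩
    · rw [connectedComponentIn_eq_image hyK]; exact ⟨z, hz, rfl⟩
    · rw [hW.frontier_eq]; exact ⟨z.2, hzW⟩
  rw [connectedComponent_eq_iInter_isClopen] at hsub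
  have hne : Nonempty { s : Set (closure W) // IsClopen s ∧ ⟨y, hyK⟩ ∈ s } :=
    ⟨⟨univ, isClopen_univ, mem_univ _⟩⟩
  obtain ⟨Z, hZ⟩ := exists_subset_nhds_of_isCompact'
    (V := fun s : { s : Set (closure W) // IsClopen s ∧ ⟨y, hyK⟩ ∈ s } => s.1) (fun s t =>
      ⟨⟨s.1 ∩ t.1, s.2.1.inter t.2.1, s.2.2, t.2.2⟩, inter_subset_left, inter_subset_right⟩)
    (fun s => s.2.1.isClosed.isCompact) (fun s => s.2.1.isClosed)
    (U := Subtype.val ⁻¹' W) (fun z hz => (hW.preimage continuous_subtype_val).mem_nhds (hsub hz))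
  refine hcl (Subtype.val '' Z.1) ⟨?_, ?_⟩ (image_subset_iff.2 hZ) ⟨y, _, Z.2.2, rfl⟩
  · exact (Z.2.1.isClosed.isCompact.image continuous_subtype_val).isClosed
  · obtain ⟨O, hO, hOZ⟩ := isOpen_induced_iff.1 Z.2.1.isOpen
    have : Subtype.val '' Z.1 = O ∩ W := by
      ext z
      constructor
      · rintro ⟨z, hz, rfl⟩
        exact ⟨by rw [← hOZ] at hz; exact hz, hZ hz⟩
      · rintro ⟨hzO, hzW⟩
        exact ⟨⟨z, subset_closure hzW⟩, by rw [← hOZ]; exact hzO, rfl⟩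
    rw [this]
    exact hO.inter hW

/-- A nonempty open set contained in an arc contains a free interval. -/
lemma exists_chart_of_subset_arc {Y : Type*} [TopologicalSpace Y] [T2Space Y]
    {c : unitInterval → Y} (hc : Continuous c) (hci : Function.Injective c) {O : Set Y}
    (hO : IsOpen O) (hne : O.Nonempty) (hOc : O ⊆ range c) : ∃ w : ℝ → Y, IsOpenEmbedding w := by
  have hemb : IsClosedEmbedding c := hc.isClosedEmbedding hci
  obtain ⟨y, hy⟩ := hne
  obtain ⟨t, rfl⟩ := hOc hy
  obtain ⟨ε, hε, hb⟩ := Metric.isOpen_iff.1 (hO.preimage hc) t hy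
  -- a subinterval of `(0,1)` near `t`
  obtain ⟨a, r, hr, h0, h1, hta⟩ : ∃ a r : ℝ, 0 < r ∧ 0 ≤ a - r ∧ a + r ≤ 1 ∧
      ∀ s : ℝ, s ∈ Metric.ball a r → |s - t| < ε := by
    have ht0 := t.2.1
    have ht1 := t.2.2
    by_cases h : (t:ℝ) ≤ 1/2
    · refine ⟨t + min ε (1/2) / 2, min ε (1/2) / 2, by positivity, by linarith, ?_, ?_⟩
      · linarith [min_le_right ε (1/2)]
      · intro s hs
        rw [Real.ball_eq_Ioo] at hs
        have := min_le_left ε (1/2)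
        rw [abs_lt]; constructor <;> linarith [hs.1, hs.2]
    · refine ⟨t - min ε (1/2) / 2, min ε (1/2) / 2, by positivity, ?_, by linarith, ?_⟩
      · linarith [min_le_right ε (1/2)]
      · intro s hs
        rw [Real.ball_eq_Ioo] at hs
        have := min_le_left ε (1/2)
        rw [abs_lt]; constructor <;> linarith [hs.1, hs.2]
  let φ := OpenPartialHomeomorph.univBall a r
  have hφ : IsOpenEmbedding φ := φ.isOpenEmbedding (OpenPartialHomeomorph.univBall_source a r)
  have hφr : ∀ s, φ s ∈ Metric.ball a r := fun s => by
    have : φ s ∈ φ.target := φ.map_source (by simp [φ])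
    rwa [OpenPartialHomeomorph.univBall_target _ hr] at this
  have hφI : ∀ s, φ s ∈ unitInterval := fun s => by
    have := hφr s
    rw [Real.ball_eq_Ioo] at this
    exact ⟨by linarith [this.1], by linarith [this.2]⟩
  let ψ : ℝ → unitInterval := fun s => ⟨φ s, hφI s⟩
  have hψ : Continuous ψ := hφ.continuous.subtype_mk _
  have hψO : ∀ s, c (ψ s) ∈ O := fun s => hb (by
    rw [Metric.mem_ball, Subtype.dist_eq, Real.dist_eq]
    exact hta _ (hφr s))
  refine ⟨c ∘ ψ, .of_continuous_injective_isOpenMap (hc.comp hψ)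
    (hci.comp fun s s' h => hφ.injective (congrArg Subtype.val h)) fun V hV => ?_⟩
  have hψV : IsOpen (ψ '' V) := by
    refine isOpen_induced_iff.2 ⟨φ '' V, hφ.isOpenMap V hV, ?_⟩
    ext z
    constructor
    · rintro ⟨s, hs, h⟩; exact ⟨s, hs, Subtype.ext h⟩
    · rintro ⟨s, hs, rfl⟩; exact ⟨s, hs, rfl⟩
  obtain ⟨O', hO', h⟩ := hemb.isInducing.isOpen_iff.1 hψV
  have : c ∘ ψ '' V = O' ∩ O := by
    rw [image_comp, ← h]
    ext z
    constructor
    · rintro ⟨s, hs, rfl⟩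
      have : s ∈ ψ '' V := h ▸ hs
      obtain ⟨x, -, rfl⟩ := this
      exact ⟨hs, hψO x⟩
    · rintro ⟨hz, hzO⟩
      obtain ⟨s, rfl⟩ := hOc hzO
      exact ⟨s, hz, rfl⟩
  rw [this]
  exact hO'.inter hO

/-- The local heart of the matter: a compact connected piece `D` of an infinite minimal system,
treelike and with finitely many boundary points `B₀`, contains a free interval. -/
lemma IsMinimalMap.exists_chart_of_piece {Y : Type*} [MetricSpace Y] [CompactSpace Y] [Infinite Y]
    {f : Y → Y} (hmin : IsMinimalMap f) (hf : Continuous f)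
    {T : Type*} [MetricSpace T] [ConnectedSpace T] [LocallyPathConnectedSpace T]
    (hT : ∀ C : Set T, ¬ IsCircleSet C) {D B₀ : Set Y} (hD : IsClosed D) (hDc : IsPreconnected D)
    (hB₀ : B₀.Finite) (hBne : B₀.Nonempty) (hBD : B₀ ⊆ D) (hop : IsOpen (D \ B₀))
    (hne : (D \ B₀).Nonempty) {ι : Y → T} (hι : ContinuousOn ι D) (hinj : InjOn ι D) :
    ∃ w : ℝ → Y, IsOpenEmbedding w := by
  have hDcp := hD.isCompact
  have hcD : CompactSpace D := isCompact_iff_compactSpace.1 hDcp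
  let e : D → T := fun x => ι x
  have he : IsClosedEmbedding e :=
    (continuousOn_iff_continuous_domRestrict.1 hι).isClosedEmbedding
      fun x y h => Subtype.ext (hinj x.2 y.2 h)
  have hsegD : ∀ x ∈ D, ∀ y ∈ D, seg (ι x) (ι y) ⊆ ι '' D := fun x hx y hy =>
    seg_subset (hDc.image _ hι) ⟨x, hx, rfl⟩ ⟨y, hy, rfl⟩
  -- no point of `D` separates another point from the whole boundary
  have key : ∀ q ∈ D, ∀ y ∈ D, y ≠ q → ∃ b ∈ B₀, ι q ∉ seg (ι y) (ι b) := by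
    intro q hq y hy hyq
    by_contra! hcon
    set B : Set Y := {z | z ∈ D ∧ ι q ∉ seg (ι y) (ι z)} with hB
    have hqB : q ∉ B := fun h => h.2 right_mem_seg
    have hyB : y ∈ B := ⟨hy, by
      rw [seg_self]; exact fun h => hyq (hinj hy hq (mem_singleton_iff.1 h).symm)⟩
    have hBo : IsOpen B := by
      have h1 : B = (D \ B₀) ∩ ι ⁻¹' {x | ι q ∈ seg (ι y) x}ᶜ := by
        ext z
        constructor
        · rintro ⟨h1, h2⟩
          exact ⟨⟨h1, fun h => h2 (hcon z h)⟩, h2⟩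
        · rintro ⟨h1, h2⟩
          exact ⟨h1.1, h2⟩
      rw [h1]
      exact (hι.mono sdiff_subset).isOpen_inter_preimage hop
        (isClosed_setOf_mem_seg _ _).isOpen_compl
    have hcl : IsClosed (insert q B) := by
      have hO : IsOpen {x : T | x ≠ ι q ∧ ι q ∈ seg (ι y) x} := by
        rw [isOpen_iff_mem_nhds]
        rintro x ⟨hx, hqx⟩
        obtain ⟨S, hS1, hS3, hS2, hS4⟩ := exists_connected_nhd x (dist_pos.2 hx)
        replace hS4 : ι q ∉ S := fun h => by
          have := hS4 h
          rw [Metric.mem_ball, dist_comm] at this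
          exact lt_irrefl _ this
        refine Filter.mem_of_superset (hS1.mem_nhds hS3) fun x' hx' =>
          ⟨fun h => hS4 (h ▸ hx'), ?_⟩
        rcases seg_subset_union hT x' hqx with h | h
        · exact h
        · exact absurd (seg_subset hS2 hx' hS3 h) hS4
      have h1 : insert q B = D ∩ ι ⁻¹' {x : T | x ≠ ι q ∧ ι q ∈ seg (ι y) x}ᶜ := by
        ext z
        constructor
        · rintro (rfl | ⟨h1, h2⟩)
          · exact ⟨hq, fun h => h.1 rfl⟩
          · exact ⟨h1, fun h => h2 h.2⟩
        · rintro ⟨h1, h2⟩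
          by_cases hzq : z = q
          · exact Or.inl hzq
          · exact Or.inr ⟨h1, fun h => h2 ⟨fun h' => hzq (hinj h1 hq h'), h⟩⟩
      rw [h1]
      exact hι.preimage_isClosed_of_isClosed hD hO.isClosed_compl
    have hconn : IsPreconnected (insert q B) := by
      have hsub : insert q B ⊆ D := insert_subset hq fun z h => h.1
      have h1 : IsPreconnected (e '' (Subtype.val ⁻¹' insert q B)) := by
        refine isPreconnected_of_forall (ι q) ?_
        rintro _ ⟨z, hz, rfl⟩
        refine ⟨seg (ι z) (ι q), ?_, right_mem_seg, left_mem_seg, seg_isPreconnected hT⟩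
        intro u hu
        obtain ⟨u, huD, rfl⟩ := hsegD z z.2 q hq hu
        refine ⟨⟨u, huD⟩, ?_, rfl⟩
        by_cases huq : u = q
        · exact Or.inl huq
        refine Or.inr ⟨huD, fun hqu => ?_⟩
        rcases hz with hz | hz
        · rw [hz, seg_self] at hu
          exact huq (hinj huD hq hu)
        · rcases seg_subset_union hT (ι z) hqu with h | h
          · exact hz.2 h
          · refine huq (hinj huD hq (seg_antisymm hT (w := ι z) ?_ ?_))
            · rwa [seg_comm]
            · rwa [seg_comm]
      rw [he.isInducing.isPreconnected_image, ← IsInducing.subtypeVal.isPreconnected_image,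
        Subtype.image_preimage_coe, inter_eq_right.2 hsub] at h1
      exact h1
    have hsub : insert q B ⊆ D := insert_subset hq fun z h => h.1
    exact hmin.no_branch hf hT hBo ⟨y, hyB⟩ hqB hcl hconn (hι.mono hsub) (hinj.mono hsub)
  obtain ⟨b₀, hb₀⟩ := hBne
  set A : Set T := ⋃ b ∈ B₀, seg (ι b) (ι b₀) with hA
  have hAD : A ⊆ ι '' D := iUnion₂_subset fun b hb => hsegD b (hBD hb) b₀ (hBD hb₀)
  have hAcl : IsClosed A := hB₀.isClosed_biUnion fun b _ => (seg_isCompact hT).isClosed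
  have hAc : IsPreconnected A := isPreconnected_of_forall (ι b₀) fun z hz => by
    obtain ⟨b, hb, hz⟩ := mem_iUnion₂.1 hz
    exact ⟨_, subset_biUnion_of_mem (u := fun b => seg (ι b) (ι b₀)) hb, right_mem_seg, hz,
      seg_isPreconnected hT⟩
  have hcover : ∀ y ∈ D, ι y ∈ A := by
    intro y hy
    by_contra hyA
    obtain ⟨g, hgA, hg⟩ := exists_gate hT hAcl hAc
      ⟨ι b₀, mem_iUnion₂.2 ⟨b₀, hb₀, left_mem_seg⟩⟩ (ι y)
    obtain ⟨q, hq, rfl⟩ := hAD hgA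
    obtain ⟨b, hb, hqb⟩ := key q hq y hy fun h => hyA (h ▸ hgA)
    exact hqb (hg _ (mem_iUnion₂.2 ⟨b, hb, left_mem_seg⟩))
  have : Finite B₀ := hB₀
  obtain ⟨b, O, hO, hOne, hOD, hOb⟩ := exists_open_subset_of_cover hop hne
    (F := fun b : B₀ => D ∩ ι ⁻¹' seg (ι b) (ι b₀))
    (fun b => hι.preimage_isClosed_of_isClosed hD (seg_isCompact hT).isClosed) (fun y hy => by
      obtain ⟨b, hb, hz⟩ := mem_iUnion₂.1 (hcover y hy.1)
      exact mem_iUnion.2 ⟨⟨b, hb⟩, hy.1, hz⟩)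
  by_cases hbb : ι b = ι b₀
  · exfalso
    obtain ⟨y, hy⟩ := hOne
    refine hmin.noIsolatedPoints hf y ?_
    have : O = {y} := by
      refine (subset_singleton_iff.2 fun z hz => ?_).antisymm (singleton_subset_iff.2 hy)
      have h1 := (hOb hz).2
      have h2 := (hOb hy).2
      rw [mem_preimage, hbb, seg_self, mem_singleton_iff] at h1 h2
      exact hinj (hOb hz).1 (hOb hy).1 (h1.trans h2.symm)
    rwa [← this]
  · obtain ⟨δ, hδ⟩ := exists_arc hbb
    have hr := range_eq_seg hT δ hδ
    have hmem : ∀ t, ∃ z : D, e z = δ t := fun t => by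
      obtain ⟨z, hz, h⟩ := hsegD b (hBD b.2) b₀ (hBD hb₀) (hr ▸ mem_range_self t)
      exact ⟨⟨z, hz⟩, h⟩
    choose c hc using hmem
    have hcc : Continuous c := by
      rw [he.isInducing.continuous_iff, show e ∘ c = δ from funext hc]
      exact δ.continuous
    refine exists_chart_of_subset_arc (c := fun t => (c t : Y)) (continuous_subtype_val.comp hcc)
      (fun s t h => hδ ?_) hO hOne ?_
    · rw [← hc, ← hc, Subtype.ext h]
    · intro z hz
      have h1 := (hOb hz).2
      rw [mem_preimage, ← hr] at h1
      obtain ⟨t, ht⟩ := h1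
      exact ⟨t, hinj (c t).2 (hOb hz).1 (by rw [← ht]; exact hc t)⟩

/-- An infinite minimal system with a nonempty open set that embeds into a circle-free space, has
small open sets with finite frontier and contains no degenerate component has a free interval. -/
lemma IsMinimalMap.exists_chart {Y : Type*} [MetricSpace Y] [CompactSpace Y] [Infinite Y]
    {f : Y → Y} (hmin : IsMinimalMap f) (hf : Continuous f)
    {T : Type*} [MetricSpace T] [ConnectedSpace T] [LocallyPathConnectedSpace T]
    (hT : ∀ C : Set T, ¬ IsCircleSet C) {U : Set Y} (hU : IsOpen U) (hne : U.Nonempty)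
    {ι : Y → T} (hι : ContinuousOn ι U) (hinj : InjOn ι U) (hreg : RegularOn U)
    (hnd : ∀ y ∈ U, connectedComponent y ≠ {y}) : ∃ w : ℝ → Y, IsOpenEmbedding w := by
  let F : ℕ → Set Y := fun n => {y | 1 / ((n:ℝ) + 1) ≤ Metric.diam (connectedComponent y)}
  obtain ⟨n, V, hV, ⟨p, hpV⟩, hVU, hVF⟩ := exists_open_subset_of_cover hU hne
    (F := fun n => closure (F n)) (fun n => isClosed_closure) (fun y hy => by
      have h1 : 0 < Metric.diam (connectedComponent y) := by
        refine Metric.diam_pos ?_ isClosed_connectedComponent.isCompact.isBounded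
        by_contra h
        rw [not_nontrivial_iff] at h
        exact hnd y hy (h.eq_singleton_of_mem mem_connectedComponent)
      obtain ⟨n, hn⟩ := exists_nat_one_div_lt h1
      exact mem_iUnion.2 ⟨n, subset_closure hn.le⟩)
  obtain ⟨r, hr, hrV⟩ := Metric.nhds_basis_closedBall.mem_iff.1 (hV.mem_nhds hpV)
  set ρ := min r (1 / ((n:ℝ) + 1) / 4) with hρ
  have hρ0 : 0 < ρ := by positivity
  obtain ⟨W, hW, hpW, hWb, hWf⟩ := hreg p (hVU hpV) (Metric.ball p ρ) Metric.isOpen_ball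
    (Metric.mem_ball_self hρ0)
  have hKV : closure W ⊆ V := fun z hz => hrV
    (Metric.closedBall_subset_closedBall (min_le_left _ _)
      (closure_minimal (hWb.trans Metric.ball_subset_closedBall) Metric.isClosed_closedBall hz))
  have hbump : ∀ y ∈ W, (connectedComponentIn (closure W) y ∩ frontier W).Nonempty := by
    refine fun y hy => component_meets_frontier hW (fun Z hZ hZW hZne => ?_) hy
    obtain ⟨z, hz⟩ := hZne
    obtain ⟨z', hz'Z, hz'F⟩ := mem_closure_iff.1 (hVF (hKV (subset_closure (hZW hz)))) Z
      hZ.isOpen hz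
    have h1 : connectedComponent z' ⊆ Metric.ball p ρ :=
      (hZ.connectedComponent_subset hz'Z).trans (hZW.trans hWb)
    have h2 : Metric.diam (connectedComponent z') ≤ 2 * ρ :=
      (Metric.diam_mono h1 Metric.isBounded_ball).trans (Metric.diam_ball hρ0.le)
    have h3 : 1 / ((n:ℝ) + 1) ≤ Metric.diam (connectedComponent z') := hz'F
    have h4 : ρ ≤ 1 / ((n:ℝ) + 1) / 4 := min_le_right _ _
    have h5 : 0 < 1 / ((n:ℝ) + 1) := by positivity
    linarith
  have hcompcl : ∀ y, IsClosed (connectedComponentIn (closure W) y) :=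
    fun y => by
      by_cases hy : y ∈ closure W
      · rw [connectedComponentIn_eq_image hy]
        exact isClosed_closure.isClosedEmbedding_subtypeVal.isClosedMap _
          isClosed_connectedComponent
      · rw [connectedComponentIn_eq_empty hy]; exact isClosed_empty
  set D := connectedComponentIn (closure W) p with hDdef
  have hpD : p ∈ D := mem_connectedComponentIn (subset_closure hpW)
  have hDK : D ⊆ closure W := connectedComponentIn_subset _ _
  have hDB : D \ (D ∩ frontier W) =
      W \ ⋃ b ∈ frontier W \ D, connectedComponentIn (closure W) b := by
    ext y
    constructor
    · rintro ⟨hyD, hyB⟩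
      refine ⟨?_, fun h => ?_⟩
      · by_contra hyW
        refine hyB ⟨hyD, ?_⟩
        rw [hW.frontier_eq]
        exact ⟨hDK hyD, hyW⟩
      · obtain ⟨b, hb, hyb⟩ := mem_iUnion₂.1 h
        refine hb.2 ?_
        rw [hDdef, connectedComponentIn_eq hyD, ← connectedComponentIn_eq hyb]
        exact mem_connectedComponentIn (frontier_subset_closure hb.1)
    · rintro ⟨hyW, hy⟩
      obtain ⟨b, hb, hbf⟩ := hbump y hyW
      refine ⟨?_, fun h => ?_⟩
      · have hbD : b ∈ D := by
          by_contra hbD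
          refine hy (mem_iUnion₂.2 ⟨b, ⟨hbf, hbD⟩, ?_⟩)
          rw [← connectedComponentIn_eq hb]
          exact mem_connectedComponentIn (subset_closure hyW)
        rw [hDdef, connectedComponentIn_eq hbD, ← connectedComponentIn_eq hb]
        exact mem_connectedComponentIn (subset_closure hyW)
      · have := h.2
        rw [hW.frontier_eq] at this
        exact this.2 hyW
  have hop : IsOpen (D \ (D ∩ frontier W)) := by
    rw [hDB]
    exact hW.sdiff ((hWf.subset sdiff_subset).isClosed_biUnion fun b _ => hcompcl b)
  refine hmin.exists_chart_of_piece hf hT (hcompcl p) isPreconnected_connectedComponentIn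
    (hWf.subset inter_subset_right) (hbump p hpW) inter_subset_left hop ⟨p, hpD, fun h => ?_⟩
    (hι.mono fun z hz => hVU (hKV (hDK hz))) (hinj.mono fun z hz => hVU (hKV (hDK hz)))
  have := h.2
  rw [hW.frontier_eq] at this
  exact this.2 hpW

/-! ### Infinite minimal sets in a union of two local dendrites -/

lemma IsLocalDendrite.finite_circles {X : Type*} [TopologicalSpace X] {L : Set X}
    (hL : IsLocalDendrite L) : {C : Set L | IsCircleSet C}.Finite := by
  refine Finite.of_finite_image (f := fun C => Subtype.val '' C) (hL.2.2.2.subset ?_)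
    (image_injective.2 Subtype.val_injective).injOn
  rintro _ ⟨C, hC, rfl⟩
  exact ⟨Subtype.coe_image_subset _ _, hC.image IsEmbedding.subtypeVal⟩

/-- A minimal set with nondegenerate components in an open piece lying in a local dendrite has a
free interval. -/
lemma IsLocalDendrite.exists_chart {X : Type*} [MetricSpace X] {L M : Set X}
    (hL : IsLocalDendrite L) (hM : IsCompact M) [Infinite M] {f : M → M} (hmin : IsMinimalMap f)
    (hf : Continuous f) {V : Set M} (hV : IsOpen V) (hne : V.Nonempty)
    (hVL : ∀ y ∈ V, (y : X) ∈ L) (hnd : ∀ y ∈ V, connectedComponent y ≠ {y}) :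
    ∃ w : ℝ → M, IsOpenEmbedding w := by
  classical
  have : CompactSpace M := isCompact_iff_compactSpace.1 hM
  have : CompactSpace L := isCompact_iff_compactSpace.1 hL.1
  have : LocallyConnectedSpace L := hL.2.2.1
  have : LocallyPathConnectedSpace L := locallyPathConnectedSpace_of_peano
  have hfin := hL.finite_circles
  obtain ⟨p, hp⟩ := hne
  obtain ⟨U, hU, hpU, hUc, -, hUC⟩ := exists_circleFree_nhd hfin ⟨p, hVL p hp⟩ one_pos
  have : ConnectedSpace U := isConnected_iff_connectedSpace.1 ⟨⟨_, hpU⟩, hUc⟩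
  have : LocallyPathConnectedSpace U := hU.locallyPathConnectedSpace
  obtain ⟨O, hO, rfl⟩ := isOpen_induced_iff.1 hU
  let ι : M → ↥((Subtype.val : L → X) ⁻¹' O) := fun y =>
    if h : (y : X) ∈ L ∧ (y : X) ∈ O then ⟨⟨y, h.1⟩, h.2⟩ else ⟨_, hpU⟩
  let V' : Set M := V ∩ Subtype.val ⁻¹' O
  have hV' : IsOpen V' := hV.inter (hO.preimage continuous_subtype_val)
  have hιv : ∀ y ∈ V', (((ι y : L)) : X) = y := fun y hy => by
    have h : (y : X) ∈ L ∧ (y : X) ∈ O := ⟨hVL y hy.1, hy.2⟩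
    simp only [ι, dif_pos h]
  have hemb : IsEmbedding
      (fun z : ↥((Subtype.val : L → X) ⁻¹' O) => ((z : L) : X)) :=
    IsEmbedding.subtypeVal.comp IsEmbedding.subtypeVal
  have hι : ContinuousOn ι V' := by
    rw [hemb.continuousOn_iff]
    exact continuous_subtype_val.continuousOn.congr hιv
  have hinj : InjOn ι V' := fun x hx y hy h => by
    rw [Subtype.ext_iff, ← hιv x hx, ← hιv y hy, h]
  refine hmin.exists_chart hf hUC hV' ⟨p, hp, hpU⟩ hι hinj ?_ fun y hy => hnd y hy.1
  intro x hx G hG hxG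
  obtain ⟨r, hr, hrG⟩ := Metric.nhds_basis_closedBall.mem_iff.1
    ((hG.inter hV').mem_nhds ⟨hxG, hx⟩)
  obtain ⟨W, hW, hxW, hWb, hWf⟩ := regularOn_of_finite_circles hfin ⟨x, hVL x hx.1⟩ (mem_univ _)
    (Metric.ball ⟨x, hVL x hx.1⟩ r) Metric.isOpen_ball (Metric.mem_ball_self hr)
  obtain ⟨W₁, hW₁, rfl⟩ := isOpen_induced_iff.1 hW
  have hWo : IsOpen (Metric.ball x r ∩ Subtype.val ⁻¹' W₁) :=
    Metric.isOpen_ball.inter (hW₁.preimage continuous_subtype_val)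
  refine ⟨Metric.ball x r ∩ Subtype.val ⁻¹' W₁, hWo, ⟨Metric.mem_ball_self hr, hxW⟩,
    fun y hy => (hrG (Metric.ball_subset_closedBall hy.1)).1, ?_⟩
  refine ((hWf.image Subtype.val).preimage (f := (Subtype.val : M → X))
    Subtype.val_injective.injOn).subset fun y hy => ?_
  have hycl := frontier_subset_closure hy
  have hyr : y ∈ Metric.closedBall x r :=
    closure_minimal (inter_subset_left.trans Metric.ball_subset_closedBall)
      Metric.isClosed_closedBall hycl
  have hyL : (y : X) ∈ L := hVL y (hrG hyr).2.1
  refine ⟨⟨y, hyL⟩, ?_, rfl⟩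
  rw [hW.frontier_eq]
  refine ⟨?_, fun h => ?_⟩
  · rw [IsInducing.subtypeVal.closure_eq_preimage_closure_image]
    have h1 := image_closure_subset_closure_image continuous_subtype_val
      (mem_image_of_mem (Subtype.val : M → X) hycl)
    refine closure_mono ?_ h1
    rintro _ ⟨z, hz, rfl⟩
    exact ⟨⟨z, hVL z (hrG (Metric.ball_subset_closedBall hz.1)).2.1⟩, hz.2, rfl⟩
  · rw [hWo.frontier_eq] at hy
    exact hy.2 ⟨hWb h, h⟩

/-- An infinite minimal set in the union of two local dendrites is a cantoroid or a disjoint union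
of finitely many circles. -/
theorem cantoroid_or_circles {X : Type*} [MetricSpace X] {L R M : Set X}
    (hL : IsLocalDendrite L) (hR : IsLocalDendrite R) (hM : IsCompact M) (hMP : M ⊆ L ∪ R)
    [Infinite M] {f : M → M} (hmin : IsMinimalMap f) (hf : Continuous f) :
    IsCantoroid M ∨ FinUnionDisjCircles M := by
  have : CompactSpace M := isCompact_iff_compactSpace.1 hM
  by_cases hd : Dense {x : M | connectedComponent x = {x}}
  · obtain ⟨x⟩ : Nonempty M := inferInstance
    exact Or.inl ⟨⟨x, x.2⟩, hM, hmin.noIsolatedPoints hf, hd⟩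
  right
  have hw : ∃ w : ℝ → M, IsOpenEmbedding w := by
    set U : Set M := (closure {x : M | connectedComponent x = {x}})ᶜ with hUdef
    have hU : IsOpen U := isClosed_closure.isOpen_compl
    have hUne : U.Nonempty := by
      rw [nonempty_compl]
      exact fun h => hd (dense_iff_closure_eq.2 h)
    have hnd : ∀ y ∈ U, connectedComponent y ≠ {y} := fun y hy h => hy (subset_closure h)
    by_cases hUR : ∀ y ∈ U, (y : X) ∈ R
    · exact hR.exists_chart hM hmin hf hU hUne hUR hnd
    · push Not at hUR
      obtain ⟨y, hy, hyR⟩ := hUR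
      refine hL.exists_chart hM hmin hf
        (V := U ∩ Subtype.val ⁻¹' Rᶜ)
        (hU.inter (hR.1.isClosed.isOpen_compl.preimage continuous_subtype_val)) ⟨y, hy, hyR⟩
        (fun z hz => (hMP z.2).resolve_right hz.2) fun z hz => hnd z hz.1
  have hcc := hmin.circle_components hf hw
  -- finitely many components, by compactness
  obtain ⟨t, ht⟩ := isCompact_univ.elim_finite_subcover (fun y : M => connectedComponent y)
    (fun y => (hcc y).1) fun y _ => mem_iUnion.2 ⟨y, mem_connectedComponent⟩
  classical
  let s : Finset (Set M) := t.image connectedComponent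
  have hs : ∀ c ∈ s, ∃ y, c = connectedComponent y := fun c hc => by
    obtain ⟨y, -, rfl⟩ := Finset.mem_image.1 hc
    exact ⟨y, rfl⟩
  obtain ⟨x⟩ : Nonempty M := inferInstance
  have hx : ∀ y : M, ∃ c ∈ s, y ∈ c := fun y => by
    obtain ⟨z, hz, hy⟩ := mem_iUnion₂.1 (ht (mem_univ y))
    exact ⟨_, Finset.mem_image_of_mem _ hz, hy⟩
  refine ⟨s.card, fun i => Subtype.val '' (s.equivFin.symm i : Set M), ?_, ?_, ?_, ?_⟩
  · obtain ⟨c, hc, -⟩ := hx x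
    exact Finset.card_pos.2 ⟨c, hc⟩
  · intro i
    obtain ⟨y, hy⟩ := hs _ (s.equivFin.symm i).2
    simp only [hy]
    exact (hcc y).2.image IsEmbedding.subtypeVal
  · intro i j hij
    obtain ⟨y, hy⟩ := hs _ (s.equivFin.symm i).2
    obtain ⟨z, hz⟩ := hs _ (s.equivFin.symm j).2
    change Disjoint (Subtype.val '' _) (Subtype.val '' _)
    rw [disjoint_image_iff Subtype.val_injective, hy, hz]
    refine connectedComponent_disjoint fun h => hij ?_
    refine s.equivFin.symm.injective (Subtype.ext ?_)
    rw [hy, hz, h]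
  · ext y
    constructor
    · intro hy
      obtain ⟨c, hc, hyc⟩ := hx ⟨y, hy⟩
      refine mem_iUnion.2 ⟨s.equivFin ⟨c, hc⟩, ⟨y, hy⟩, ?_, rfl⟩
      simpa using hyc
    · intro hy
      obtain ⟨i, z, -, rfl⟩ := mem_iUnion.1 hy
      exact z.2

/-! ### The free interval and its complement -/

/-- A half-line is not homeomorphic to an open interval. -/
lemma isEmpty_homeomorph_Ioo_Ici : IsEmpty (Ioo (0:ℝ) 1 ≃ₜ Ici (0:ℝ)) := by
  refine ⟨fun e => ?_⟩
  set p := e.symm ⟨0, self_mem_Ici⟩ with hp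
  have h1 : IsPreconnected (Subtype.val '' ({p}ᶜ : Set (Ioo (0:ℝ) 1))) := by
    have : ({p}ᶜ : Set (Ioo (0:ℝ) 1)) = e.symm '' (Subtype.val ⁻¹' Ioi (0:ℝ)) := by
      ext x
      constructor
      · intro hx
        refine ⟨e x, show (0:ℝ) < e x from lt_of_le_of_ne (e x).2 fun h => hx ?_,
          e.symm_apply_apply x⟩
        rw [mem_singleton_iff, hp, Homeomorph.eq_symm_apply]
        exact Subtype.ext h.symm
      · rintro ⟨y, hy, rfl⟩ h
        have : y = ⟨0, self_mem_Ici⟩ := e.symm.injective h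
        rw [this] at hy
        exact lt_irrefl (0:ℝ) hy
    rw [this]
    refine IsPreconnected.image (IsPreconnected.image ?_ _ e.symm.continuous.continuousOn) _
      continuous_subtype_val.continuousOn
    rw [← IsInducing.subtypeVal.isPreconnected_image, Subtype.image_preimage_coe,
      inter_eq_right.2 Ioi_subset_Ici_self]
    exact isPreconnected_Ioi
  have ha : (p:ℝ) / 2 ∈ Ioo (0:ℝ) 1 := ⟨by linarith [p.2.1], by linarith [p.2.1, p.2.2]⟩
  have hb : ((p:ℝ) + 1) / 2 ∈ Ioo (0:ℝ) 1 := ⟨by linarith [p.2.1], by linarith [p.2.2]⟩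
  obtain ⟨q, hq, h⟩ := h1.Icc_subset
    (mem_image_of_mem _ (show (⟨_, ha⟩ : Ioo (0:ℝ) 1) ∈ ({p}ᶜ : Set _) from fun h => by
      have := congrArg Subtype.val (mem_singleton_iff.1 h)
      simp only at this
      linarith [p.2.1]))
    (mem_image_of_mem _ (show (⟨_, hb⟩ : Ioo (0:ℝ) 1) ∈ ({p}ᶜ : Set _) from fun h => by
      have := congrArg Subtype.val (mem_singleton_iff.1 h)
      simp only at this
      linarith [p.2.2]))
    (show (p:ℝ) ∈ _ from ⟨by simp only; linarith [p.2.1], by simp only; linarith [p.2.2]⟩)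
  exact hq (Subtype.ext h)

section Coordinate
variable {X : Type*} [TopologicalSpace X] {J : Set X} (h : J ≃ₜ Ioo (0:ℝ) 1)

open Classical in
/-- The coordinate of a point of a free interval, extended by the junk value `0`. -/
noncomputable def coord (x : X) : ℝ := if hx : x ∈ J then h ⟨x, hx⟩ else 0

variable {h}

lemma coord_of_mem {x : X} (hx : x ∈ J) : coord h x = h ⟨x, hx⟩ := dif_pos hx

lemma coord_mem {x : X} (hx : x ∈ J) : coord h x ∈ Ioo (0:ℝ) 1 := by
  rw [coord_of_mem hx]; exact (h _).2

lemma continuousOn_coord : ContinuousOn (coord h) J := by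
  rw [continuousOn_iff_continuous_domRestrict]
  have : J.domRestrict (coord h) = fun x => (h x : ℝ) := funext fun x => coord_of_mem x.2
  rw [this]
  exact continuous_subtype_val.comp h.continuous

lemma coord_symm (s : Ioo (0:ℝ) 1) : coord h (h.symm s : X) = s := by
  rw [coord_of_mem (h.symm s).2]
  exact congrArg Subtype.val (h.apply_symm_apply s)

lemma injOn_coord : InjOn (coord h) J := fun x hx y hy e => by
  rw [coord_of_mem hx, coord_of_mem hy] at e
  exact congrArg Subtype.val (h.injective (Subtype.ext e))

lemma isClosed_coord [T2Space X] {a b : ℝ} (ha : 0 < a) (hb : b < 1) :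
    IsClosed {x | x ∈ J ∧ coord h x ∈ Icc a b} := by
  have hI : ∀ s : Icc a b, (s:ℝ) ∈ Ioo (0:ℝ) 1 := fun s =>
    ⟨ha.trans_le s.2.1, s.2.2.trans_lt hb⟩
  have : {x | x ∈ J ∧ coord h x ∈ Icc a b} = range fun s : Icc a b => (h.symm ⟨s, hI s⟩ : X) := by
    ext x
    constructor
    · rintro ⟨hx, hs⟩
      refine ⟨⟨_, hs⟩, ?_⟩
      refine injOn_coord (h := h) (Subtype.coe_prop _) hx ?_
      rw [coord_symm]
    · rintro ⟨s, rfl⟩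
      refine ⟨Subtype.coe_prop _, ?_⟩
      rw [coord_symm]; exact s.2
  rw [this]
  exact (isCompact_range (continuous_subtype_val.comp
    (h.symm.continuous.comp (continuous_subtype_val.subtype_mk _)))).isClosed

end Coordinate

section NoPath
variable {X : Type*} [TopologicalSpace X] {L J R : Set X}

lemma ClassC.compl_eq (hC : ClassC L J R) : Jᶜ = L ∪ R := by
  ext x
  constructor
  · intro hx
    have : x ∈ L ∪ J ∪ R := hC.union_eq ▸ mem_univ x
    rcases this with (h | h) | h
    exacts [Or.inl h, absurd h hx, Or.inr h]
  · rintro (hx | hx) h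
    exacts [disjoint_left.1 hC.disjLJ hx h, disjoint_left.1 hC.disjRJ hx h]

/-- If the lower end of `J` converges to `p` and `K ⊆ J` stays away from the upper end, then `K`
accumulates at no point outside `J` other than `p`. -/
lemma subsingleton_of_end_converges [T2Space X] {A K : Set X} (h : J ≃ₜ Ioo (0:ℝ) 1) {p : X}
    (hp : ∀ O, IsOpen O → p ∈ O → ∃ ε > 0, ∀ z ∈ J, coord h z < ε → z ∈ O)
    (hKJ : K ⊆ J) (hA : Disjoint A J) (hAK : A ⊆ closure K) {c : ℝ} (hc : c < 1)
    (hKc : ∀ z ∈ K, coord h z ≤ c) : A.Subsingleton := by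
  suffices ∀ x ∈ A, x = p from fun x hx y hy => (this x hx).trans (this y hy).symm
  intro x hx
  by_contra hxp
  obtain ⟨U, V, hU, hV, hxU, hpV, hUV⟩ := t2_separation hxp
  obtain ⟨ε, hε, hεV⟩ := hp V hV hpV
  have hcl := isClosed_coord (h := h) hε hc
  obtain ⟨z, ⟨hzU, hz⟩, hzK⟩ := mem_closure_iff.1 (hAK hx) _ (hU.inter hcl.isOpen_compl)
    ⟨hxU, fun hx' => disjoint_left.1 hA hx hx'.1⟩
  refine hz ⟨hKJ hzK, ?_, hKc z hzK⟩
  by_contra! hlt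
  exact disjoint_left.1 hUV hzU (hεV z (hKJ hzK) hlt)

/-- Neither end of the free interval converges to a point. -/
lemma ClassC.no_end_converges [T2Space X] (hC : ClassC L J R) (hL : L.Nontrivial)
    (hR : R.Nontrivial) (h : J ≃ₜ Ioo (0:ℝ) 1) {p : X}
    (hp : ∀ O, IsOpen O → p ∈ O → ∃ ε > 0, ∀ z ∈ J, coord h z < ε → z ∈ O) : False := by
  obtain ⟨JL, JR, hJ, hJL, hJR, -, hLc, -, hRc⟩ := hC.rays
  have hJLJ : JL ⊆ J := hJ ▸ subset_union_left
  have hJRJ : JR ⊆ J := hJ ▸ subset_union_right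
  have key : ∀ K ⊆ J, IsRaySet K → (∃ c < 1, ∀ z ∈ K, coord h z ≤ c) ∨
      ∃ s ∈ Ioo (0:ℝ) 1, ∀ z ∈ K, s < coord h z := by
    intro K hK hray
    obtain ⟨e⟩ := id hray
    have hconn : IsPreconnected (coord h '' K) := by
      refine IsPreconnected.image ?_ _ (continuousOn_coord.mono hK)
      have : PreconnectedSpace (Ici (0:ℝ)) :=
        isPreconnected_iff_preconnectedSpace.1 isPreconnected_Ici
      have := isPreconnected_range (continuous_subtype_val.comp e.symm.continuous)
      rwa [range_comp, e.symm.surjective.range_eq, image_univ, Subtype.range_coe] at this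
    have hKne : ∃ s ∈ Ioo (0:ℝ) 1, s ∉ coord h '' K := by
      by_contra! hall
      have hKJ : K = J := hK.antisymm fun z hz => by
        obtain ⟨z', hz', hzz⟩ := hall _ (coord_mem (h := h) hz)
        rwa [← injOn_coord (hK hz') hz hzz]
      rw [hKJ] at hray
      obtain ⟨e⟩ := hray
      exact isEmpty_homeomorph_Ioo_Ici.false (h.symm.trans e)
    obtain ⟨s, hs, hsK⟩ := hKne
    by_cases hc : ∃ z ∈ K, s < coord h z
    · right
      obtain ⟨z, hz, hsz⟩ := hc
      refine ⟨s, hs, fun z' hz' => ?_⟩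
      by_contra! hlt
      exact hsK (hconn.Icc_subset (mem_image_of_mem _ hz') (mem_image_of_mem _ hz) ⟨hlt, hsz.le⟩)
    · left
      push Not at hc
      exact ⟨s, hs.2, hc⟩
  rcases key JL hJLJ hJL with ⟨c, hc, hc'⟩ | ⟨s, hs, hs'⟩
  · exact not_subsingleton_iff.2 hL (subsingleton_of_end_converges h hp hJLJ hC.disjLJ
      (subset_union_left.trans hLc) hc hc')
  rcases key JR hJRJ hJR with ⟨c, hc, hc'⟩ | ⟨r, hr, hr'⟩
  · exact not_subsingleton_iff.2 hR (subsingleton_of_end_converges h hp hJRJ hC.disjRJ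
      (subset_union_left.trans hRc) hc hc')
  have hm : min s r ∈ Ioo (0:ℝ) 1 := ⟨lt_min hs.1 hr.1, (min_le_left _ _).trans_lt hs.2⟩
  have hz : (h.symm ⟨_, hm⟩ : X) ∈ JL ∪ JR := by rw [hJ]; exact Subtype.coe_prop _
  rcases hz with hz | hz
  · have := hs' _ hz
    rw [coord_symm] at this
    exact absurd this (not_lt.2 (min_le_left _ _))
  · have := hr' _ hz
    rw [coord_symm] at this
    exact absurd this (not_lt.2 (min_le_right _ _))

/-- A path leaving `J` at time `b` through the lower half of `J` makes the lower end converge. -/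
lemma end_converges_of_path [T2Space X] (h : J ≃ₜ Ioo (0:ℝ) 1) {γ : ℝ → X} (hγ : Continuous γ)
    {a b : ℝ} (hab : a < b) (hJ : ∀ t ∈ Ico a b, γ t ∈ J) (hb : γ b ∉ J)
    (hlow : ∀ t ∈ Ico a b, coord h (γ t) < 1/2) :
    ∀ O, IsOpen O → γ b ∈ O → ∃ ε > 0, ∀ z ∈ J, coord h z < ε → z ∈ O := by
  have hnear : ∀ O, IsOpen O → γ b ∈ O → ∀ c < b, ∃ t ∈ Ico c b, ∀ s ∈ Ico t b, γ s ∈ O := by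
    intro O hO hbO c hc
    obtain ⟨δ, hδ, hball⟩ := Metric.isOpen_iff.1 (hO.preimage hγ) b hbO
    refine ⟨max c (b - δ/2), ⟨le_max_left _ _, max_lt hc (by linarith)⟩, fun s hs => hball ?_⟩
    rw [Real.ball_eq_Ioo]
    have := (le_max_right c (b - δ/2)).trans hs.1
    exact ⟨by linarith, by linarith [hs.2]⟩
  intro O hO hbO
  obtain ⟨t₁, ht₁, htO⟩ := hnear O hO hbO a hab
  refine ⟨coord h (γ t₁), (coord_mem (hJ t₁ ht₁)).1, fun z hz hlt => ?_⟩
  have hcl := isClosed_coord (h := h) (coord_mem (h := h) hz).1 (show (1/2:ℝ) < 1 by norm_num)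
  obtain ⟨t₂, ht₂, htz⟩ := hnear _ hcl.isOpen_compl (fun hx => hb hx.1) t₁ ht₁.2
  have h2a : t₂ ∈ Ico a b := ⟨ht₁.1.trans ht₂.1, ht₂.2⟩
  have hlt2 : coord h (γ t₂) < coord h z := by
    by_contra! hle
    exact htz t₂ ⟨le_rfl, ht₂.2⟩ ⟨hJ _ h2a, hle, (hlow _ h2a).le⟩
  have hsub : Icc t₁ t₂ ⊆ Ico a b := fun s hs => ⟨ht₁.1.trans hs.1, hs.2.trans_lt ht₂.2⟩
  obtain ⟨s, hs, hsz⟩ := intermediate_value_Icc' ht₂.1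
    ((continuousOn_coord (h := h)).comp hγ.continuousOn fun s hs => hJ s (hsub hs))
    (show coord h z ∈ _ from ⟨hlt2.le, hlt.le⟩)
  have : γ s = z := injOn_coord (hJ s (hsub hs)) hz hsz
  rw [← this]
  exact htO s ⟨hs.1, hs.2.trans_lt ht₂.2⟩

/-- No path joins the free interval to its complement. -/
theorem ClassC.no_path [T2Space X] (hC : ClassC L J R) (hL : L.Nontrivial)
    (hR : R.Nontrivial) {x y : X} (γ : Path x y) (hx : x ∈ J) (hy : y ∉ J) : False := by
  obtain ⟨h⟩ := hC.freeJ
  have hγ := γ.continuous_extend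
  set g : ℝ → X := fun t => γ.extend t with hg
  obtain ⟨b, ⟨hbI, hbJ⟩, hbm⟩ := (isCompact_Icc.inter_right
    (hC.openJ.isClosed_compl.preimage hγ)).exists_isLeast
    (⟨1, ⟨by norm_num, le_rfl⟩, by simpa [hg] using hy⟩ : (Icc (0:ℝ) 1 ∩ g ⁻¹' Jᶜ).Nonempty)
  have hb0 : 0 < b := lt_of_le_of_ne hbI.1 fun h0 => hbJ (by rw [← h0]; simpa [hg] using hx)
  have hJ : ∀ t ∈ Ico 0 b, g t ∈ J := fun t ht => by
    by_contra hn
    exact absurd (hbm ⟨⟨ht.1, ht.2.le.trans hbI.2⟩, hn⟩) (not_le.2 ht.2)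
  -- near the exit time the path avoids the midpoint of `J`
  let m : X := h.symm ⟨1/2, by norm_num⟩
  have hm : m ∈ J := Subtype.coe_prop _
  have hbm' : g b ≠ m := fun e => hbJ (show g b ∈ J from e ▸ hm)
  obtain ⟨δ, hδ, hball⟩ := Metric.isOpen_iff.1
    ((isClosed_singleton (x := m)).isOpen_compl.preimage hγ) b hbm'
  set a := max 0 (b - δ/2) with ha
  have hab : a < b := max_lt hb0 (by linarith)
  have hJa : ∀ t ∈ Ico a b, g t ∈ J := fun t ht => hJ t ⟨(le_max_left _ _).trans ht.1, ht.2⟩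
  have hne : ∀ t ∈ Ico a b, coord h (g t) ≠ 1/2 := by
    intro t ht e
    have h1 : t ∈ Metric.ball b δ := by
      rw [Real.ball_eq_Ioo]
      have := (le_max_right 0 (b - δ/2)).trans ht.1
      exact ⟨by linarith, by linarith [ht.2]⟩
    refine hball h1 (injOn_coord (h := h) (hJa t ht) hm ?_)
    rw [e, coord_symm]
  have hconn : IsPreconnected ((fun t => coord h (g t)) '' Ico a b) :=
    isPreconnected_Ico.image _ ((continuousOn_coord (h := h)).comp hγ.continuousOn hJa)
  have ha' : a ∈ Ico a b := ⟨le_rfl, hab⟩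
  rcases (hne a ha').lt_or_gt with hlt | hgt
  · refine hC.no_end_converges hL hR h
      (end_converges_of_path h hγ hab hJa hbJ fun t ht => ?_)
    by_contra! hle
    obtain ⟨s, hs, e⟩ := hconn.Icc_subset (mem_image_of_mem _ ha') (mem_image_of_mem _ ht)
      (show (1/2:ℝ) ∈ _ from ⟨hlt.le, hle⟩)
    exact hne s hs e
  · -- reverse the orientation of `J`
    have hσ : ∀ s : Ioo (0:ℝ) 1, 1 - (s:ℝ) ∈ Ioo (0:ℝ) 1 := fun s =>
      ⟨by linarith [s.2.2], by linarith [s.2.1]⟩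
    let σ : Ioo (0:ℝ) 1 ≃ₜ Ioo (0:ℝ) 1 :=
      { toFun := fun s => ⟨1 - s, hσ s⟩
        invFun := fun s => ⟨1 - s, hσ s⟩
        left_inv := fun s => Subtype.ext (by simp)
        right_inv := fun s => Subtype.ext (by simp)
        continuous_toFun := (continuous_const.sub continuous_subtype_val).subtype_mk _
        continuous_invFun := (continuous_const.sub continuous_subtype_val).subtype_mk _ }
    have hcoord : ∀ z ∈ J, coord (h.trans σ) z = 1 - coord h z := fun z hz => by
      rw [coord_of_mem hz, coord_of_mem hz]; rfl
    refine hC.no_end_converges hL hR (h.trans σ)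
      (end_converges_of_path (h.trans σ) hγ hab hJa hbJ fun t ht => ?_)
    rw [hcoord _ (hJa t ht)]
    by_contra! hle
    obtain ⟨s, hs, e⟩ := hconn.Icc_subset (mem_image_of_mem _ ht) (mem_image_of_mem _ ha')
      (show (1/2:ℝ) ∈ _ from ⟨by linarith, hgt.le⟩)
    exact hne s hs e

end NoPath

/-- A minimal set lies in the free interval or in its complement. -/
theorem ClassC.minimal_dichotomy {X : Type*} [TopologicalSpace X] [T2Space X] {L J R : Set X}
    (hC : ClassC L J R) (hL : L.Nontrivial) (hR : R.Nontrivial) (hP : IsPathConnected (L ∪ R))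
    {M : Set X} (hM : IsCompact M) {F : X → X} (hF : Continuous F) (hmin : MinimalSystemOn F M) :
    M ⊆ L ∪ R ∨ M ⊆ J := by
  have hPJ := hC.compl_eq
  have hJp : IsPathConnected J := by
    obtain ⟨h⟩ := hC.freeJ
    have h1 : IsPathConnected (Ioo (0:ℝ) 1) :=
      (convex_Ioo 0 1).isPathConnected ⟨1/2, by norm_num, by norm_num⟩
    rw [isPathConnected_iff_pathConnectedSpace] at h1 ⊢
    exact h.symm.surjective.pathConnectedSpace h.symm.continuous
  have side : ∀ Q : Set X, IsPathConnected Q → F '' Q ⊆ J ∨ F '' Q ⊆ Jᶜ := by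
    intro Q hQ
    by_contra! hcon
    obtain ⟨h1, h2⟩ := hcon
    obtain ⟨y, hyQ, hy⟩ := not_subset.1 h1
    obtain ⟨x, hxQ, hx⟩ := not_subset.1 h2
    obtain ⟨γ, -⟩ := (hQ.image hF).joinedIn x hxQ y hyQ
    exact hC.no_path hL hR γ (not_not.1 hx) hy
  have hPcl : IsClosed (Jᶜ) := hC.openJ.isClosed_compl
  by_cases hMP : (M ∩ Jᶜ).Nonempty
  · left
    rw [← hPJ] at hP ⊢
    rcases side _ hP with h1 | h1
    · exfalso
      obtain ⟨x, hxM, hxJ⟩ := hMP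
      rcases side _ hJp with h2 | h2
      · have : x ∈ F '' M := hmin.2.1.symm ▸ hxM
        obtain ⟨y, -, rfl⟩ := this
        by_cases hy : y ∈ J
        · exact hxJ (h2 (mem_image_of_mem F hy))
        · exact hxJ (h1 (mem_image_of_mem F hy))
      · have h3 : closure J ⊆ F ⁻¹' Jᶜ :=
          closure_minimal (image_subset_iff.1 h2) (hPcl.preimage hF)
        exact h3 (hC.denseJ x) (h1 (mem_image_of_mem F hxJ))
    · have := hmin.2.2 (M ∩ Jᶜ) inter_subset_left hMP (hM.isClosed.inter hPcl) (by
        rintro _ ⟨y, ⟨hyM, hyP⟩, rfl⟩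
        exact ⟨hmin.2.1 ▸ mem_image_of_mem F hyM, h1 (mem_image_of_mem F hyP)⟩)
      rw [← this]
      exact inter_subset_right
  · right
    intro x hx
    by_contra hxJ
    exact hMP ⟨x, hx, hxJ⟩

/-- A circle does not embed into the line: a continuous function on it identifies some pair of
antipodal points. -/
lemma not_injective_circle {g : Circle → ℝ} (hg : Continuous g) : ¬ Function.Injective g := by
  intro hi
  have h1 : Continuous fun z : Circle => g z - g (-z) := hg.sub (hg.comp continuous_neg)
  have hc : IsPreconnected (univ : Set Circle) := by
    have : PathConnectedSpace Circle :=
      Circle.exp_surjective.pathConnectedSpace Circle.exp.continuous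
    exact isPreconnected_univ
  obtain ⟨z, hz⟩ : ∃ z : Circle, g z - g (-z) = 0 := by
    rcases le_total (g 1 - g (-1)) 0 with h | h
    · obtain ⟨z, -, hz⟩ := hc.intermediate_value (mem_univ (1:Circle)) (mem_univ (-1))
        h1.continuousOn (show (0:ℝ) ∈ _ from ⟨h, by simp only [neg_neg]; linarith⟩)
      exact ⟨z, hz⟩
    · obtain ⟨z, -, hz⟩ := hc.intermediate_value (mem_univ (-1:Circle)) (mem_univ 1)
        h1.continuousOn (show (0:ℝ) ∈ _ from ⟨by simp only [neg_neg]; linarith, h⟩)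
      exact ⟨z, hz⟩
  have h2 := congrArg Subtype.val (hi (sub_eq_zero.1 hz))
  have h3 : (z : ℂ) = -(z : ℂ) := h2
  exact Circle.coe_ne_zero z (self_eq_neg.1 h3)

/-- An infinite minimal set in a free interval is a Cantor set. -/
theorem isCantorSet_of_minimal {X : Type*} [MetricSpace X] {J M : Set X}
    (hJ : Nonempty (J ≃ₜ Ioo (0:ℝ) 1)) (hM : IsCompact M) (hMJ : M ⊆ J) [Infinite M]
    {f : M → M} (hmin : IsMinimalMap f) (hf : Continuous f) : IsCantorSet M := by
  obtain ⟨h⟩ := hJ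
  have : CompactSpace M := isCompact_iff_compactSpace.1 hM
  obtain ⟨x⟩ : Nonempty M := inferInstance
  refine ⟨⟨x, x.2⟩, hM, ?_, hmin.noIsolatedPoints hf⟩
  intro S hSM hS
  by_contra hnt
  rw [not_subsingleton_iff] at hnt
  have hconn : IsPreconnected (coord h '' S) :=
    hS.image _ (continuousOn_coord.mono (hSM.trans hMJ))
  obtain ⟨y, hy, z, hz, hyz⟩ : ∃ y ∈ S, ∃ z ∈ S, coord h y < coord h z := by
    obtain ⟨y, hy, z, hz, hne⟩ := hnt
    rcases (injOn_coord (h := h).ne (hMJ (hSM hy)) (hMJ (hSM hz)) hne).lt_or_gt with h1 | h1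
    exacts [⟨y, hy, z, hz, h1⟩, ⟨z, hz, y, hy, h1⟩]
  set u := coord h y
  set v := coord h z
  have hsub : ∀ s ∈ Icc u v, ∃ hs : s ∈ Ioo (0:ℝ) 1, (h.symm ⟨s, hs⟩ : X) ∈ M := by
    intro s hs
    obtain ⟨x, hx, rfl⟩ := hconn.Icc_subset (mem_image_of_mem _ hy) (mem_image_of_mem _ hz) hs
    have hxJ := hMJ (hSM hx)
    refine ⟨coord_mem hxJ, ?_⟩
    have : (h.symm ⟨_, coord_mem hxJ⟩ : X) = x :=
      injOn_coord (h := h) (Subtype.coe_prop _) hxJ (coord_symm _)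
    rw [this]
    exact hSM hx
  have hI : ∀ t : unitInterval, u + t * (v - u) ∈ Icc u v := fun t =>
    ⟨by nlinarith [t.2.1], by nlinarith [t.2.2]⟩
  let c : unitInterval → M := fun t =>
    ⟨h.symm ⟨u + t * (v - u), (hsub _ (hI t)).choose⟩, (hsub _ (hI t)).choose_spec⟩
  have hcc : ∀ t, coord h (c t) = u + t * (v - u) := fun t => coord_symm _
  have hc : Continuous c := by
    refine Continuous.subtype_mk (continuous_subtype_val.comp (h.symm.continuous.comp ?_)) _
    exact Continuous.subtype_mk (by fun_prop) _
  have hci : Function.Injective c := fun s t e => by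
    have h1 := hcc s
    rw [e, hcc] at h1
    have h2 : (s:ℝ) * (v - u) = t * (v - u) := by linarith
    exact Subtype.ext (mul_right_cancel₀ (by linarith) h2)
  have hκ : Continuous fun m : M => coord h m :=
    continuousOn_coord.comp_continuous continuous_subtype_val fun m => hMJ m.2
  have hw := exists_chart_of_subset_arc hc hci
    (O := (fun m : M => coord h m) ⁻¹' Ioo u v) (isOpen_Ioo.preimage hκ)
    ⟨c ⟨1/2, by norm_num, by norm_num⟩, by
      rw [mem_preimage, hcc]; constructor <;> simp only <;> linarith⟩ (fun m hm => by
      have hm1 : u < coord h m := hm.1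
      have hm2 : coord h m < v := hm.2
      have hvu : 0 < v - u := by linarith
      refine ⟨⟨(coord h m - u) / (v - u), by
        apply div_nonneg <;> linarith, by rw [div_le_one hvu]; linarith⟩, ?_⟩
      refine Subtype.ext (injOn_coord (h := h) (hMJ (Subtype.coe_prop _)) (hMJ m.2) ?_)
      rw [hcc]
      simp only
      field_simp
      ring)
  obtain ⟨g, hg, hgi, -⟩ := isCircleSet_iff.1 (hmin.circle_components hf hw x).2
  exact not_injective_circle (hκ.comp hg) fun a b e =>
    hgi (Subtype.ext (injOn_coord (h := h) (hMJ (g a).2) (hMJ (g b).2) e))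

/-! ### The characterization -/

/-- Minimality of `F` on `M` as a property of the restricted self-map of the subtype. -/
lemma MinimalSystemOn.exists_isMinimalMap {X : Type*} [TopologicalSpace X] {F : X → X} {M : Set X}
    (hM : IsClosed M) (hF : Continuous F) (h : MinimalSystemOn F M) :
    ∃ f : M → M, Continuous f ∧ IsMinimalMap f := by
  have hmaps : ∀ x : M, F x ∈ M := fun x => h.2.1.subset (mem_image_of_mem F x.2)
  refine ⟨fun x => ⟨F x, hmaps x⟩, (hF.comp continuous_subtype_val).subtype_mk _,
    fun N hN hne hNf => ?_⟩
  have h1 := h.2.2 (Subtype.val '' N) (Subtype.coe_image_subset _ _) (hne.image _)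
    (hM.isClosedEmbedding_subtypeVal.isClosedMap _ hN) (by
      rintro _ ⟨_, ⟨y, hy, rfl⟩, rfl⟩
      exact ⟨_, hNf hy, rfl⟩)
  refine eq_univ_of_forall fun x => ?_
  have h2 : (x : X) ∈ Subtype.val '' N := h1.symm.subset x.2
  obtain ⟨y, hy, hyx⟩ := h2
  rwa [← Subtype.ext hyx]

lemma IsLocalDendrite.isPathConnected {X : Type*} [MetricSpace X] {L : Set X}
    (hL : IsLocalDendrite L) : IsPathConnected L := by
  have : CompactSpace L := isCompact_iff_compactSpace.1 hL.1
  have : LocallyConnectedSpace L := hL.2.2.1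
  have : LocallyPathConnectedSpace L := locallyPathConnectedSpace_of_peano
  have : ConnectedSpace L := isConnected_iff_connectedSpace.1 hL.2.1
  rw [isPathConnected_iff_pathConnectedSpace]
  exact pathConnectedSpace_iff_connectedSpace.2 this

/-- The two alternatives of the characterization, without exclusivity. -/
theorem ClassC.mem_MSpace_iff {X : Type*} [MetricSpace X] [CompactSpace X] {L J R : Set X}
    (hC : ClassC L J R) (hL : L.Nontrivial) (hR : R.Nontrivial) (hLR : (L ∩ R).Nonempty)
    (hLd : IsLocalDendrite L) (hRd : IsLocalDendrite R) (M : Set X) : M ∈ MSpace X ↔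
      (M ⊆ L ∪ R ∧ ((M.Finite ∧ M.Nonempty) ∨ IsCantoroid M ∨ FinUnionDisjCircles M)) ∨
      (M ⊆ J ∧ ((M.Finite ∧ M.Nonempty) ∨ IsCantorSet M)) := by
  have hP : IsPathConnected (L ∪ R) := hLd.isPathConnected.union hRd.isPathConnected hLR
  have hU : ULPC (L ∪ R) := (ulpc_of_locallyConnected hC.compactL hC.locConnL).union hC.compactL
    hC.compactR (ulpc_of_locallyConnected hC.compactR hC.locConnR)
  constructor
  · rintro ⟨hM, F, hF, hmin⟩
    obtain ⟨f, hf, hfm⟩ := hmin.exists_isMinimalMap hM.isClosed hF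
    rcases M.finite_or_infinite with hfin | hinf
    · exact (hC.minimal_dichotomy hL hR hP hM hF hmin).imp
        (fun h => ⟨h, Or.inl ⟨hfin, hmin.1⟩⟩) fun h => ⟨h, Or.inl ⟨hfin, hmin.1⟩⟩
    · have : Infinite M := hinf.to_subtype
      exact (hC.minimal_dichotomy hL hR hP hM hF hmin).imp
        (fun h => ⟨h, Or.inr (cantoroid_or_circles hLd hRd hM h hfm hf)⟩)
        fun h => ⟨h, Or.inr (isCantorSet_of_minimal hC.freeJ hM h hfm hf)⟩
  · have hcantoroid : IsCantoroid M → ∃ f : M → M, Continuous f ∧ IsMinimalMap f ∧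
        ∃ e : M → ℝ, Continuous e ∧ ∀ x y, e x = e y → f x = f y := fun h => by
      have : CompactSpace M := isCompact_iff_compactSpace.1 h.2.1
      have : Nonempty M := h.1.to_subtype
      exact exists_minimalMap_of_clopenInOpen h.2.2.1 h.clopenInOpen
    rintro (⟨hMP, (⟨hfin, hne⟩ | hM | hM)⟩ | ⟨hMJ, (⟨hfin, hne⟩ | hM)⟩)
    · have : Finite M := hfin
      have : Nonempty M := hne.to_subtype
      obtain ⟨f, hf⟩ := exists_minimalMap_of_finite (Y := M)
      obtain ⟨e, he⟩ := exists_injective_nat M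
      obtain ⟨F, hF, hFf⟩ := exists_extension_of_factor hP hU hfin.isCompact hne hMP
        (f := f) continuous_of_discreteTopology (e := fun x => (e x : ℝ))
        continuous_of_discreteTopology fun x y h => congrArg f (he (Nat.cast_injective h))
      exact mem_MSpace_of_extension hfin.isCompact hne hF hFf hf
    · obtain ⟨f, hf, hmin, e, he, hef⟩ := hcantoroid hM
      obtain ⟨F, hF, hFf⟩ := exists_extension_of_factor hP hU hM.2.1 hM.1 hMP hf he hef
      exact mem_MSpace_of_extension hM.2.1 hM.1 hF hFf hmin
    · exact FinUnionDisjCircles.mem_MSpace hP hU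
        (fun _ _ hA hφ => hC.exists_circle_extension hLd hRd hA hφ) hMP hM
    · have : Finite M := hfin
      have : Nonempty M := hne.to_subtype
      obtain ⟨f, hf⟩ := exists_minimalMap_of_finite (Y := M)
      obtain ⟨F, hF, hFf⟩ := exists_extension_of_subset_freeInterval hC.freeJ hfin.isCompact hne
        hMJ (f := f) continuous_of_discreteTopology
      exact mem_MSpace_of_extension hfin.isCompact hne hF hFf hf
    · obtain ⟨f, hf, hmin, -⟩ := hcantoroid hM.isCantoroid
      obtain ⟨F, hF, hFf⟩ := exists_extension_of_subset_freeInterval hC.freeJ hM.2.1 hM.1 hMJ hf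
      exact mem_MSpace_of_extension hM.2.1 hM.1 hF hFf hmin

/-- If `X = L ∪ J ∪ R ∈ 𝒞`, `L, R` nondegenerate local dendrites with
`L ∩ R ≠ ∅`, then `M ∈ 𝓜(X)` iff exactly one of the following holds:
(1) `M ⊆ L ∪ R` and `M` is a nonempty finite set, a cantoroid, or a union of finitely many
pairwise disjoint circles; (2) `M ⊆ J` and `M` is a nonempty finite set or a Cantor set. -/
theorem stmt8 {X : Type*} [TopologicalSpace X] [CompactSpace X] [ConnectedSpace X]
    [TopologicalSpace.MetrizableSpace X] {L J R : Set X} (hC : ClassC L J R)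
    (hL : L.Nontrivial) (hR : R.Nontrivial) (hLR : (L ∩ R).Nonempty)
    (hLd : IsLocalDendrite L) (hRd : IsLocalDendrite R) :
    ∀ M : Set X, M ∈ MSpace X ↔
      ((M ⊆ L ∪ R ∧ ((M.Finite ∧ M.Nonempty) ∨ IsCantoroid M ∨ FinUnionDisjCircles M)) ∧
        ¬ (M ⊆ J ∧ ((M.Finite ∧ M.Nonempty) ∨ IsCantorSet M))) ∨
      ((M ⊆ J ∧ ((M.Finite ∧ M.Nonempty) ∨ IsCantorSet M)) ∧
        ¬ (M ⊆ L ∪ R ∧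
            ((M.Finite ∧ M.Nonempty) ∨ IsCantoroid M ∨ FinUnionDisjCircles M))) := by
  intro M
  let _ : MetricSpace X := TopologicalSpace.metrizableSpaceMetric X
  rw [hC.mem_MSpace_iff hL hR hLR hLd hRd M]
  have hexcl : ¬ ((M ⊆ L ∪ R ∧
      ((M.Finite ∧ M.Nonempty) ∨ IsCantoroid M ∨ FinUnionDisjCircles M)) ∧
      (M ⊆ J ∧ ((M.Finite ∧ M.Nonempty) ∨ IsCantorSet M))) := by
    rintro ⟨⟨hP, -⟩, hJ, h⟩
    obtain ⟨x, hx⟩ : M.Nonempty := h.elim (fun h => h.2) fun h => h.1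
    have h1 : x ∈ Jᶜ := hC.compl_eq ▸ hP hx
    exact h1 (hJ hx)
  tauto
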